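/- arXiv:2212.06670 — 5 statements merged into one kernel-verified Lean document; each statement's English description precedes it below -/
import Mathlib

section
/- Let W be the Weyl group of type D_n (n ≥ 4) with simple reflections s_1, …, s_n labeled as in Bourbaki. Then w_{1,0}·w_0 = (s_1 s_2 ⋯ s_{n−2})·(s_1 s_2 ⋯ s_{n−2} s_{n−1} s_n)⁻¹, and the set of elements of minimal length in the conjugacy class of w_{1,0}·w_0 is exactly {s_{n−1}·s_n}; in particular, the minimal length in this conjugacy class is 2. -/
noncomputable section

/-- The Coxeter matrix of type `Dₙ` with Bourbaki labels: the simple reflections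
`s_1, …, s_n` correspond to the indices `0, …, n-1`; there are bonds of order `3`
between consecutive indices `0,…,n-2` (the chain `s_1 — s_2 — ⋯ — s_{n-1}`) and between
the indices `n-3` and `n-1` (the bond `s_{n-2} — s_n`). -/
def CoxeterMatrixD (n : ℕ) : CoxeterMatrix (Fin n) where
  M := Matrix.of fun i j : Fin n ↦
    if i = j then 1
    else if (((i : ℕ) + 1 = j ∨ (j : ℕ) + 1 = i) ∧ (i : ℕ) + 1 ≠ n ∧ (j : ℕ) + 1 ≠ n)
        ∨ ((i : ℕ) + 3 = n ∧ (j : ℕ) + 1 = n) ∨ ((j : ℕ) + 3 = n ∧ (i : ℕ) + 1 = n)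
      then 3 else 2
  isSymm := by
    unfold Matrix.IsSymm
    ext i j
    simp only [Matrix.transpose_apply, Matrix.of_apply]
    rcases eq_or_ne i j with h | h
    · simp [h]
    · rw [if_neg h.symm, if_neg h]
      congr 1
      apply propext
      tauto
  diagonal := by intro i; simp
  off_diagonal := by
    intro i j h
    simp only [Matrix.of_apply, if_neg h]
    split <;> omega

/-- The Weyl group of type `Dₙ`, given by its Coxeter presentation. -/
abbrev WD (n : ℕ) := (CoxeterMatrixD n).Group

/-- The canonical Coxeter system of type `Dₙ`. -/
def csD (n : ℕ) : CoxeterSystem (CoxeterMatrixD n) (WD n) :=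
  (CoxeterMatrixD n).toCoxeterSystem

/-- `segD n a b` is the product `s_a s_{a+1} ⋯ s_b` (Bourbaki labels). -/
def segD (n a b : ℕ) : WD n :=
  (((List.finRange n).filter fun k : Fin n => a ≤ (k : ℕ) + 1 ∧ (k : ℕ) + 1 ≤ b).map
    (csD n).simple).prod

/-- The standard parabolic subgroup of the type-`Dₙ` Weyl group generated by all simple
reflections except the one with (zero-based) index `i`. -/
def paraD (n : ℕ) (i : Fin n) : Subgroup (WD n) :=
  Subgroup.closure ((csD n).simple '' {j : Fin n | j ≠ i})

section Words

variable {G : Type*} [Group G] {a b c u : G}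

/-- In type `D₃` with central node `a`, the element `a b c a` exchanges `b` and `c`. -/
theorem conj_fork (hbc : b * c = c * b)
    (hab : a * b * a = b * a * b) (hac : a * c * a = c * a * c) :
    a * (b * c) * a * b * (a * (b * c) * a)⁻¹ = c := by
  rw [mul_inv_eq_iff_eq_mul]
  calc a * (b * c) * a * b = a * c * (b * a * b) := by rw [hbc]; simp only [mul_assoc]
    _ = a * c * a * b * a := by rw [← hab]; simp only [mul_assoc]
    _ = c * (a * (b * c) * a) := by rw [hac, hbc]; simp only [mul_assoc]

/-- If `u` commutes with `a`, then `a b u b a` commutes with `b`. -/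
theorem conj_palindrome (hau : a * u = u * a)
    (hab : a * b * a = b * a * b) :
    a * (b * u * b) * a * b * (a * (b * u * b) * a)⁻¹ = b := by
  rw [mul_inv_eq_iff_eq_mul]
  calc a * (b * u * b) * a * b = a * b * u * (b * a * b) := by simp only [mul_assoc]
    _ = a * b * (u * a) * b * a := by rw [← hab]; simp only [mul_assoc]
    _ = a * b * a * u * b * a := by rw [← hau]; simp only [mul_assoc]
    _ = b * (a * (b * u * b) * a) := by rw [hab]; simp only [mul_assoc]

end Words

/-- The Coxeter relations of type `D` for the chain `t N — ⋯ — t 1 — t 0` whose node `t 1`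
carries the additional branch `t'`. -/
structure IsDChain {G : Type*} [Group G] (N : ℕ) (t : ℕ → G) (t' : G) : Prop where
  sq : ∀ i, t i * t i = 1
  sq' : t' * t' = 1
  fork : t 0 * t' = t' * t 0
  braid : ∀ i, i + 1 ≤ N → t (i + 1) * t i * t (i + 1) = t i * t (i + 1) * t i
  braid' : 1 ≤ N → t 1 * t' * t 1 = t' * t 1 * t'
  comm : ∀ i j, i + 2 ≤ j → j ≤ N → t j * t i = t i * t j
  comm' : ∀ j, 2 ≤ j → j ≤ N → t j * t' = t' * t j

namespace IsDChain

variable {G : Type*} [Group G] {N : ℕ} {t : ℕ → G} {t' : G}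

/-- The subgroup generated by `t', t 0, …, t d`. -/
def par (t : ℕ → G) (t' : G) (d : ℕ) : Subgroup G :=
  Subgroup.closure (insert t' (t '' Set.Iic d))

/-- The palindrome `t d ⋯ t 1 (t 0 t') t 1 ⋯ t d`. -/
def pal (t : ℕ → G) (t' : G) : ℕ → G
  | 0 => t 0 * t'
  | d + 1 => t (d + 1) * pal t t' d * t (d + 1)

/-- The product `pal 0 * pal 1 * ⋯ * pal d`, the longest element of `par d`. -/
def top (t : ℕ → G) (t' : G) : ℕ → G
  | 0 => pal t t' 0
  | d + 1 => top t t' d * pal t t' (d + 1)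

theorem branch_mem_par (d : ℕ) : t' ∈ par t t' d :=
  Subgroup.subset_closure (Set.mem_insert _ _)

theorem mem_par {i d : ℕ} (h : i ≤ d) : t i ∈ par t t' d :=
  Subgroup.subset_closure (Set.mem_insert_of_mem _ ⟨i, h, rfl⟩)

theorem par_le_iff {d : ℕ} {K : Subgroup G} :
    par t t' d ≤ K ↔ t' ∈ K ∧ ∀ i ≤ d, t i ∈ K := by
  rw [par, Subgroup.closure_le, Set.insert_subset_iff, Set.image_subset_iff]
  rfl

theorem par_mono {d e : ℕ} (h : d ≤ e) : par t t' d ≤ par t t' e :=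
  par_le_iff.2 ⟨branch_mem_par e, fun _ hi => mem_par (hi.trans h)⟩

theorem pal_mem_par (d : ℕ) : pal t t' d ∈ par t t' d := by
  induction d with
  | zero => exact mul_mem (mem_par le_rfl) (branch_mem_par 0)
  | succ d ih =>
    exact mul_mem (mul_mem (mem_par le_rfl) (par_mono d.le_succ ih)) (mem_par le_rfl)

theorem top_mem_par (d : ℕ) : top t t' d ∈ par t t' d := by
  induction d with
  | zero => exact pal_mem_par 0
  | succ d ih => exact mul_mem (par_mono d.le_succ ih) (pal_mem_par _)

/-- Membership in the union of the double cosets of `par d` represented by `1`, `t (d + 1)` and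
`pal (d + 1)`, the last of which is a single right coset. -/
def InCosets (t : ℕ → G) (t' : G) (d : ℕ) (w : G) : Prop :=
  w ∈ par t t' d ∨ (∃ p ∈ par t t' d, ∃ q ∈ par t t' d, w = p * t (d + 1) * q) ∨
    ∃ p ∈ par t t' d, w = p * pal t t' (d + 1)

theorem InCosets.mul_left {d : ℕ} {w p : G} (hw : InCosets t t' d w) (hp : p ∈ par t t' d) :
    InCosets t t' d (p * w) := by
  rcases hw with hw | ⟨q, hq, r, hr, rfl⟩ | ⟨q, hq, rfl⟩
  · exact Or.inl (mul_mem hp hw)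
  · exact Or.inr (Or.inl ⟨p * q, mul_mem hp hq, r, hr, by simp only [mul_assoc]⟩)
  · exact Or.inr (Or.inr ⟨p * q, mul_mem hp hq, (mul_assoc _ _ _).symm⟩)

variable (h : IsDChain N t t')
include h

theorem inv_eq (i : ℕ) : (t i)⁻¹ = t i := inv_eq_of_mul_eq_one_left (h.sq i)

theorem commute_of_mem_par {i d : ℕ} (hd : d + 2 ≤ i) (hi : i ≤ N) {p : G}
    (hp : p ∈ par t t' d) : t i * p = p * t i := by
  have hle : par t t' d ≤ Subgroup.centralizer {t i} := by
    simp only [par_le_iff, Subgroup.mem_centralizer_singleton_iff]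
    exact ⟨(h.comm' i (by omega) hi).symm, fun j hj => (h.comm j i (by omega) hi).symm⟩
  exact (Subgroup.mem_centralizer_singleton_iff.1 (hle hp)).symm

/-- `pal (d + 1)` normalizes `par d`. -/
theorem conj_pal_mem_par {d : ℕ} (hd : d + 1 ≤ N) {p : G} (hp : p ∈ par t t' d) :
    pal t t' (d + 1) * p * (pal t t' (d + 1))⁻¹ ∈ par t t' d := by
  induction d generalizing p with
  | zero =>
    have hle : par t t' 0 ≤ (par t t' 0).comap (MulAut.conj (pal t t' 1)).toMonoidHom := by
      refine par_le_iff.2 ⟨?_, fun i hi => ?_⟩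
      · have := conj_fork h.fork.symm (h.braid' hd) (h.braid 0 hd)
        rw [← h.fork] at this
        exact (congrArg (· ∈ par t t' 0) this).mpr (mem_par le_rfl)
      · obtain rfl : i = 0 := by omega
        have := conj_fork h.fork (h.braid 0 hd) (h.braid' hd)
        exact (congrArg (· ∈ par t t' 0) this).mpr (branch_mem_par 0)
    exact hle hp
  | succ d ih =>
    have key : ∀ q ∈ par t t' d,
        pal t t' (d + 2) * q * (pal t t' (d + 2))⁻¹ ∈ par t t' (d + 1) := by
      intro q hq
      have h1 := h.commute_of_mem_par le_rfl hd hq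
      have h2 := ih (by omega) hq
      have h3 := h.commute_of_mem_par le_rfl hd h2
      have h4 : pal t t' (d + 2) * q * (pal t t' (d + 2))⁻¹ =
          pal t t' (d + 1) * q * (pal t t' (d + 1))⁻¹ := by
        calc _ = t (d + 2) * pal t t' (d + 1) * (t (d + 2) * q) * (t (d + 2))⁻¹ *
              (pal t t' (d + 1))⁻¹ * (t (d + 2))⁻¹ := by
              simp only [pal, mul_inv_rev, mul_assoc]
          _ = t (d + 2) * (pal t t' (d + 1) * q * (pal t t' (d + 1))⁻¹) * (t (d + 2))⁻¹ := by
              rw [h1]; group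
          _ = _ := by rw [h3]; group
      rw [h4]
      exact par_mono d.le_succ h2
    have hle : par t t' (d + 1) ≤
        (par t t' (d + 1)).comap (MulAut.conj (pal t t' (d + 2))).toMonoidHom := by
      refine par_le_iff.2 ⟨key _ (branch_mem_par d), fun i hi => ?_⟩
      rcases Nat.lt_or_ge i (d + 1) with hlt | hge
      · exact key _ (mem_par (by omega))
      · obtain rfl : i = d + 1 := by omega
        have := conj_palindrome (h.commute_of_mem_par le_rfl hd (pal_mem_par d))
          (h.braid (d + 1) hd)
        exact (congrArg (· ∈ par t t' (d + 1)) this).mpr (mem_par le_rfl)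
    exact hle hp

theorem mem_par_zero {p : G} (hp : p ∈ par t t' 0) :
    p = 1 ∨ p = t 0 ∨ p = t' ∨ p = t 0 * t' := by
  have hinv := h.inv_eq 0
  have hinv' : t'⁻¹ = t' := inv_eq_of_mul_eq_one_left h.sq'
  have step : ∀ x y : G, (x = 1 ∨ x = t 0 ∨ x = t' ∨ x = t 0 * t') →
      (y = t' ∨ y = t 0) → (x * y = 1 ∨ x * y = t 0 ∨ x * y = t' ∨ x * y = t 0 * t') := by
    rintro x y (rfl | rfl | rfl | rfl) (rfl | rfl)
    · simp
    · simp
    · simp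
    · simp [h.sq]
    · simp [h.sq']
    · simp [h.fork]
    · simp [mul_assoc, h.sq']
    · rw [h.fork, mul_assoc, h.sq]; simp
  have hgen : ∀ y ∈ insert t' (t '' Set.Iic 0), y = t' ∨ y = t 0 := by
    rintro y (rfl | ⟨i, hi, rfl⟩)
    · exact Or.inl rfl
    · rw [Nat.le_zero.1 hi]; exact Or.inr rfl
  induction hp using Subgroup.closure_induction_right with
  | one => exact Or.inl rfl
  | mul_right x _ y hy ih => exact step x y ih (hgen y hy)
  | mul_inv_cancel x _ y hy ih =>
    refine step x y⁻¹ ih ?_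
    rcases hgen y hy with rfl | rfl
    · exact Or.inl hinv'
    · exact Or.inr hinv

/-- If conjugates of `par d` by `t (d + 1)` stay in the union of the double cosets of `par d`
represented by `1`, `t (d + 1)` and `pal (d + 1)`, then this union is all of `par (d + 1)`. -/
theorem inCosets_of_conj {d : ℕ} (hd : d + 1 ≤ N)
    (hconj : ∀ q ∈ par t t' d, InCosets t t' d (t (d + 1) * q * t (d + 1))) {w : G}
    (hw : w ∈ par t t' (d + 1)) : InCosets t t' d w := by
  have step : ∀ x y : G, InCosets t t' d x → (y ∈ par t t' d ∨ y = t (d + 1)) →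
      InCosets t t' d (x * y) := by
    rintro x y (hx | ⟨p, hp, q, hq, rfl⟩ | ⟨p, hp, rfl⟩) (hy | rfl)
    · exact Or.inl (mul_mem hx hy)
    · exact Or.inr (Or.inl ⟨x, hx, 1, one_mem _, by simp⟩)
    · exact Or.inr (Or.inl ⟨p, hp, q * y, mul_mem hq hy, by simp only [mul_assoc]⟩)
    · have := (hconj q hq).mul_left hp
      simpa only [mul_assoc] using this
    · exact Or.inr (Or.inr ⟨_, mul_mem hp (h.conj_pal_mem_par hd hy), by group⟩)
    · refine Or.inr (Or.inl ⟨p, hp, pal t t' d, pal_mem_par d, ?_⟩)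
      simp only [pal, mul_assoc, h.sq, mul_one]
  have hgen : ∀ y ∈ insert t' (t '' Set.Iic (d + 1)), y ∈ par t t' d ∨ y = t (d + 1) := by
    rintro y (rfl | ⟨i, hi, rfl⟩)
    · exact Or.inl (branch_mem_par d)
    · rcases Nat.lt_or_eq_of_le hi with hlt | rfl
      · exact Or.inl (mem_par (by omega))
      · exact Or.inr rfl
  induction hw using Subgroup.closure_induction_right with
  | one => exact Or.inl (one_mem _)
  | mul_right x _ y hy ih => exact step x y ih (hgen y hy)
  | mul_inv_cancel x _ y hy ih =>
    refine step x y⁻¹ ih ?_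
    rcases hgen y hy with hy | rfl
    · exact Or.inl (inv_mem hy)
    · exact Or.inr (h.inv_eq _)

theorem inCosets_of_mem_par_succ {d : ℕ} (hd : d + 1 ≤ N) {w : G}
    (hw : w ∈ par t t' (d + 1)) : InCosets t t' d w := by
  induction d generalizing w with
  | zero =>
    refine h.inCosets_of_conj hd (fun q hq => ?_) hw
    rcases h.mem_par_zero hq with rfl | rfl | rfl | rfl
    · refine Or.inl ?_
      rw [mul_one, h.sq]
      exact one_mem _
    · exact Or.inr (Or.inl ⟨t 0, hq, t 0, hq, h.braid 0 hd⟩)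
    · exact Or.inr (Or.inl ⟨q, hq, q, hq, h.braid' hd⟩)
    · exact Or.inr (Or.inr ⟨1, one_mem _, (one_mul _).symm⟩)
  | succ d ih =>
    refine h.inCosets_of_conj hd (fun q hq => ?_) hw
    rcases ih (by omega) hq with hq | ⟨p, hp, r, hr, rfl⟩ | ⟨p, hp, rfl⟩
    · refine Or.inl ?_
      rw [h.commute_of_mem_par le_rfl hd hq, mul_assoc, h.sq, mul_one]
      exact par_mono d.le_succ hq
    · refine Or.inr (Or.inl ⟨p * t (d + 1), mul_mem (par_mono d.le_succ hp) (mem_par le_rfl),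
        t (d + 1) * r, mul_mem (mem_par le_rfl) (par_mono d.le_succ hr), ?_⟩)
      have hp' := h.commute_of_mem_par le_rfl hd hp
      have hr' := h.commute_of_mem_par le_rfl hd hr
      calc t (d + 2) * (p * t (d + 1) * r) * t (d + 2)
          = t (d + 2) * p * t (d + 1) * (r * t (d + 2)) := by simp only [mul_assoc]
        _ = p * (t (d + 2) * t (d + 1) * t (d + 2)) * r := by
          rw [hp', ← hr']; simp only [mul_assoc]
        _ = p * t (d + 1) * t (d + 2) * (t (d + 1) * r) := by
          rw [h.braid (d + 1) hd]; simp only [mul_assoc]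
    · refine Or.inr (Or.inr ⟨p, par_mono d.le_succ hp, ?_⟩)
      rw [← mul_assoc, h.commute_of_mem_par le_rfl hd hp]
      simp only [pal, mul_assoc]

section Length

variable {len : G → ℕ} (hone : len 1 = 0) (hmul : ∀ x y, len (x * y) ≤ len x + len y)
  (hlen : ∀ i, len (t i) ≤ 1) (hlen' : len t' ≤ 1)
include hmul hlen hlen'

omit h in
theorem len_pal_le (d : ℕ) : len (pal t t' d) ≤ 2 * d + 2 := by
  induction d with
  | zero =>
    have := hmul (t 0) t'
    have := hlen 0
    simp only [pal]
    omega
  | succ d ih =>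
    have h1 := hmul (t (d + 1) * pal t t' d) (t (d + 1))
    have h2 := hmul (t (d + 1)) (pal t t' d)
    have h3 := hlen (d + 1)
    simp only [pal]
    omega

include hone

omit hmul in
theorem len_le_of_mem_par_zero {p : G} (hp : p ∈ par t t' 0) :
    p = pal t t' 0 ∨ len p ≤ 1 := by
  rcases h.mem_par_zero hp with rfl | rfl | rfl | rfl
  · exact Or.inr (by omega)
  · exact Or.inr (hlen 0)
  · exact Or.inr hlen'
  · exact Or.inl rfl

/-- Every element of `par (d + 1)` lies in a right coset of `par d` represented by
`pal (d + 1)` or by a shorter element. -/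
theorem exists_short_representative {d : ℕ} (hd : d + 1 ≤ N) {w : G}
    (hw : w ∈ par t t' (d + 1)) :
    ∃ p ∈ par t t' d, ∃ r, w = p * r ∧ (r = pal t t' (d + 1) ∨ len r ≤ 2 * d + 3) := by
  induction d generalizing w with
  | zero =>
    rcases h.inCosets_of_mem_par_succ hd hw with hw | ⟨p, hp, q, hq, rfl⟩ | ⟨p, hp, rfl⟩
    · exact ⟨w, hw, 1, (mul_one w).symm, Or.inr (by omega)⟩
    · refine ⟨p, hp, t 1 * q, mul_assoc _ _ _, Or.inr ?_⟩
      have h1 := hmul (t 1) q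
      have h2 := hlen 1
      have h3 := len_pal_le (t' := t') hmul hlen hlen' 0
      rcases h.len_le_of_mem_par_zero hone hlen hlen' hq with rfl | h4 <;> omega
    · exact ⟨p, hp, _, rfl, Or.inl rfl⟩
  | succ d ih =>
    rcases h.inCosets_of_mem_par_succ hd hw with hw | ⟨p, hp, q, hq, rfl⟩ | ⟨p, hp, rfl⟩
    · exact ⟨w, hw, 1, (mul_one w).symm, Or.inr (by omega)⟩
    · obtain ⟨q, hq', r, rfl, hr⟩ := ih (by omega) hq
      refine ⟨p * q, mul_mem hp (par_mono d.le_succ hq'), t (d + 2) * r, ?_, Or.inr ?_⟩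
      · calc p * t (d + 2) * (q * r) = p * (t (d + 2) * q) * r := by simp only [mul_assoc]
          _ = p * q * (t (d + 2) * r) := by
            rw [h.commute_of_mem_par le_rfl hd hq']; simp only [mul_assoc]
      · have h1 := hmul (t (d + 2)) r
        have h2 := hlen (d + 2)
        have h3 := len_pal_le (t' := t') hmul hlen hlen' (d + 1)
        rcases hr with rfl | hr <;> omega
    · exact ⟨p, hp, _, rfl, Or.inl rfl⟩

/-- `top d` is the only element of `par d` that can attain the length `(d + 1) (d + 2)`, and no
element is longer. -/
theorem len_lt_or_eq_top {d : ℕ} (hd : d ≤ N) {w : G} (hw : w ∈ par t t' d) :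
    len w < (d + 1) * (d + 2) ∨ (w = top t t' d ∧ len w ≤ (d + 1) * (d + 2)) := by
  induction d generalizing w with
  | zero =>
    rcases h.len_le_of_mem_par_zero hone hlen hlen' hw with rfl | h1
    · exact Or.inr ⟨rfl, len_pal_le hmul hlen hlen' 0⟩
    · exact Or.inl (by omega)
  | succ d ih =>
    obtain ⟨p, hp, r, rfl, hr⟩ := h.exists_short_representative hone hmul hlen hlen' hd hw
    have h1 := hmul p r
    have h2 := len_pal_le (t' := t') hmul hlen hlen' (d + 1)
    have h3 : (d + 1 + 1) * (d + 1 + 2) = (d + 1) * (d + 2) + (2 * d + 4) := by ring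
    rcases ih (by omega) hp with hp | ⟨rfl, hp⟩ <;> rcases hr with rfl | hr
    · exact Or.inl (by omega)
    · exact Or.inl (by omega)
    · exact Or.inr ⟨rfl, by omega⟩
    · exact Or.inl (by omega)

end Length

end IsDChain

section Relations

theorem commute_of_pow_two {G : Type*} [Group G] {a b : G} (ha : a * a = 1) (hb : b * b = 1)
    (hab : (a * b) ^ 2 = 1) : a * b = b * a := by
  have h : (a * b)⁻¹ = a * b := inv_eq_of_mul_eq_one_left (by rw [← pow_two, hab])
  rw [← h, mul_inv_rev, inv_eq_of_mul_eq_one_left ha, inv_eq_of_mul_eq_one_left hb]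

theorem braid_of_pow_three {G : Type*} [Group G] {a b : G} (ha : a * a = 1) (hb : b * b = 1)
    (hab : (a * b) ^ 3 = 1) : a * b * a = b * a * b := by
  have h : (b * a * b)⁻¹ = a * b * a := by
    refine inv_eq_of_mul_eq_one_left ?_
    simpa only [pow_succ, pow_zero, one_mul, mul_assoc] using hab
  rw [← h]
  simp only [mul_inv_rev, inv_eq_of_mul_eq_one_left ha, inv_eq_of_mul_eq_one_left hb, mul_assoc]

theorem pow_two_of_commute {G : Type*} [Monoid G] {a b : G} (ha : a * a = 1) (hb : b * b = 1)
    (hab : a * b = b * a) : (a * b) ^ 2 = 1 := by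
  rw [(show Commute a b from hab).mul_pow, pow_two, pow_two, ha, hb, mul_one]

theorem pow_three_of_braid {G : Type*} [Monoid G] {a b : G} (ha : a * a = 1) (hb : b * b = 1)
    (hab : a * b * a = b * a * b) : (a * b) ^ 3 = 1 := by
  calc (a * b) ^ 3 = (a * b * a) * (b * a * b) := by
        simp only [pow_succ, pow_zero, one_mul, mul_assoc]
    _ = a * b * (a * a) * b * a := by rw [← hab]; simp only [mul_assoc]
    _ = 1 := by rw [ha, mul_one, mul_assoc a, hb, mul_one, ha]

variable {n : ℕ}

theorem CoxeterMatrixD_apply (i j : Fin n) : CoxeterMatrixD n i j =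
    if i = j then 1
    else if (((i : ℕ) + 1 = j ∨ (j : ℕ) + 1 = i) ∧ (i : ℕ) + 1 ≠ n ∧ (j : ℕ) + 1 ≠ n)
        ∨ ((i : ℕ) + 3 = n ∧ (j : ℕ) + 1 = n) ∨ ((j : ℕ) + 3 = n ∧ (i : ℕ) + 1 = n)
      then 3 else 2 := rfl

/-- A type `D` family of elements of a monoid satisfies the Coxeter relations. The hypotheses
only concern indices in increasing order. -/
theorem isLiftable_of_relations {G : Type*} [Monoid G] {f : Fin n → G}
    (hsq : ∀ i, f i * f i = 1)
    (hbraid : ∀ i j : Fin n, ((i : ℕ) + 1 = j ∧ (j : ℕ) + 1 ≠ n) ∨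
      ((i : ℕ) + 3 = n ∧ (j : ℕ) + 1 = n) → f i * f j * f i = f j * f i * f j)
    (hcomm : ∀ i j : Fin n, ((i : ℕ) + 2 ≤ j ∧ ((i : ℕ) + 3 = n → (j : ℕ) + 1 ≠ n)) ∨
      ((i : ℕ) + 2 = n ∧ (j : ℕ) + 1 = n) → f i * f j = f j * f i) :
    (CoxeterMatrixD n).IsLiftable f := by
  intro i j
  rw [CoxeterMatrixD_apply]
  have hi := i.isLt
  have hj := j.isLt
  split_ifs with h1 h2
  · rw [h1, pow_one, hsq]
  · refine pow_three_of_braid (hsq i) (hsq j) ?_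
    by_cases hlt : i < j
    · exact hbraid i j (by omega)
    · exact (hbraid j i (by omega)).symm
  · refine pow_two_of_commute (hsq i) (hsq j) ?_
    rw [Fin.ext_iff] at h1
    by_cases hlt : i < j
    · exact hcomm i j (by omega)
    · exact (hcomm j i (by omega)).symm

theorem simple_commute {i j : Fin n} (h : CoxeterMatrixD n i j = 2) :
    (csD n).simple i * (csD n).simple j = (csD n).simple j * (csD n).simple i :=
  commute_of_pow_two ((csD n).simple_mul_simple_self i) ((csD n).simple_mul_simple_self j)
    (h ▸ (csD n).simple_mul_simple_pow i j)

theorem simple_braid {i j : Fin n} (h : CoxeterMatrixD n i j = 3) :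
    (csD n).simple i * (csD n).simple j * (csD n).simple i =
      (csD n).simple j * (csD n).simple i * (csD n).simple j :=
  braid_of_pow_three ((csD n).simple_mul_simple_self i) ((csD n).simple_mul_simple_self j)
    (h ▸ (csD n).simple_mul_simple_pow i j)

end Relations

/-- The simple reflections along the long arm of the diagram, counted from the fork:
`armD n hn 0 = s_{n-1}`, `armD n hn 1 = s_{n-2}`, …, `armD n hn (n - 2) = s_1`. -/
def armD (n : ℕ) (hn : 4 ≤ n) (i : ℕ) : WD n := (csD n).simple ⟨n - 2 - i, by omega⟩

theorem sub_one_lt_of_four_le {n : ℕ} (hn : 4 ≤ n) : n - 1 < n := by omega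

/-- The last simple reflection `s_n`. -/
def forkD (n : ℕ) (hn : 4 ≤ n) : WD n := (csD n).simple ⟨n - 1, sub_one_lt_of_four_le hn⟩

theorem isDChain_armD (n : ℕ) (hn : 4 ≤ n) : IsDChain (n - 2) (armD n hn) (forkD n hn) where
  sq i := (csD n).simple_mul_simple_self _
  sq' := (csD n).simple_mul_simple_self _
  fork := simple_commute (by
    rw [CoxeterMatrixD_apply, if_neg (by rw [Fin.mk.injEq]; omega), if_neg (by dsimp only; omega)])
  braid i hi := simple_braid (by
    rw [CoxeterMatrixD_apply, if_neg (by rw [Fin.mk.injEq]; omega), if_pos (by dsimp only; omega)])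
  braid' _ := simple_braid (by
    rw [CoxeterMatrixD_apply, if_neg (by rw [Fin.mk.injEq]; omega), if_pos (by dsimp only; omega)])
  comm i j _ _ := simple_commute (by
    rw [CoxeterMatrixD_apply, if_neg (by rw [Fin.mk.injEq]; omega), if_neg (by dsimp only; omega)])
  comm' j _ _ := simple_commute (by
    rw [CoxeterMatrixD_apply, if_neg (by rw [Fin.mk.injEq]; omega), if_neg (by dsimp only; omega)])

section SignedPermutations

/-- Exchange the coordinates `a` and `a + 1`. -/
def swapAt (a : ℕ) (x : ℕ → ℤ) : ℕ → ℤ :=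
  fun k => if k = a then x (a + 1) else if k = a + 1 then x a else x k

/-- Exchange and negate the coordinates `a` and `a + 1`. -/
def negSwapAt (a : ℕ) (x : ℕ → ℤ) : ℕ → ℤ :=
  fun k => if k = a then -x (a + 1) else if k = a + 1 then -x a else x k

theorem swapAt_involutive (a : ℕ) : Function.Involutive (swapAt a) := by
  intro x
  funext k
  simp only [swapAt]
  grind

theorem negSwapAt_involutive (a : ℕ) : Function.Involutive (negSwapAt a) := by
  intro x
  funext k
  simp only [negSwapAt]
  grind

/-- The action of the simple reflections of type `D` on integer vectors. -/
def reflectD (n : ℕ) (i : Fin n) : Equiv.Perm (ℕ → ℤ) :=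
  if (i : ℕ) + 1 = n then (negSwapAt_involutive (n - 2)).toPerm else (swapAt_involutive i).toPerm

theorem reflectD_of_eq {n : ℕ} {i : Fin n} (hi : (i : ℕ) + 1 = n) (x : ℕ → ℤ) :
    reflectD n i x = negSwapAt (n - 2) x := by
  rw [reflectD, if_pos hi, Function.Involutive.coe_toPerm]

theorem reflectD_of_ne {n : ℕ} {i : Fin n} (hi : (i : ℕ) + 1 ≠ n) (x : ℕ → ℤ) :
    reflectD n i x = swapAt i x := by
  rw [reflectD, if_neg hi, Function.Involutive.coe_toPerm]

theorem isLiftable_reflectD (n : ℕ) : (CoxeterMatrixD n).IsLiftable (reflectD n) := by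
  refine isLiftable_of_relations (fun i => ?_) (fun i j h => ?_) (fun i j h => ?_)
  · ext1 x
    rw [Equiv.Perm.mul_apply]
    by_cases hi : (i : ℕ) + 1 = n
    · rw [reflectD_of_eq hi, reflectD_of_eq hi]
      exact negSwapAt_involutive _ x
    · rw [reflectD_of_ne hi, reflectD_of_ne hi]
      exact swapAt_involutive _ x
  all_goals
    ext x k
    have hi : (i : ℕ) + 1 ≠ n := by omega
    by_cases hj : (j : ℕ) + 1 = n
    · simp only [Equiv.Perm.mul_apply, reflectD_of_ne hi, reflectD_of_eq hj, swapAt, negSwapAt]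
      grind
    · simp only [Equiv.Perm.mul_apply, reflectD_of_ne hi, reflectD_of_ne hj, swapAt]
      grind

/-- The action of the Weyl group of type `D` on integer vectors by signed permutations. -/
def vecD (n : ℕ) : WD n →* Equiv.Perm (ℕ → ℤ) :=
  (csD n).lift ⟨reflectD n, isLiftable_reflectD n⟩

theorem vecD_simple (n : ℕ) (i : Fin n) : vecD n ((csD n).simple i) = reflectD n i :=
  (csD n).lift_apply_simple _ i

/-- The transpositions obtained from the simple reflections of type `D` by forgetting signs. -/
def transD (n : ℕ) (i : Fin n) : Equiv.Perm ℕ :=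
  Equiv.swap (min (i : ℕ) (n - 2)) (min (i : ℕ) (n - 2) + 1)

theorem isLiftable_transD (n : ℕ) : (CoxeterMatrixD n).IsLiftable (transD n) := by
  have hswap : ∀ a b c d : ℕ, a ≠ c → a ≠ d → b ≠ c → b ≠ d →
      Equiv.swap a b * Equiv.swap c d = Equiv.swap c d * Equiv.swap a b := by
    intro a b c d _ _ _ _
    ext k
    simp only [Equiv.Perm.mul_apply, Equiv.swap_apply_def]
    grind
  have hbraid : ∀ a : ℕ,
      Equiv.swap a (a + 1) * Equiv.swap (a + 1) (a + 1 + 1) * Equiv.swap a (a + 1) =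
      Equiv.swap (a + 1) (a + 1 + 1) * Equiv.swap a (a + 1) * Equiv.swap (a + 1) (a + 1 + 1) := by
    intro a
    ext k
    simp only [Equiv.Perm.mul_apply, Equiv.swap_apply_def]
    grind
  refine isLiftable_of_relations (fun i => Equiv.swap_mul_self _ _) (fun i j h => ?_)
    (fun i j h => ?_)
  · have hj : min (j : ℕ) (n - 2) = min (i : ℕ) (n - 2) + 1 := by omega
    rw [transD, transD, hj]
    exact hbraid _
  · rcases h with h | h
    · exact hswap _ _ _ _ (by omega) (by omega) (by omega) (by omega)
    · have hj : min (j : ℕ) (n - 2) = min (i : ℕ) (n - 2) := by omega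
      rw [transD, transD, hj]

/-- The homomorphism from the Weyl group of type `D` to permutations forgetting signs. -/
def permD (n : ℕ) : WD n →* Equiv.Perm ℕ := (csD n).lift ⟨transD n, isLiftable_transD n⟩

theorem permD_simple (n : ℕ) (i : Fin n) : permD n ((csD n).simple i) = transD n i :=
  (csD n).lift_apply_simple _ i

/-- The positive roots `e_i - e_j` (flag `true`) and `e_i + e_j` (flag `false`), `i < j < n`, on
which the vector `x` is negative. -/
def negRoots (n : ℕ) (x : ℕ → ℤ) : Finset (ℕ × ℕ × Bool) :=
  (Finset.range n ×ˢ Finset.range n ×ˢ Finset.univ).filter fun r =>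
    r.1 < r.2.1 ∧ if r.2.2 then x r.1 < x r.2.1 else x r.1 + x r.2.1 < 0

theorem mem_negRoots {n : ℕ} {x : ℕ → ℤ} {i j : ℕ} {e : Bool} : (i, j, e) ∈ negRoots n x ↔
    i < j ∧ j < n ∧ if e then x i < x j else x i + x j < 0 := by
  simp only [negRoots, Finset.mem_filter, Finset.mem_product, Finset.mem_range, Finset.mem_univ]
  grind

theorem card_negRoots_le_succ {n : ℕ} {x y : ℕ → ℤ} (f : ℕ × ℕ × Bool → ℕ × ℕ × Bool)
    (r₀ : ℕ × ℕ × Bool)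
    (h : ∀ r ∈ negRoots n y, r ≠ r₀ → f r ∈ negRoots n x ∧ f (f r) = r) :
    (negRoots n y).card ≤ (negRoots n x).card + 1 := by
  have hsub : negRoots n y ⊆ insert r₀ ((negRoots n x).image f) := by
    intro r hr
    rw [Finset.mem_insert, Finset.mem_image]
    by_cases hr₀ : r = r₀
    · exact Or.inl hr₀
    · exact Or.inr ⟨f r, h r hr hr₀⟩
  exact (Finset.card_le_card hsub).trans
    ((Finset.card_insert_le _ _).trans (Nat.succ_le_succ Finset.card_image_le))

theorem card_negRoots_swapAt_le {n a : ℕ} (ha : a + 1 < n) (x : ℕ → ℤ) :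
    (negRoots n (swapAt a x)).card ≤ (negRoots n x).card + 1 := by
  refine card_negRoots_le_succ (fun r => if r.1 = a ∧ r.2.1 = a + 1 then r else
    (if r.1 = a then a + 1 else if r.1 = a + 1 then a else r.1,
      if r.2.1 = a then a + 1 else if r.2.1 = a + 1 then a else r.2.1, r.2.2))
    (a, a + 1, true) ?_
  rintro ⟨i, j, e⟩ hr hne
  rw [mem_negRoots] at hr
  simp only [swapAt] at hr
  constructor
  · split_ifs <;> simp only [mem_negRoots] <;> cases e <;> grind
  · grind

theorem card_negRoots_negSwapAt_le {n a : ℕ} (ha : a + 2 = n) (x : ℕ → ℤ) :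
    (negRoots n (negSwapAt a x)).card ≤ (negRoots n x).card + 1 := by
  refine card_negRoots_le_succ (fun r => if r.1 = a then r else
    (r.1, if r.2.1 = a then a + 1 else if r.2.1 = a + 1 then a else r.2.1,
      if a ≤ r.2.1 then !r.2.2 else r.2.2)) (a, a + 1, false) ?_
  rintro ⟨i, j, e⟩ hr hne
  rw [mem_negRoots] at hr
  simp only [negSwapAt] at hr
  constructor
  · split_ifs <;> simp only [mem_negRoots] <;> cases e <;> grind
  · grind

theorem card_negRoots_reflectD_le {n : ℕ} (hn : 4 ≤ n) (i : Fin n) (x : ℕ → ℤ) :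
    (negRoots n (reflectD n i x)).card ≤ (negRoots n x).card + 1 := by
  have hi := i.isLt
  by_cases h : (i : ℕ) + 1 = n
  · rw [reflectD_of_eq h]
    exact card_negRoots_negSwapAt_le (by omega) x
  · rw [reflectD_of_ne h]
    exact card_negRoots_swapAt_le (by omega) x

/-- The vector `(n - 1, …, 1, 0)`. -/
def rhoD (n : ℕ) : ℕ → ℤ := fun i => (n : ℤ) - 1 - i

theorem card_negRoots_vecD_le_length {n : ℕ} (hn : 4 ≤ n) (w : WD n) :
    (negRoots n (vecD n w (rhoD n))).card ≤ (csD n).length w := by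
  obtain ⟨ω, hω, rfl⟩ := (csD n).exists_isReduced w
  rw [hω.eq]
  clear hω
  induction ω with
  | nil =>
    rw [CoxeterSystem.wordProd_nil, map_one, List.length_nil, Nat.le_zero, Finset.card_eq_zero,
      Finset.eq_empty_iff_forall_notMem]
    rintro ⟨i, j, e⟩ hr
    rw [mem_negRoots] at hr
    simp only [Equiv.Perm.one_apply, rhoD] at hr
    cases e <;> grind
  | cons i ω ih =>
    rw [CoxeterSystem.wordProd_cons, map_mul, vecD_simple, List.length_cons]
    exact (card_negRoots_reflectD_le hn i _).trans (Nat.succ_le_succ ih)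

theorem vecD_pal {n : ℕ} (hn : 4 ≤ n) {d : ℕ} (hd : d ≤ n - 2) (x : ℕ → ℤ) :
    vecD n (IsDChain.pal (armD n hn) (forkD n hn) d) x =
      fun k => if k = n - 2 - d ∨ k = n - 1 then -x k else x k := by
  induction d generalizing x with
  | zero =>
    rw [IsDChain.pal, armD, forkD, map_mul, vecD_simple, vecD_simple, Equiv.Perm.mul_apply,
      reflectD_of_ne (by dsimp only; omega), reflectD_of_eq (by dsimp only; omega)]
    funext k
    simp only [swapAt, negSwapAt]
    grind
  | succ d ih =>
    rw [IsDChain.pal, map_mul, map_mul, Equiv.Perm.mul_apply, Equiv.Perm.mul_apply, ih (by omega),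
      armD, vecD_simple, reflectD_of_ne (by dsimp only; omega),
      reflectD_of_ne (by dsimp only; omega)]
    funext k
    simp only [swapAt]
    grind

theorem vecD_top {n : ℕ} (hn : 4 ≤ n) {d : ℕ} (hd : d ≤ n - 2) (x : ℕ → ℤ) (hx : x (n - 1) = 0) :
    vecD n (IsDChain.top (armD n hn) (forkD n hn) d) x =
      fun k => if n - 2 - d ≤ k ∧ k < n then -x k else x k := by
  induction d generalizing x with
  | zero =>
    rw [IsDChain.top, vecD_pal hn hd]
    funext k
    grind
  | succ d ih =>
    rw [IsDChain.top, map_mul, Equiv.Perm.mul_apply, vecD_pal hn hd,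
      ih (by omega) _ (by simp [hx])]
    funext k
    grind

theorem le_length_top {n : ℕ} (hn : 4 ≤ n) :
    (n - 2 + 1) * (n - 2 + 2) ≤
      (csD n).length (IsDChain.top (armD n hn) (forkD n hn) (n - 2)) := by
  refine le_trans ?_ (card_negRoots_vecD_le_length hn _)
  rw [vecD_top hn le_rfl _ (by simp only [rhoD]; omega)]
  have hcard : (n - 2 + 1) * (n - 2 + 2) = (Finset.range n).offDiag.card := by
    obtain ⟨m, rfl⟩ := Nat.exists_eq_add_of_le hn
    rw [Finset.offDiag_card, Finset.card_range, ← Nat.sub_one_mul]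
    congr 1 <;> omega
  rw [hcard]
  refine Finset.card_le_card_of_injOn
    (fun p => if p.1 < p.2 then (p.1, p.2, true) else (p.2, p.1, false)) ?_ ?_
  · rintro ⟨i, j⟩ hp
    simp only [Finset.coe_offDiag, Set.mem_offDiag, Finset.coe_range, Set.mem_Iio] at hp
    simp only [SetLike.mem_coe]
    split_ifs <;> rw [mem_negRoots] <;> simp only [rhoD] <;> grind
  · rintro ⟨i, j⟩ hp ⟨k, l⟩ hq heq
    grind

end SignedPermutations

section Segments

theorem segD_of_lt {n a b : ℕ} (h : b < a) : segD n a b = 1 := by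
  have hnil : (List.finRange n).filter
      (fun k : Fin n => a ≤ (k : ℕ) + 1 ∧ (k : ℕ) + 1 ≤ b) = [] := by
    rw [List.filter_eq_nil_iff]
    intro k _
    simp only [decide_eq_true_eq]
    omega
  rw [segD, hnil, List.map_nil, List.prod_nil]

theorem segD_eq_simple_mul {n b : ℕ} (i : Fin n) (hb : (i : ℕ) + 1 ≤ b) :
    segD n (i + 1) b = (csD n).simple i * segD n (i + 2) b := by
  have hcons : (List.finRange n).filter
      (fun k : Fin n => (i : ℕ) + 1 ≤ (k : ℕ) + 1 ∧ (k : ℕ) + 1 ≤ b) =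
      i :: (List.finRange n).filter
        (fun k : Fin n => (i : ℕ) + 2 ≤ (k : ℕ) + 1 ∧ (k : ℕ) + 1 ≤ b) := by
    have hsorted := List.pairwise_lt_finRange n
    have hpw : (i :: (List.finRange n).filter
        (fun k : Fin n => (i : ℕ) + 2 ≤ (k : ℕ) + 1 ∧ (k : ℕ) + 1 ≤ b)).Pairwise (· < ·) := by
      refine List.pairwise_cons.2 ⟨fun k hk => ?_, hsorted.filter _⟩
      simp only [List.mem_filter, decide_eq_true_eq] at hk
      omega
    refine List.Perm.eq_of_pairwise (le := (· < ·))
      (fun _ _ _ _ h₁ h₂ => absurd h₂ h₁.asymm) (hsorted.filter _) hpw ?_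
    rw [List.perm_ext_iff_of_nodup ((List.nodup_finRange n).filter _)
      (hpw.imp fun h => h.ne)]
    intro k
    simp only [List.mem_cons, List.mem_filter, List.mem_finRange, true_and, decide_eq_true_eq,
      Fin.ext_iff]
    omega
  rw [segD, hcons, List.map_cons, List.prod_cons, segD]

theorem segD_mul_inv_eq_pal {n : ℕ} (hn : 4 ≤ n) {d : ℕ} (hd : d ≤ n - 2) :
    segD n (n - 2 - d + 1) (n - 2) * (segD n (n - 2 - d + 1) n)⁻¹ =
      IsDChain.pal (armD n hn) (forkD n hn) d := by
  induction d with
  | zero =>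
    have h1 := segD_eq_simple_mul (n := n) (b := n) ⟨n - 2, by omega⟩ (by dsimp only; omega)
    have h2 := segD_eq_simple_mul (n := n) (b := n) ⟨n - 1, by omega⟩ (by dsimp only; omega)
    dsimp only at h1 h2
    rw [segD_of_lt (by omega : n < n - 1 + 2), mul_one] at h2
    rw [show n - 2 + 2 = n - 1 + 1 by omega, h2] at h1
    rw [Nat.sub_zero, segD_of_lt (by omega), h1, one_mul, mul_inv_rev,
      CoxeterSystem.inv_simple, CoxeterSystem.inv_simple]
    exact (isDChain_armD n hn).fork.symm
  | succ d ih =>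
    have h1 := segD_eq_simple_mul (n := n) (b := n - 2) ⟨n - 2 - (d + 1), by omega⟩
      (by dsimp only; omega)
    have h2 := segD_eq_simple_mul (n := n) (b := n) ⟨n - 2 - (d + 1), by omega⟩
      (by dsimp only; omega)
    dsimp only at h1 h2
    rw [h1, h2, show n - 2 - (d + 1) + 2 = n - 2 - d + 1 by omega, mul_inv_rev,
      CoxeterSystem.inv_simple, IsDChain.pal, ← ih (by omega), armD]
    simp only [mul_assoc]

end Segments

section Parabolic

variable {n : ℕ} (hn : 4 ≤ n)

theorem simple_eq_forkD {j : Fin n} (hj : (j : ℕ) + 1 = n) :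
    (csD n).simple j = forkD n hn :=
  congrArg _ (Fin.ext (by dsimp only; omega))

theorem simple_eq_armD {j : Fin n} {i : ℕ} (hj : (j : ℕ) + 2 + i = n) :
    (csD n).simple j = armD n hn i :=
  congrArg _ (Fin.ext (by dsimp only; omega))

theorem paraD_eq_par {i : Fin n} (hi : (i : ℕ) = 0) :
    paraD n i = IsDChain.par (armD n hn) (forkD n hn) (n - 3) := by
  apply le_antisymm
  · rw [paraD, Subgroup.closure_le]
    rintro _ ⟨j, hj, rfl⟩
    have hlt := j.isLt
    rw [Set.mem_ofPred_eq, ne_eq, Fin.ext_iff] at hj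
    by_cases hlast : (j : ℕ) + 1 = n
    · rw [simple_eq_forkD hn hlast]
      exact IsDChain.branch_mem_par _
    · rw [simple_eq_armD hn (i := n - 2 - j) (by omega)]
      exact IsDChain.mem_par (by omega)
  · refine IsDChain.par_le_iff.2 ⟨Subgroup.subset_closure ⟨_, ?_, rfl⟩,
      fun k hk => Subgroup.subset_closure ⟨_, ?_, rfl⟩⟩
    all_goals
      rw [Set.mem_ofPred_eq, ne_eq, Fin.ext_iff]
      dsimp only
      omega

theorem mem_par_armD (w : WD n) : w ∈ IsDChain.par (armD n hn) (forkD n hn) (n - 2) := by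
  refine (csD n).simple_induction w (fun j => ?_) (one_mem _) fun _ _ => mul_mem
  have hlt := j.isLt
  by_cases hlast : (j : ℕ) + 1 = n
  · rw [simple_eq_forkD hn hlast]
    exact IsDChain.branch_mem_par _
  · rw [simple_eq_armD hn (i := n - 2 - j) (by omega)]
    exact IsDChain.mem_par (by omega)

theorem length_lt_or_eq_top {d : ℕ} (hd : d ≤ n - 2) {w : WD n}
    (hw : w ∈ IsDChain.par (armD n hn) (forkD n hn) d) :
    (csD n).length w < (d + 1) * (d + 2) ∨
      (w = IsDChain.top (armD n hn) (forkD n hn) d ∧ (csD n).length w ≤ (d + 1) * (d + 2)) :=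
  (isDChain_armD n hn).len_lt_or_eq_top (csD n).length_one (csD n).length_mul_le
    (fun _ => ((csD n).length_simple _).le) ((csD n).length_simple _).le hd hw

theorem le_length_top_parabolic :
    (n - 3 + 1) * (n - 3 + 2) ≤
      (csD n).length (IsDChain.top (armD n hn) (forkD n hn) (n - 3)) := by
  obtain ⟨m, rfl⟩ := Nat.exists_eq_add_of_le' (show 3 ≤ n by omega)
  have h1 := le_length_top hn
  have h2 := (csD (m + 3)).length_mul_le (IsDChain.top (armD _ hn) (forkD _ hn) m)
    (IsDChain.pal (armD _ hn) (forkD _ hn) (m + 1))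
  have h3 : (csD (m + 3)).length (IsDChain.pal (armD _ hn) (forkD _ hn) (m + 1)) ≤
      2 * (m + 1) + 2 :=
    IsDChain.len_pal_le (csD (m + 3)).length_mul_le
      (fun _ => ((csD (m + 3)).length_simple _).le) ((csD (m + 3)).length_simple _).le (m + 1)
  have h4 : (m + 1 + 1) * (m + 1 + 2) = (m + 1) * (m + 2) + (2 * m + 4) := by ring
  change (m + 1 + 1) * (m + 1 + 2) ≤ (csD (m + 3)).length
    (IsDChain.top (armD _ hn) (forkD _ hn) m * IsDChain.pal (armD _ hn) (forkD _ hn) (m + 1)) at h1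
  change (m + 1) * (m + 2) ≤ (csD (m + 3)).length (IsDChain.top (armD _ hn) (forkD _ hn) m)
  omega

theorem eq_top_of_le_length {d : ℕ} (hd : d ≤ n - 2) {w : WD n}
    (hw : w ∈ IsDChain.par (armD n hn) (forkD n hn) d)
    (hlen : (d + 1) * (d + 2) ≤ (csD n).length w) :
    w = IsDChain.top (armD n hn) (forkD n hn) d := by
  rcases length_lt_or_eq_top hn hd hw with h | h
  · omega
  · exact h.1

theorem longest_mul_longest_eq_pal {i : Fin n} (hi : (i : ℕ) = 0) {w₀ w₁ : WD n}
    (hw₀ : ∀ v : WD n, (csD n).length v ≤ (csD n).length w₀)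
    (hw₁ : w₁ ∈ paraD n i)
    (hw₁max : ∀ v ∈ paraD n i, (csD n).length v ≤ (csD n).length w₁) :
    w₁ * w₀ = IsDChain.pal (armD n hn) (forkD n hn) (n - 2) := by
  rw [paraD_eq_par hn hi] at hw₁ hw₁max
  have hlen₁ := (le_length_top_parabolic hn).trans (hw₁max _ (IsDChain.top_mem_par _))
  have h₁ := eq_top_of_le_length hn (by omega) hw₁ hlen₁
  have h₁' := eq_top_of_le_length hn (by omega) (inv_mem hw₁) (by rwa [(csD n).length_inv])
  have h₀ := eq_top_of_le_length hn le_rfl (mem_par_armD hn w₀)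
    ((le_length_top hn).trans (hw₀ _))
  have htop : IsDChain.top (armD n hn) (forkD n hn) (n - 2) =
      IsDChain.top (armD n hn) (forkD n hn) (n - 3) *
        IsDChain.pal (armD n hn) (forkD n hn) (n - 2) := by
    rw [show n - 2 = n - 3 + 1 by omega, IsDChain.top]
  rw [h₀, htop, ← h₁', mul_inv_cancel_left]

theorem isConj_pal (d : ℕ) : IsConj (IsDChain.pal (armD n hn) (forkD n hn) d)
    (armD n hn 0 * forkD n hn) := by
  induction d with
  | zero => exact IsConj.refl _
  | succ d ih =>
    refine IsConj.trans (isConj_iff.2 ⟨armD n hn (d + 1), ?_⟩) ih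
    have hinv := (isDChain_armD n hn).inv_eq (d + 1)
    have hsq := (isDChain_armD n hn).sq (d + 1)
    rw [hinv, IsDChain.pal]
    simp only [mul_assoc, hsq, mul_one]
    rw [← mul_assoc, hsq, one_mul]

theorem arm_mul_fork_ne_one : armD n hn 0 * forkD n hn ≠ 1 := by
  intro h
  have hx := vecD_pal hn (Nat.zero_le (n - 2)) (fun _ => 1)
  rw [IsDChain.pal, h, map_one] at hx
  have := congrFun hx (n - 1)
  simp at this

theorem even_length_of_isConj {w : WD n} (h : IsConj (armD n hn 0 * forkD n hn) w) :
    Even ((csD n).length w) := by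
  have hpar := (csD n).lengthParity.map_isConj h
  rw [isConj_iff_eq, map_mul, armD, forkD, CoxeterSystem.lengthParity_simple,
    CoxeterSystem.lengthParity_simple, CoxeterSystem.lengthParity_eq_ofAdd_length] at hpar
  have hz : ((csD n).length w : ZMod 2) = 0 := (Multiplicative.ofAdd.injective hpar).symm
  rwa [ZMod.natCast_eq_zero_iff_even] at hz

theorem two_le_length_of_isConj {w : WD n} (h : IsConj (armD n hn 0 * forkD n hn) w) :
    2 ≤ (csD n).length w := by
  have heven := even_length_of_isConj hn h
  have hne : (csD n).length w ≠ 0 := by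
    intro h0
    rw [(csD n).length_eq_zero_iff] at h0
    rw [h0] at h
    exact arm_mul_fork_ne_one hn (isConj_one_left.1 h)
  rcases heven with ⟨m, hm⟩
  omega

theorem length_arm_mul_fork : (csD n).length (armD n hn 0 * forkD n hn) = 2 := by
  refine le_antisymm ?_ (two_le_length_of_isConj hn (IsConj.refl _))
  have h := (csD n).length_mul_le (armD n hn 0) (forkD n hn)
  rwa [armD, forkD, (csD n).length_simple, (csD n).length_simple] at h

theorem eq_of_transD_eq {i j : Fin n} (h : transD n i = transD n j) :
    min (i : ℕ) (n - 2) = min (j : ℕ) (n - 2) := by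
  have h1 := congrArg (fun σ : Equiv.Perm ℕ => σ (min (i : ℕ) (n - 2))) h
  simp only [transD, Equiv.swap_apply_def] at h1
  have h2 := congrArg (fun σ : Equiv.Perm ℕ => σ (min (j : ℕ) (n - 2))) h
  simp only [transD, Equiv.swap_apply_def] at h2
  grind

theorem permD_eq_one_of_isConj {w : WD n} (h : IsConj (armD n hn 0 * forkD n hn) w) :
    permD n w = 1 := by
  have hone : permD n (armD n hn 0 * forkD n hn) = 1 := by
    rw [map_mul, armD, forkD, permD_simple, permD_simple, transD, transD]
    have : min (n - 1) (n - 2) = min (n - 2 - 0) (n - 2) := by omega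
    rw [this, Equiv.swap_mul_self]
  have hconj := (permD n).map_isConj h
  rw [hone] at hconj
  exact isConj_one_right.1 hconj

/-- The only element of length two in the class of `s_{n-1} s_n` is `s_{n-1} s_n` itself. -/
theorem eq_arm_mul_fork_of_isConj {w : WD n} (h : IsConj (armD n hn 0 * forkD n hn) w)
    (hlen : (csD n).length w = 2) : w = armD n hn 0 * forkD n hn := by
  obtain ⟨ω, hω, rfl⟩ := (csD n).exists_isReduced w
  rw [hω.eq] at hlen
  obtain ⟨i, j, rfl⟩ := List.length_eq_two.1 hlen
  have hprod : (csD n).wordProd [i, j] = (csD n).simple i * (csD n).simple j := by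
    rw [CoxeterSystem.wordProd_cons, CoxeterSystem.wordProd_singleton]
  rw [hprod] at h ⊢
  have hperm := permD_eq_one_of_isConj hn h
  rw [map_mul, permD_simple, permD_simple, mul_eq_one_iff_eq_inv, transD, transD,
    Equiv.swap_inv] at hperm
  have hmin := eq_of_transD_eq hperm
  have hi := i.isLt
  have hj := j.isLt
  have hne : (i : ℕ) ≠ j := by
    intro hij
    rw [Fin.ext hij, (csD n).simple_mul_simple_self] at h
    exact arm_mul_fork_ne_one hn (isConj_one_left.1 h)
  rcases Nat.lt_or_gt_of_ne hne with hlt | hgt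
  · rw [simple_eq_armD hn (j := i) (i := 0) (by omega), simple_eq_forkD hn (j := j) (by omega)]
  · rw [simple_eq_forkD hn (j := i) (by omega), simple_eq_armD hn (j := j) (i := 0) (by omega)]
    exact (isDChain_armD n hn).fork.symm

end Parabolic

/-- In the Weyl group of type `Dₙ` (`n ≥ 4`, Bourbaki labels),
`w_{1,0}·w₀ = (s_1 ⋯ s_{n−2})·(s_1 ⋯ s_{n−2} s_{n−1} s_n)⁻¹`, and the set of minimal
length elements of the conjugacy class of `w_{1,0}·w₀` is exactly `{s_{n−1}·s_n}`; in
particular the minimal length in this conjugacy class is `2`. -/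
theorem typeD_w10_mul_w0 (n : ℕ) (hn : 4 ≤ n)
    (w₀ : WD n) (hw₀ : ∀ v : WD n, (csD n).length v ≤ (csD n).length w₀)
    (w₁ : WD n) (hw₁ : w₁ ∈ paraD n ⟨0, by omega⟩)
    (hw₁max : ∀ v ∈ paraD n ⟨0, by omega⟩, (csD n).length v ≤ (csD n).length w₁) :
    w₁ * w₀ = segD n 1 (n - 2) * (segD n 1 n)⁻¹ ∧
    {w : WD n | IsConj (w₁ * w₀) w ∧
        ∀ v : WD n, IsConj (w₁ * w₀) v → (csD n).length w ≤ (csD n).length v}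
      = {(csD n).simple ⟨n - 2, by omega⟩ * (csD n).simple ⟨n - 1, by omega⟩} ∧
    (csD n).length ((csD n).simple ⟨n - 2, by omega⟩ * (csD n).simple ⟨n - 1, by omega⟩)
      = 2 := by
  have hpal := longest_mul_longest_eq_pal hn rfl hw₀ hw₁ hw₁max
  have hconj : IsConj (w₁ * w₀) (armD n hn 0 * forkD n hn) := hpal ▸ isConj_pal hn (n - 2)
  refine ⟨?_, ?_, length_arm_mul_fork hn⟩
  · rw [hpal, ← segD_mul_inv_eq_pal hn le_rfl, Nat.sub_self]
  · ext w
    rw [Set.mem_ofPred_eq, Set.mem_singleton_iff]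
    constructor
    · rintro ⟨hw, hmin⟩
      have hw' := hconj.symm.trans hw
      refine eq_arm_mul_fork_of_isConj hn hw' (le_antisymm ?_ (two_le_length_of_isConj hn hw'))
      exact (hmin _ hconj).trans (length_arm_mul_fork hn).le
    · rintro rfl
      exact ⟨hconj, fun v hv => (length_arm_mul_fork hn).le.trans
        (two_le_length_of_isConj hn (hconj.symm.trans hv))⟩
end
end

section
/- Let W be the Weyl group of type E_6 with simple reflections s_1, …, s_6 labeled as in Bourbaki. Then w_{1,0}·w_0 = s_1 s_3 s_4 s_5 s_6 s_2 s_4 s_5 s_3 s_4 s_1 s_3 s_2 s_4 s_5 s_6, and the set of elements of minimal length in the conjugacy class of w_{1,0}·w_0 equals the set of Coxeter elements of the standard parabolic subgroup W_J with J = {1, 3, 5, 6}; in particular, the minimal length in this conjugacy class is 4. -/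
noncomputable section
open CoxeterMatrix

/-- The Weyl group of type `E₆`, given by its Coxeter presentation; the index `j : Fin 6`
corresponds to the Bourbaki label `j + 1`. -/
abbrev WE6 := (E₆).Group

/-- The canonical Coxeter system of type `E₆`. -/
def csE6 : CoxeterSystem E₆ WE6 := (E₆).toCoxeterSystem

/-- The standard parabolic subgroup of the type-`E₆` Weyl group generated by all simple
reflections except the one with (zero-based) index `i`. -/
def paraE6 (i : Fin 6) : Subgroup WE6 :=
  Subgroup.closure (csE6.simple '' {j : Fin 6 | j ≠ i})


section WordReduction

variable {B W : Type*} [Group W] {M : CoxeterMatrix B}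

theorem simple_mul_comm (cs : CoxeterSystem M W) {a b : B} (h : M a b = 2) :
    cs.simple a * cs.simple b = cs.simple b * cs.simple a := by
  have := cs.simple_mul_simple_pow a b
  rw [h, pow_two] at this
  simpa using mul_eq_one_iff_eq_inv.mp this

theorem simple_mul_braid (cs : CoxeterSystem M W) {a b : B} (h : M a b = 3) :
    cs.simple a * (cs.simple b * cs.simple a) = cs.simple b * (cs.simple a * cs.simple b) := by
  have := cs.simple_mul_simple_pow a b
  rw [h, pow_succ, pow_two, show ∀ x y : W, x * y * (x * y) * (x * y) = x * (y * x) * (y * (x * y))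
    from fun x y => by group] at this
  simpa [mul_assoc] using mul_eq_one_iff_eq_inv.mp this

variable [DecidableEq B]

/-- Try to rewrite the word `ω` by braid moves of order `2` and `3` as `a :: ω'`, and return `ω'`.
The first argument bounds the recursion depth. -/
def extractLeft (M : CoxeterMatrix B) : ℕ → B → List B → Option (List B)
  | 0, _, _ => none
  | _ + 1, _, [] => none
  | n + 1, a, b :: ω =>
    if a = b then some ω
    else if M a b = 2 then (extractLeft M n a ω).map (b :: ·)
    else if M a b = 3 then
      ((extractLeft M n a ω).bind (extractLeft M n b)).map (b :: a :: ·)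
    else none

/-- Shorten a word, letter by letter from the right, using `extractLeft`. -/
def reduceWord (M : CoxeterMatrix B) : List B → List B
  | [] => []
  | a :: ω =>
    let ω' := reduceWord M ω
    (extractLeft M ω'.length a ω').getD (a :: ω')

theorem wordProd_extractLeft (cs : CoxeterSystem M W) (n : ℕ) (a : B) (ω ω' : List B)
    (h : extractLeft M n a ω = some ω') : cs.wordProd ω = cs.simple a * cs.wordProd ω' := by
  induction n generalizing a ω ω' with
  | zero => simp [extractLeft] at h
  | succ n ih =>
    cases ω with
    | nil => simp [extractLeft] at h
    | cons b ω =>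
      rw [extractLeft] at h
      split_ifs at h with hab h2 h3
      · cases h
        rw [hab, cs.wordProd_cons]
      · obtain ⟨x, hx, rfl⟩ := Option.map_eq_some_iff.mp h
        simp only [cs.wordProd_cons, ih _ _ _ hx, ← mul_assoc, simple_mul_comm cs h2]
      · obtain ⟨x, hx, rfl⟩ := Option.map_eq_some_iff.mp h
        obtain ⟨y, hy, hyx⟩ := Option.bind_eq_some_iff.mp hx
        simp only [cs.wordProd_cons, ih _ _ _ hy, ih _ _ _ hyx]
        have := congrArg (· * cs.wordProd x) (simple_mul_braid cs h3)
        simpa only [mul_assoc] using this.symm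

theorem wordProd_reduceWord (cs : CoxeterSystem M W) (ω : List B) :
    cs.wordProd (reduceWord M ω) = cs.wordProd ω := by
  induction ω with
  | nil => rfl
  | cons a ω ih =>
    rw [reduceWord, cs.wordProd_cons, ← ih]
    cases h : extractLeft M (reduceWord M ω).length a (reduceWord M ω) with
    | none => simp [cs.wordProd_cons]
    | some x => simp [wordProd_extractLeft cs _ _ _ _ h]

theorem wordProd_eq_of_reduceWord (cs : CoxeterSystem M W) {ω ω' : List B}
    (h : reduceWord M (ω ++ ω'.reverse) = []) : cs.wordProd ω = cs.wordProd ω' := by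
  have := wordProd_reduceWord cs (ω ++ ω'.reverse)
  rw [h, cs.wordProd_append, cs.wordProd_reverse, cs.wordProd_nil] at this
  exact (mul_inv_eq_one.mp this.symm)

end WordReduction

section LongestElement

variable {B W : Type*} [Group W] {M : CoxeterMatrix B}

/-- The word `u` represents the unique longest element of the standard parabolic subgroup
generated by `J`, and no element of this subgroup is longer than `u`. -/
def DominatesParabolic (cs : CoxeterSystem M W) (J : List B) (u : List B) : Prop :=
  ∀ w ∈ Subgroup.closure (cs.simple '' {j | j ∈ J}), w = cs.wordProd u ∨ cs.length w < u.length

/-- The words in `R` represent all right cosets of `W_K` in `W_J`: the set of these cosets is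
stable under right multiplication by the generators in `J`, as certified by `reduceWord`. -/
def IsCosetTable [DecidableEq B] (M : CoxeterMatrix B) (J K : List B) (R : List (List B)) : Prop :=
  [] ∈ R ∧ ∀ r ∈ R, ∀ s ∈ J,
    (∃ r' ∈ R, (r'.length = r.length + 1 ∨ r.length = r'.length + 1) ∧
      reduceWord M (r ++ [s] ++ r'.reverse) = []) ∨
    ∃ k ∈ K, reduceWord M (r ++ [s] ++ (k :: r).reverse) = []

instance [DecidableEq B] (J K : List B) (R : List (List B)) : Decidable (IsCosetTable M J K R) :=
  inferInstanceAs (Decidable (_ ∧ _))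

theorem IsCosetTable.exists_eq_mul [DecidableEq B] (cs : CoxeterSystem M W) {J K : List B}
    {R : List (List B)} (hR : IsCosetTable M J K R) {w : W}
    (hw : w ∈ Subgroup.closure (cs.simple '' {j | j ∈ J})) :
    ∃ v ∈ Subgroup.closure (cs.simple '' {k | k ∈ K}), ∃ r ∈ R, w = v * cs.wordProd r := by
  have step : ∀ x : W, ∀ s ∈ J,
      (∃ v ∈ Subgroup.closure (cs.simple '' {k | k ∈ K}), ∃ r ∈ R, x = v * cs.wordProd r) →
      ∃ v ∈ Subgroup.closure (cs.simple '' {k | k ∈ K}), ∃ r ∈ R,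
        x * cs.simple s = v * cs.wordProd r := by
    rintro _ s hs ⟨v, hv, r, hr, rfl⟩
    rcases hR.2 r hr s hs with ⟨r', hr', -, h⟩ | ⟨k, hk, h⟩
    · refine ⟨v, hv, r', hr', ?_⟩
      rw [← wordProd_eq_of_reduceWord cs h, cs.wordProd_append, cs.wordProd_singleton, mul_assoc]
    · refine ⟨v * cs.simple k, mul_mem hv (Subgroup.subset_closure ⟨k, hk, rfl⟩), r, hr, ?_⟩
      rw [mul_assoc v (cs.simple k), ← cs.wordProd_cons, ← wordProd_eq_of_reduceWord cs h,
        cs.wordProd_append, cs.wordProd_singleton, mul_assoc]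
  induction hw using Subgroup.closure_induction_right with
  | one => exact ⟨1, one_mem _, [], hR.1, by simp⟩
  | mul_right x hx y hy ih =>
    obtain ⟨s, hs, rfl⟩ := hy
    exact step x s hs ih
  | mul_inv_cancel x hx y hy ih =>
    obtain ⟨s, hs, rfl⟩ := hy
    rw [cs.inv_simple]
    exact step x s hs ih

theorem DominatesParabolic.append [DecidableEq B] {cs : CoxeterSystem M W} {J K u : List B}
    (hu : DominatesParabolic cs K u) {R : List (List B)} (hR : IsCosetTable M J K R)
    {r₀ : List B} (hr₀ : ∀ r ∈ R, r = r₀ ∨ r.length < r₀.length) :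
    DominatesParabolic cs J (u ++ r₀) := by
  intro w hw
  obtain ⟨v, hv, r, hr, rfl⟩ := hR.exists_eq_mul cs hw
  have hmul := cs.length_mul_le v (cs.wordProd r)
  have hlen := cs.length_wordProd_le r
  rw [List.length_append, cs.wordProd_append]
  rcases hu v hv with rfl | hv' <;> rcases hr₀ r hr with rfl | hr'
  · exact .inl rfl
  · have := cs.length_wordProd_le u
    right; omega
  · right; omega
  · right; omega

theorem dominatesParabolic_nil (cs : CoxeterSystem M W) : DominatesParabolic cs [] [] := by
  intro w hw
  left
  simpa using hw

end LongestElement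

/-- The longest element of the parabolic subgroup of type `D₅`. -/
def longestWordD5 : List (Fin 6) :=
  [2] ++ [3, 2] ++ [4, 3, 2] ++ [5, 4, 3, 2] ++ [1, 3, 2, 4, 3, 1, 5, 4, 3, 2]

/-- The longest minimal right coset representative of `D₅` in `E₆`. -/
def cosetWordE6 : List (Fin 6) := [0, 2, 3, 4, 5, 1, 3, 4, 2, 3, 0, 2, 1, 3, 4, 5]

theorem dominatesParabolic_D5 : DominatesParabolic csE6 [1, 2, 3, 4, 5] longestWordD5 := by
  refine DominatesParabolic.append (K := [2, 3, 4, 5])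
    (R := [1, 3, 2, 4, 3, 1, 5, 4, 3, 2].inits ++ [1, 3, 4, 5, 2, 3, 4].inits) ?_
    (by decide +kernel) (by decide +kernel)
  refine DominatesParabolic.append (K := [2, 3, 4]) (R := [5, 4, 3, 2].inits) ?_
    (by decide +kernel) (by decide +kernel)
  refine DominatesParabolic.append (K := [2, 3]) (R := [4, 3, 2].inits) ?_
    (by decide +kernel) (by decide +kernel)
  refine DominatesParabolic.append (K := [2]) (R := [3, 2].inits) ?_
    (by decide +kernel) (by decide +kernel)
  exact (dominatesParabolic_nil csE6).append (R := [2].inits)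
    (by decide +kernel) (by decide +kernel)

theorem dominatesParabolic_E6 :
    DominatesParabolic csE6 [0, 1, 2, 3, 4, 5] (longestWordD5 ++ cosetWordE6) :=
  dominatesParabolic_D5.append
    (R := cosetWordE6.inits ++ [0, 2, 3, 1, 4, 3, 2, 0, 5, 4, 3, 1].inits ++
      [0, 2, 3, 1, 4, 3, 2, 5, 4, 3, 1].inits)
    (by decide +kernel) (by decide +kernel)

theorem isConj_coxeterWord :
    IsConj (csE6.wordProd cosetWordE6) (csE6.wordProd [0, 2, 4, 5]) := by
  refine isConj_iff.mpr ⟨csE6.wordProd [0, 4, 3, 2, 1, 3, 4, 5, 3, 2, 0], ?_⟩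
  rw [mul_inv_eq_iff_eq_mul, ← csE6.wordProd_append, ← csE6.wordProd_append]
  exact wordProd_eq_of_reduceWord csE6 (by decide +kernel)

section RootAction

/-- The root lattice of type `E₆`, in coordinates with respect to the simple roots. -/
abbrev RootLatticeE6 := ℤ × ℤ × ℤ × ℤ × ℤ × ℤ

instance : DecidableEq RootLatticeE6 := instDecidableEqProd

/-- The action of the simple reflections on the root lattice. -/
def reflE6 : Fin 6 → RootLatticeE6 → RootLatticeE6
  | 0, (a, b, c, d, e, f) => (c - a, b, c, d, e, f)
  | 1, (a, b, c, d, e, f) => (a, d - b, c, d, e, f)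
  | 2, (a, b, c, d, e, f) => (a, b, a + d - c, d, e, f)
  | 3, (a, b, c, d, e, f) => (a, b, c, b + c + e - d, e, f)
  | 4, (a, b, c, d, e, f) => (a, b, c, d, d + f - e, f)
  | 5, (a, b, c, d, e, f) => (a, b, c, d, e, e - f)

theorem iterate_reflE6_comp (i j : Fin 6) (v : RootLatticeE6) :
    (reflE6 i ∘ reflE6 j)^[E₆ i j] v = v := by
  obtain ⟨a, b, c, d, e, f⟩ := v
  fin_cases i <;> fin_cases j <;> simp [E₆, reflE6] <;> (try constructor) <;> ring

theorem involutive_reflE6 (i : Fin 6) : Function.Involutive (reflE6 i) := fun v => by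
  simpa [(E₆).diagonal] using iterate_reflE6_comp i i v

theorem isLiftable_reflE6 :
    (E₆).IsLiftable fun i => (involutive_reflE6 i).toPerm := by
  intro i j
  ext1 v
  rw [← Equiv.Perm.iterate_eq_pow]
  exact iterate_reflE6_comp i j v

/-- The reflection representation of the Weyl group of type `E₆`. -/
def rootActionE6 : WE6 →* Equiv.Perm RootLatticeE6 := csE6.lift ⟨_, isLiftable_reflE6⟩

/-- The action of a word on the root lattice. -/
def wordAct (ω : List (Fin 6)) (v : RootLatticeE6) : RootLatticeE6 := ω.foldr reflE6 v

theorem rootActionE6_simple (i : Fin 6) (v : RootLatticeE6) :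
    rootActionE6 (csE6.simple i) v = reflE6 i v :=
  congrArg (· v) (csE6.lift_apply_simple isLiftable_reflE6 i)

theorem rootActionE6_wordProd (ω : List (Fin 6)) (v : RootLatticeE6) :
    rootActionE6 (csE6.wordProd ω) v = wordAct ω v := by
  induction ω with
  | nil => simp [wordAct]
  | cons i ω ih =>
    rw [csE6.wordProd_cons, map_mul, Equiv.Perm.mul_apply, rootActionE6_simple, ih]
    rfl

/-- The positive roots of type `E₆`. -/
def posRootsE6 : Finset RootLatticeE6 :=
  {(0, 0, 0, 0, 0, 1), (0, 0, 0, 0, 1, 0), (0, 0, 0, 1, 0, 0), (0, 0, 1, 0, 0, 0),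
    (0, 1, 0, 0, 0, 0), (1, 0, 0, 0, 0, 0), (0, 0, 0, 0, 1, 1), (0, 0, 0, 1, 1, 0),
    (0, 0, 1, 1, 0, 0), (0, 1, 0, 1, 0, 0), (1, 0, 1, 0, 0, 0), (0, 0, 0, 1, 1, 1),
    (0, 0, 1, 1, 1, 0), (0, 1, 0, 1, 1, 0), (0, 1, 1, 1, 0, 0), (1, 0, 1, 1, 0, 0),
    (0, 0, 1, 1, 1, 1), (0, 1, 0, 1, 1, 1), (0, 1, 1, 1, 1, 0), (1, 0, 1, 1, 1, 0),
    (1, 1, 1, 1, 0, 0), (0, 1, 1, 1, 1, 1), (0, 1, 1, 2, 1, 0), (1, 0, 1, 1, 1, 1),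
    (1, 1, 1, 1, 1, 0), (0, 1, 1, 2, 1, 1), (1, 1, 1, 1, 1, 1), (1, 1, 1, 2, 1, 0),
    (0, 1, 1, 2, 2, 1), (1, 1, 1, 2, 1, 1), (1, 1, 2, 2, 1, 0), (1, 1, 1, 2, 2, 1),
    (1, 1, 2, 2, 1, 1), (1, 1, 2, 2, 2, 1), (1, 1, 2, 3, 2, 1), (1, 2, 2, 3, 2, 1)}

/-- The simple roots of type `E₆`. -/
def simpleRootE6 : Fin 6 → RootLatticeE6
  | 0 => (1, 0, 0, 0, 0, 0)
  | 1 => (0, 1, 0, 0, 0, 0)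
  | 2 => (0, 0, 1, 0, 0, 0)
  | 3 => (0, 0, 0, 1, 0, 0)
  | 4 => (0, 0, 0, 0, 1, 0)
  | 5 => (0, 0, 0, 0, 0, 1)

theorem reflE6_mem_posRootsE6 : ∀ i, ∀ v ∈ posRootsE6,
    v = simpleRootE6 i ∨ reflE6 i v ∈ posRootsE6 := by
  decide +kernel

/-- The number of positive roots sent outside the positive roots is at most the length. -/
theorem card_inversions_le (ω : List (Fin 6)) :
    (posRootsE6.filter fun v => wordAct ω v ∉ posRootsE6).card ≤ ω.length := by
  induction ω with
  | nil => exact (Finset.card_eq_zero.mpr (Finset.filter_eq_empty_iff.mpr fun v hv h => h hv)).le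
  | cons i ω ih =>
    have hsub : (posRootsE6.filter fun v => wordAct (i :: ω) v ∉ posRootsE6) ⊆
        (posRootsE6.filter fun v => wordAct ω v ∉ posRootsE6) ∪
          posRootsE6.filter fun v => wordAct ω v = simpleRootE6 i := by
      intro v hv
      simp only [Finset.mem_union, Finset.mem_filter] at hv ⊢
      by_cases h : wordAct ω v ∈ posRootsE6
      · rcases reflE6_mem_posRootsE6 i _ h with h' | h'
        · exact .inr ⟨hv.1, h'⟩
        · exact absurd h' hv.2
      · exact .inl ⟨hv.1, h⟩
    have hone : (posRootsE6.filter fun v => wordAct ω v = simpleRootE6 i).card ≤ 1 := by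
      refine Finset.card_le_one.mpr fun a ha b hb => ?_
      refine (rootActionE6 (csE6.wordProd ω)).injective ?_
      rw [rootActionE6_wordProd, rootActionE6_wordProd, (Finset.mem_filter.mp ha).2,
        (Finset.mem_filter.mp hb).2]
    calc _ ≤ _ := Finset.card_le_card hsub
      _ ≤ _ := Finset.card_union_le _ _
      _ ≤ _ := by rw [List.length_cons]; omega

theorem isReduced_longestWordE6 : csE6.IsReduced (longestWordD5 ++ cosetWordE6) := by
  refine le_antisymm (csE6.length_wordProd_le _) ?_
  obtain ⟨ω, hω, h⟩ := csE6.exists_isReduced (csE6.wordProd (longestWordD5 ++ cosetWordE6))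
  rw [h, hω.eq]
  refine le_trans ?_ (card_inversions_le ω)
  simp_rw [← rootActionE6_wordProd, ← h, rootActionE6_wordProd]
  decide +kernel

/-- The `27` weights of a minuscule representation of type `E₆`, multiplied by `3`. -/
def weightsE6 : Finset RootLatticeE6 :=
  {(4, 3, 5, 6, 4, 2), (1, 3, 5, 6, 4, 2), (1, 3, 2, 6, 4, 2), (1, 3, 2, 3, 4, 2),
    (1, 3, 2, 3, 1, 2), (1, 3, 2, 3, 1, -1), (1, 0, 2, 3, 4, 2), (1, 0, 2, 3, 1, 2),
    (1, 0, 2, 3, 1, -1), (1, 0, 2, 0, 1, 2), (1, 0, 2, 0, 1, -1), (1, 0, 2, 0, -2, -1),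
    (1, 0, -1, 0, 1, 2), (1, 0, -1, 0, 1, -1), (1, 0, -1, 0, -2, -1), (1, 0, -1, -3, -2, -1),
    (1, -3, -1, -3, -2, -1), (-2, 0, -1, 0, 1, 2), (-2, 0, -1, 0, 1, -1), (-2, 0, -1, 0, -2, -1),
    (-2, 0, -1, -3, -2, -1), (-2, 0, -4, -3, -2, -1), (-2, -3, -1, -3, -2, -1),
    (-2, -3, -4, -3, -2, -1), (-2, -3, -4, -6, -2, -1), (-2, -3, -4, -6, -5, -1),
    (-2, -3, -4, -6, -5, -4)}

theorem rootActionE6_mem_weightsE6 (w : WE6) {v : RootLatticeE6} (hv : v ∈ weightsE6) :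
    rootActionE6 w v ∈ weightsE6 := by
  have hstable : ∀ i, ∀ v ∈ weightsE6, reflE6 i v ∈ weightsE6 := by decide +kernel
  induction w using csE6.simple_induction_left with
  | one => simpa using hv
  | mul_simple_left w i ih =>
    rw [map_mul, Equiv.Perm.mul_apply, rootActionE6_simple]
    exact hstable i _ ih

theorem IsConj.weightsE6_not_fixed {w w' : WE6} (h : IsConj w w')
    (hw : ∀ v ∈ weightsE6, rootActionE6 w v ≠ v) : ∀ v ∈ weightsE6, rootActionE6 w' v ≠ v := by
  obtain ⟨g, rfl⟩ := isConj_iff.mp h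
  intro v hv hfix
  refine hw _ (rootActionE6_mem_weightsE6 g⁻¹ hv) ?_
  apply (rootActionE6 g).injective
  simpa using hfix

/-- A word of length at most `4` that fixes no weight is a Coxeter word of the parabolic
subgroup of type `A₂ × A₂`. -/
theorem short_words_of_type_A2A2 : ∀ n ∈ Finset.range 5, ∀ ω : List.Vector (Fin 6) n,
    (∀ v ∈ weightsE6, wordAct ω.1 v ≠ v) →
      ω.1.Nodup ∧ ∀ j, j ∈ ω.1 ↔ j ∈ ({0, 2, 4, 5} : Finset (Fin 6)) := by
  decide +kernel

end RootAction

theorem isConj_coxeterWord_of_nodup (l : List (Fin 6)) (hl : l.Nodup)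
    (hmem : ∀ j : Fin 6, j ∈ l ↔ j ∈ ({0, 2, 4, 5} : Finset (Fin 6))) :
    IsConj (csE6.wordProd [0, 2, 4, 5]) (csE6.wordProd l) := by
  have hperm : l ∈ ([0, 2, 4, 5] : List (Fin 6)).permutations' := by
    rw [List.mem_permutations', List.perm_ext_iff_of_nodup hl (by decide)]
    intro j
    rw [hmem]
    simp
  have hconj : ∀ l ∈ ([0, 2, 4, 5] : List (Fin 6)).permutations',
      ∃ x ∈ ([[], [0], [4], [0, 4]] : List (List (Fin 6))),
        reduceWord E₆ ((x ++ l) ++ ([0, 2, 4, 5] ++ x).reverse) = [] := by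
    decide +kernel
  obtain ⟨x, -, hx⟩ := hconj l hperm
  have := wordProd_eq_of_reduceWord csE6 hx
  rw [csE6.wordProd_append, csE6.wordProd_append] at this
  exact (isConj_iff.mpr ⟨csE6.wordProd x, mul_inv_eq_iff_eq_mul.mpr this⟩).symm

/-- A word of length at most `4` for a conjugate of a Coxeter element of type `A₂ × A₂` is a
Coxeter word. -/
theorem coxeterWord_of_isConj {ω : List (Fin 6)} (hω : ω.length ≤ 4)
    (h : IsConj (csE6.wordProd [0, 2, 4, 5]) (csE6.wordProd ω)) :
    ω.Nodup ∧ ∀ j, j ∈ ω ↔ j ∈ ({0, 2, 4, 5} : Finset (Fin 6)) := by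
  refine short_words_of_type_A2A2 ω.length (by simp; omega) ⟨ω, rfl⟩ ?_
  have hfix : ∀ v ∈ weightsE6, wordAct [0, 2, 4, 5] v ≠ v := by decide +kernel
  simp only [← rootActionE6_wordProd] at hfix ⊢
  exact h.weightsE6_not_fixed hfix

theorem length_of_coxeterWord {l : List (Fin 6)} (hl : l.Nodup)
    (hmem : ∀ j : Fin 6, j ∈ l ↔ j ∈ ({0, 2, 4, 5} : Finset (Fin 6))) : l.length = 4 := by
  rw [← List.toFinset_card_of_nodup hl, show l.toFinset = {0, 2, 4, 5} by ext j; simp [hmem]]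
  rfl

theorem four_le_length_of_isConj {w : WE6} (h : IsConj (csE6.wordProd [0, 2, 4, 5]) w) :
    4 ≤ csE6.length w := by
  obtain ⟨ω, hω, rfl⟩ := csE6.exists_isReduced w
  rw [hω.eq]
  by_contra! hlt
  obtain ⟨hnodup, hmem⟩ := coxeterWord_of_isConj hlt.le h
  exact hlt.ne (length_of_coxeterWord hnodup hmem)

theorem eq_wordProd_longestWordE6 {w₀ : WE6} (hw₀ : ∀ v, csE6.length v ≤ csE6.length w₀) :
    w₀ = csE6.wordProd (longestWordD5 ++ cosetWordE6) := by
  refine (dominatesParabolic_E6 w₀ ?_).resolve_right ?_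
  · have huniv : {j : Fin 6 | j ∈ [0, 1, 2, 3, 4, 5]} = Set.univ :=
      Set.eq_univ_of_forall (by decide)
    rw [huniv, Set.image_univ, csE6.subgroup_closure_range_simple]
    trivial
  · rw [← isReduced_longestWordE6.eq]
    exact (hw₀ _).not_gt

theorem mem_paraE6_zero (w : WE6) : w ∈ paraE6 0 ↔
    w ∈ Subgroup.closure (csE6.simple '' {j | j ∈ [1, 2, 3, 4, 5]}) := by
  have hset : {j : Fin 6 | j ≠ 0} = {j | j ∈ [1, 2, 3, 4, 5]} := Set.ext (by decide)
  rw [paraE6, hset]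

theorem wordProd_longestWordD5_mem : csE6.wordProd longestWordD5 ∈ paraE6 0 := by
  refine list_prod_mem fun x hx => ?_
  obtain ⟨j, hj, rfl⟩ := List.mem_map.mp hx
  have hne : ∀ j ∈ longestWordD5, j ≠ 0 := by decide
  exact Subgroup.subset_closure ⟨j, hne j hj, rfl⟩

theorem eq_wordProd_longestWordD5 {w₁ : WE6} (hw₁ : w₁ ∈ paraE6 0)
    (hlen : csE6.length (csE6.wordProd longestWordD5) ≤ csE6.length w₁) :
    w₁ = csE6.wordProd longestWordD5 := by
  refine (dominatesParabolic_D5 w₁ ((mem_paraE6_zero w₁).mp hw₁)).resolve_right ?_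
  have hred : csE6.IsReduced longestWordD5 := isReduced_longestWordE6.take longestWordD5.length
  rw [← hred.eq]
  exact hlen.not_gt

theorem wordProd_longestWordD5_mul_self :
    csE6.wordProd longestWordD5 * csE6.wordProd longestWordD5 = 1 := by
  rw [mul_eq_one_iff_inv_eq]
  exact eq_wordProd_longestWordD5 (inv_mem wordProd_longestWordD5_mem) (csE6.length_inv _).ge

/-- In the Weyl group of type `E₆` (Bourbaki labels),
`w_{1,0}·w₀ = s₁s₃s₄s₅s₆s₂s₄s₅s₃s₄s₁s₃s₂s₄s₅s₆`, and the set of minimal length elements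
of the conjugacy class of `w_{1,0}·w₀` equals the set of Coxeter elements of the
standard parabolic subgroup `W_J`, `J = {1, 3, 5, 6}`; in particular the minimal length
in this conjugacy class is `4`. -/
theorem typeE6_w10_mul_w0
    (w₀ : WE6) (hw₀ : ∀ v : WE6, csE6.length v ≤ csE6.length w₀)
    (w₁ : WE6) (hw₁ : w₁ ∈ paraE6 0)
    (hw₁max : ∀ v ∈ paraE6 0, csE6.length v ≤ csE6.length w₁) :
    w₁ * w₀ = csE6.wordProd [0, 2, 3, 4, 5, 1, 3, 4, 2, 3, 0, 2, 1, 3, 4, 5] ∧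
    {w : WE6 | IsConj (w₁ * w₀) w ∧
        ∀ v : WE6, IsConj (w₁ * w₀) v → csE6.length w ≤ csE6.length v}
      = {w : WE6 | ∃ l : List (Fin 6), l.Nodup ∧
          (∀ j : Fin 6, j ∈ l ↔ j ∈ ({0, 2, 4, 5} : Finset (Fin 6))) ∧
          w = csE6.wordProd l} ∧
    sInf {k : ℕ | ∃ v : WE6, IsConj (w₁ * w₀) v ∧ k = csE6.length v} = 4 := by
  have hprod : w₁ * w₀ = csE6.wordProd cosetWordE6 := by
    rw [eq_wordProd_longestWordE6 hw₀,
      eq_wordProd_longestWordD5 hw₁ (hw₁max _ wordProd_longestWordD5_mem), csE6.wordProd_append,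
      ← mul_assoc, wordProd_longestWordD5_mul_self, one_mul]
  have hconj : ∀ v, IsConj (w₁ * w₀) v ↔ IsConj (csE6.wordProd [0, 2, 4, 5]) v := fun v => by
    rw [hprod]
    exact ⟨isConj_coxeterWord.symm.trans, isConj_coxeterWord.trans⟩
  have hlen : csE6.length (csE6.wordProd [0, 2, 4, 5]) = 4 :=
    le_antisymm (csE6.length_wordProd_le _) (four_le_length_of_isConj (IsConj.refl _))
  refine ⟨hprod, ?_, ?_⟩
  · ext w
    simp only [hconj, Set.mem_ofPred_eq]
    constructor
    · rintro ⟨hw, hmin⟩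
      obtain ⟨ω, hω, rfl⟩ := csE6.exists_isReduced w
      have hle := hmin _ (IsConj.refl _)
      rw [hlen, hω.eq] at hle
      obtain ⟨hnodup, hmem⟩ := coxeterWord_of_isConj hle hw
      exact ⟨ω, hnodup, hmem, rfl⟩
    · rintro ⟨l, hnodup, hmem, rfl⟩
      refine ⟨isConj_coxeterWord_of_nodup l hnodup hmem, fun v hv => ?_⟩
      calc csE6.length (csE6.wordProd l) ≤ l.length := csE6.length_wordProd_le l
        _ = 4 := length_of_coxeterWord hnodup hmem
        _ ≤ csE6.length v := four_le_length_of_isConj hv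
  · simp only [hconj]
    refine IsLeast.csInf_eq ⟨⟨_, IsConj.refl _, hlen.symm⟩, ?_⟩
    rintro _ ⟨v, hv, rfl⟩
    exact four_le_length_of_isConj hv
end
end

section
/- Let W be the Weyl group of type E_7 with simple reflections s_1, …, s_7 labeled as in Bourbaki. Then w_{7,0}·w_0 = s_7 s_6 s_5 s_4 s_3 s_2 s_4 s_5 s_6 s_7 s_1 s_3 s_4 s_5 s_6 s_2 s_4 s_5 s_3 s_4 s_1 s_3 s_2 s_4 s_5 s_6 s_7, and the set of elements of minimal length in the conjugacy class of w_{7,0}·w_0 is exactly {s_2·s_5·s_7}; in particular, the minimal length in this conjugacy class is 3. -/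
noncomputable section
open CoxeterMatrix

/-- The Weyl group of type `E₇`, given by its Coxeter presentation; the index `j : Fin 7`
corresponds to the Bourbaki label `j + 1`. -/
abbrev WE7 := (E₇).Group

/-- The canonical Coxeter system of type `E₇`. -/
def csE7 : CoxeterSystem E₇ WE7 := (E₇).toCoxeterSystem

/-- The standard parabolic subgroup of the type-`E₇` Weyl group generated by all simple
reflections except the one with (zero-based) index `i`. -/
def paraE7 (i : Fin 7) : Subgroup WE7 :=
  Subgroup.closure (csE7.simple '' {j : Fin 7 | j ≠ i})

namespace TypeE7

/-- The root lattice of type `E₇`, in coordinates with respect to the simple roots. -/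
abbrev RootLattice := Fin 7 → ℤ

/-- The simple roots. -/
def root (i : Fin 7) : RootLattice := Pi.single i 1

/-- The pairing with the `i`-th simple coroot. -/
def coroot (i : Fin 7) : RootLattice →ₗ[ℤ] ℤ :=
  (LinearMap.proj i).comp (Matrix.mulVecLin CartanMatrix.E₇)

/-- The simple reflections of the root lattice. -/
def refl (i : Fin 7) : Module.End ℤ RootLattice :=
  LinearMap.id - (coroot i).smulRight (root i)

theorem refl_apply (i : Fin 7) (v : RootLattice) : refl i v = v - coroot i v • root i := rfl

theorem coroot_root (i j : Fin 7) : coroot i (root j) = CartanMatrix.E₇ i j := by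
  simp [coroot, root]

theorem coroot_root_self (i : Fin 7) : coroot i (root i) = 2 := by
  rw [coroot_root]; revert i; decide

/-- Type `E₇` is simply laced. -/
theorem eq_or_cartan_eq (i j : Fin 7) : (i = j ∧ E₇ i j = 1) ∨
    (E₇ i j = 2 ∧ coroot i (root j) = 0 ∧ coroot j (root i) = 0) ∨
    (E₇ i j = 3 ∧ coroot i (root j) = -1 ∧ coroot j (root i) = -1) := by
  simp only [coroot_root]
  fin_cases i <;> fin_cases j <;> decide

theorem isLiftable_refl : (E₇).IsLiftable refl := by
  intro i j
  refine LinearMap.ext fun v ↦ ?_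
  have hi := coroot_root_self i
  have hj := coroot_root_self j
  rcases eq_or_cartan_eq i j with ⟨rfl, h⟩ | ⟨h, h₁, h₂⟩ | ⟨h, h₁, h₂⟩ <;>
    simp only [pow_succ, pow_zero, one_mul, Module.End.mul_apply, Module.End.one_apply,
      refl_apply, map_sub, map_smul, *] <;> module

/-- The action of the Weyl group on the root lattice. -/
def rep : WE7 →* Module.End ℤ RootLattice := csE7.lift ⟨refl, isLiftable_refl⟩

theorem rep_simple (i : Fin 7) : rep (csE7.simple i) = refl i :=
  csE7.lift_apply_simple isLiftable_refl i

theorem rep_mul_apply (w w' : WE7) (v : RootLattice) : rep (w * w') v = rep w (rep w' v) := by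
  rw [map_mul, Module.End.mul_apply]

theorem rep_inv_apply_self (w : WE7) (v : RootLattice) : rep w⁻¹ (rep w v) = v := by
  rw [← rep_mul_apply, inv_mul_cancel, map_one, Module.End.one_apply]

theorem root_ne_zero (i : Fin 7) : root i ≠ 0 := by
  simp [root]

theorem simple_mul_comm {i j : Fin 7} (h : E₇ i j = 2) :
    csE7.simple i * csE7.simple j = csE7.simple j * csE7.simple i := by
  have := csE7.simple_mul_simple_pow i j
  rw [h, pow_two] at this
  rw [eq_inv_of_mul_eq_one_left this, mul_inv_rev, csE7.inv_simple, csE7.inv_simple]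

theorem simple_braid {i j : Fin 7} (h : E₇ i j = 3) :
    csE7.simple i * csE7.simple j * csE7.simple i =
      csE7.simple j * csE7.simple i * csE7.simple j := by
  have := csE7.simple_mul_simple_pow i j
  rw [h, pow_succ, pow_two] at this
  have h' : csE7.simple i * csE7.simple j * csE7.simple i *
      (csE7.simple j * csE7.simple i * csE7.simple j) = 1 := by
    rw [← this]; group
  rw [eq_inv_of_mul_eq_one_left h']
  simp [mul_assoc]

theorem rep_root_nonneg (w : WE7) (i : Fin 7) (h : ¬ csE7.IsRightDescent w i) :
    0 ≤ rep w (root i) := by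
  induction hn : csE7.length w using Nat.strong_induction_on generalizing w i with
  | _ n ih =>
  subst hn
  by_cases hw : w = 1
  · subst hw
    rw [map_one, Module.End.one_apply]
    exact Pi.single_nonneg.2 zero_le_one
  obtain ⟨j, hj⟩ := csE7.exists_rightDescent_of_ne_one hw
  have hij : i ≠ j := by rintro rfl; exact h hj
  have hwi := csE7.not_isRightDescent_iff.1 h
  have hwj := csE7.isRightDescent_iff.1 hj
  obtain ⟨v, rfl⟩ : ∃ v, w = v * csE7.simple j := ⟨w * csE7.simple j, by simp⟩
  rw [csE7.simple_mul_simple_cancel_right] at hwj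
  have hvj : ¬ csE7.IsRightDescent v j := csE7.not_isRightDescent_iff.2 hwj.symm
  rcases eq_or_cartan_eq j i with ⟨h', -⟩ | ⟨hM, hc, -⟩ | ⟨hM, hc, hc'⟩
  · exact absurd h'.symm hij
  · have hvi : ¬ csE7.IsRightDescent v i := by
      intro hd
      rw [csE7.isRightDescent_iff] at hd
      rw [mul_assoc, simple_mul_comm hM, ← mul_assoc] at hwi
      have := csE7.length_mul_le (v * csE7.simple i) (csE7.simple j)
      rw [csE7.length_simple] at this
      omega
    rw [rep_mul_apply, rep_simple, refl_apply, hc, zero_smul, sub_zero]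
    exact ih _ (by omega) v i hvi rfl
  · by_cases hvi : csE7.IsRightDescent v i
    · have hvi' := csE7.isRightDescent_iff.1 hvi
      obtain ⟨u, rfl⟩ : ∃ u, v = u * csE7.simple i := ⟨v * csE7.simple i, by simp⟩
      rw [csE7.simple_mul_simple_cancel_right] at hvi'
      have huj : ¬ csE7.IsRightDescent u j := by
        intro hd
        rw [csE7.isRightDescent_iff] at hd
        rw [show u * csE7.simple i * csE7.simple j * csE7.simple i =
            u * csE7.simple j * csE7.simple i * csE7.simple j by
          simp only [mul_assoc] at *
          rw [← mul_assoc (csE7.simple i), ← simple_braid hM, mul_assoc]] at hwi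
        have h₁ := csE7.length_mul_le (u * csE7.simple j * csE7.simple i) (csE7.simple j)
        have h₂ := csE7.length_mul_le (u * csE7.simple j) (csE7.simple i)
        rw [csE7.length_simple] at h₁ h₂
        omega
      have key : refl i (refl j (root i)) = root j := by
        simp only [refl_apply, map_sub, map_smul, hc, hc', coroot_root_self]
        module
      rw [rep_mul_apply, rep_mul_apply, rep_simple, rep_simple, key]
      exact ih _ (by omega) u j huj rfl
    · have key : refl j (root i) = root i + root j := by
        simp only [refl_apply, hc]
        module
      rw [rep_mul_apply, rep_simple, key, map_add]
      exact add_nonneg (ih _ (by omega) v i hvi rfl) (ih _ (by omega) v j hvj rfl)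

theorem rep_root_nonpos {w : WE7} {i : Fin 7} (h : csE7.IsRightDescent w i) :
    rep w (root i) ≤ 0 := by
  have := rep_root_nonneg _ _ (csE7.isRightDescent_iff_not_isRightDescent_mul.1 h)
  have key : refl i (root i) = -root i := by
    simp only [refl_apply, coroot_root_self]
    module
  rwa [rep_mul_apply, rep_simple, key, map_neg, Left.nonneg_neg_iff] at this

theorem eq_one_of_rep_root_nonneg {w : WE7} (h : ∀ i, 0 ≤ rep w (root i)) : w = 1 := by
  by_contra hw
  obtain ⟨i, hi⟩ := csE7.exists_rightDescent_of_ne_one hw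
  have h0 := le_antisymm (rep_root_nonpos hi) (h i)
  have := rep_inv_apply_self w (root i)
  rw [h0, map_zero] at this
  exact root_ne_zero i this.symm

theorem ext_rep_root {w w' : WE7} (h : ∀ i, rep w (root i) = rep w' (root i)) : w = w' := by
  rw [← inv_mul_eq_one]
  refine eq_one_of_rep_root_nonneg fun i ↦ ?_
  rw [rep_mul_apply, ← h, rep_inv_apply_self]
  exact Pi.single_nonneg.2 zero_le_one

/-! ### Explicit computations -/

theorem rep_wordProd_apply (ω : List (Fin 7)) (v : RootLattice) :
    rep (csE7.wordProd ω) v = ω.foldr (fun i u ↦ refl i u) v := by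
  induction ω with
  | nil => simp
  | cons i ω ih => rw [csE7.wordProd_cons, rep_mul_apply, ih, rep_simple, List.foldr_cons]

theorem refl_vec (a b c d e f g : ℤ) :
    refl 0 ![a, b, c, d, e, f, g] = ![c - a, b, c, d, e, f, g] ∧
    refl 1 ![a, b, c, d, e, f, g] = ![a, d - b, c, d, e, f, g] ∧
    refl 2 ![a, b, c, d, e, f, g] = ![a, b, a + d - c, d, e, f, g] ∧
    refl 3 ![a, b, c, d, e, f, g] = ![a, b, c, b + c + e - d, e, f, g] ∧
    refl 4 ![a, b, c, d, e, f, g] = ![a, b, c, d, d + f - e, f, g] ∧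
    refl 5 ![a, b, c, d, e, f, g] = ![a, b, c, d, e, e + g - f, g] ∧
    refl 6 ![a, b, c, d, e, f, g] = ![a, b, c, d, e, f, f - g] := by
  refine ⟨?_, ?_, ?_, ?_, ?_, ?_, ?_⟩ <;> ext k <;> fin_cases k <;>
    simp [refl_apply, coroot, root, CartanMatrix.E₇, Matrix.mulVec, dotProduct,
      Fin.sum_univ_succ] <;> ring

theorem root_vec :
    root 0 = ![1, 0, 0, 0, 0, 0, 0] ∧ root 1 = ![0, 1, 0, 0, 0, 0, 0] ∧
    root 2 = ![0, 0, 1, 0, 0, 0, 0] ∧ root 3 = ![0, 0, 0, 1, 0, 0, 0] ∧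
    root 4 = ![0, 0, 0, 0, 1, 0, 0] ∧ root 5 = ![0, 0, 0, 0, 0, 1, 0] ∧
    root 6 = ![0, 0, 0, 0, 0, 0, 1] := by
  simp only [root]
  decide

/-- A word for the longest element of the parabolic subgroup of type `E₆`. -/
def longestWordE6 : List (Fin 7) :=
  [0, 3, 5, 1, 2, 4, 0, 3, 5, 1, 2, 4, 0, 3, 5, 1, 2, 4,
    0, 3, 5, 1, 2, 4, 0, 3, 5, 1, 2, 4, 0, 3, 5, 1, 2, 4]

/-- The word for `w_{7,0} * w₀`. -/
def cosetWord : List (Fin 7) :=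
  [6, 5, 4, 3, 2, 1, 3, 4, 5, 6, 0, 2, 3, 4, 5, 1, 3, 4, 2, 3, 0, 2, 1, 3, 4, 5, 6]

/-- A word for an element conjugating `w_{7,0} * w₀` to `s₂ s₅ s₇`. -/
def conjWord : List (Fin 7) := [5, 3, 4, 2, 3, 0, 2, 1, 3, 4, 5, 6]

theorem rep_longestWordE6_root (i : Fin 7) (hi : i ≠ 6) :
    ∃ j ≠ 6, rep (csE7.wordProd longestWordE6) (root i) = -root j := by
  refine ⟨![5, 1, 4, 3, 2, 0, 0] i, by revert i; decide, ?_⟩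
  rw [rep_wordProd_apply]
  fin_cases i <;> simp [longestWordE6, root_vec, refl_vec] at hi ⊢

theorem rep_longestWordE6_mul_cosetWord (v : RootLattice) :
    rep (csE7.wordProd longestWordE6 * csE7.wordProd cosetWord) v = -v := by
  suffices rep (csE7.wordProd longestWordE6 * csE7.wordProd cosetWord) = -1 by simp [this]
  refine (Pi.basisFun ℤ (Fin 7)).ext fun i ↦ ?_
  rw [Pi.basisFun_apply, ← root, ← csE7.wordProd_append, rep_wordProd_apply]
  fin_cases i <;> simp [longestWordE6, cosetWord, root_vec, refl_vec]

theorem conjWord_mul_cosetWord : csE7.wordProd conjWord * csE7.wordProd cosetWord =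
    csE7.simple 1 * csE7.simple 4 * csE7.simple 6 * csE7.wordProd conjWord := by
  have h : csE7.simple 1 * csE7.simple 4 * csE7.simple 6 = csE7.wordProd [1, 4, 6] := by
    simp [csE7.wordProd_cons, mul_assoc]
  rw [h, ← csE7.wordProd_append, ← csE7.wordProd_append]
  refine ext_rep_root fun i ↦ ?_
  rw [rep_wordProd_apply, rep_wordProd_apply]
  fin_cases i <;> simp [conjWord, cosetWord, root_vec, refl_vec]

/-! ### Longest elements -/

theorem longest_unique {w c : WE7} (hw : ∀ v, csE7.length v ≤ csE7.length w)
    (hc : ∀ v, rep c v = -v) : w = c := by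
  have hc2 : c * c = 1 := ext_rep_root fun i ↦ by simp [hc]
  have h : w * c = 1 := by
    refine eq_one_of_rep_root_nonneg fun i ↦ ?_
    rw [rep_mul_apply, hc, map_neg, Left.nonneg_neg_iff]
    exact rep_root_nonpos (lt_of_le_of_ne (hw _) (csE7.length_mul_simple_ne w i))
  exact mul_right_cancel (h.trans hc2.symm)

theorem rep_apply_of_mem_paraE7 {i : Fin 7} {w : WE7} (hw : w ∈ paraE7 i) (v : RootLattice) :
    rep w v i = v i := by
  induction hw using Subgroup.closure_induction generalizing v with
  | mem x hx =>
    obtain ⟨j, hj, rfl⟩ := hx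
    simp [rep_simple, refl_apply, root, Ne.symm hj]
  | one => simp
  | mul x y _ _ hx hy => rw [rep_mul_apply, hx, hy]
  | inv x _ hx => rw [← hx (rep x⁻¹ v), ← rep_mul_apply, mul_inv_cancel, map_one, Module.End.one_apply]

theorem wordProd_mem_paraE7 {i : Fin 7} {ω : List (Fin 7)} (h : i ∉ ω) :
    csE7.wordProd ω ∈ paraE7 i := by
  refine Subgroup.list_prod_mem _ fun x hx ↦ ?_
  obtain ⟨j, hj, rfl⟩ := List.mem_map.1 hx
  exact Subgroup.subset_closure ⟨j, fun hji ↦ h (hji ▸ hj), rfl⟩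

theorem longest_parabolic_mul {w : WE7} (hw : w ∈ paraE7 6)
    (hmax : ∀ v ∈ paraE7 6, csE7.length v ≤ csE7.length w) :
    w * csE7.wordProd longestWordE6 = 1 := by
  have hmem : w * csE7.wordProd longestWordE6 ∈ paraE7 6 :=
    mul_mem hw (wordProd_mem_paraE7 (by decide))
  refine eq_one_of_rep_root_nonneg fun i ↦ ?_
  by_cases hi : i = 6
  · subst hi
    apply rep_root_nonneg
    intro hd
    have := rep_root_nonpos hd 6
    rw [rep_apply_of_mem_paraE7 hmem] at this
    simp [root] at this
  · obtain ⟨j, hj, h⟩ := rep_longestWordE6_root i hi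
    rw [rep_mul_apply, h, map_neg, Left.nonneg_neg_iff]
    exact rep_root_nonpos (lt_of_le_of_ne
      (hmax _ (mul_mem hw (Subgroup.subset_closure ⟨j, hj, rfl⟩))) (csE7.length_mul_simple_ne w j))

/-! ### The conjugacy class of `s₂ s₅ s₇` -/

/-- The vector `α₂ + α₅ + α₇` spans the radical of the root lattice modulo `2`. -/
theorem exists_rep_radical (g : WE7) : ∃ u : RootLattice,
    rep g (root 1 + root 4 + root 6) = root 1 + root 4 + root 6 + (2 : ℤ) • u := by
  induction g using csE7.simple_induction_left with
  | one => exact ⟨0, by simp⟩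
  | mul_simple_left w i ih =>
    obtain ⟨u, hu⟩ := ih
    have heven : ∃ m, coroot i (root 1 + root 4 + root 6) = 2 * m := by
      simp only [map_add, coroot_root]
      revert i
      change ∀ i, (2 : ℤ) ∣ _
      decide
    obtain ⟨m, hm⟩ := heven
    refine ⟨refl i u - m • root i, ?_⟩
    rw [rep_mul_apply, hu, rep_simple, map_add, map_smul, refl_apply i (_ + _), hm]
    module

theorem mem_word_of_conj (g : WE7) {ω : List (Fin 7)} {k : Fin 7}
    (hk : k ∈ ([1, 4, 6] : List (Fin 7)))
    (h : csE7.wordProd ω * g = g * (csE7.simple 1 * csE7.simple 4 * csE7.simple 6)) : k ∈ ω := by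
  by_contra hω
  have hfix (v : RootLattice) :
      rep g v k = rep g (refl 1 (refl 4 (refl 6 v))) k := by
    rw [← rep_apply_of_mem_paraE7 (wordProd_mem_paraE7 hω) (rep g v), ← rep_mul_apply, h]
    simp only [rep_mul_apply, rep_simple]
  have hneg (j : Fin 7) (hj : refl 1 (refl 4 (refl 6 (root j))) = -root j) :
      rep g (root j) k = 0 := by
    have := hfix (root j)
    rw [hj, map_neg, Pi.neg_apply] at this
    omega
  have h1 := hneg 1 (by simp [root_vec, refl_vec])
  have h4 := hneg 4 (by simp [root_vec, refl_vec])
  have h6 := hneg 6 (by simp [root_vec, refl_vec])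
  obtain ⟨u, hu⟩ := exists_rep_radical g
  have hu' := congrFun hu k
  simp only [map_add, Pi.add_apply, h1, h4, h6, Pi.smul_apply, smul_eq_mul] at hu'
  have hone : root 1 k + root 4 k + root 6 k = 1 := by
    simp only [List.mem_cons, List.not_mem_nil, or_false] at hk
    rcases hk with rfl | rfl | rfl <;> simp [root]
  omega

theorem three_le_length {ω : List (Fin 7)} (h : ∀ k ∈ ([1, 4, 6] : List (Fin 7)), k ∈ ω) :
    3 ≤ ω.length :=
  (List.subperm_of_subset (by decide) h).length_le

theorem wordProd_eq_of_mem {ω : List (Fin 7)} (h : ∀ k ∈ ([1, 4, 6] : List (Fin 7)), k ∈ ω)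
    (hω : ω.length ≤ 3) :
    csE7.wordProd ω = csE7.simple 1 * csE7.simple 4 * csE7.simple 6 := by
  have hperm : List.Perm [1, 4, 6] ω :=
    (List.subperm_of_subset (by decide) h).perm_of_length_le hω
  have h14 : csE7.simple 1 * csE7.simple 4 = _ := simple_mul_comm (by decide)
  have h16 : csE7.simple 1 * csE7.simple 6 = _ := simple_mul_comm (by decide)
  have h46 : csE7.simple 4 * csE7.simple 6 = _ := simple_mul_comm (by decide)
  have hprod := (hperm.map csE7.simple).prod_eq' (by simp [Commute, SemiconjBy, h14, h16, h46])
  rw [CoxeterSystem.wordProd, ← hprod]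
  simp [mul_assoc]

theorem exists_word_of_isConj {w : WE7}
    (h : IsConj (csE7.simple 1 * csE7.simple 4 * csE7.simple 6) w) :
    ∃ ω, w = csE7.wordProd ω ∧ ω.length = csE7.length w ∧
      ∀ k ∈ ([1, 4, 6] : List (Fin 7)), k ∈ ω := by
  obtain ⟨g, rfl⟩ := isConj_iff.1 h
  obtain ⟨ω, hred, hω⟩ := csE7.exists_isReduced
    (g * (csE7.simple 1 * csE7.simple 4 * csE7.simple 6) * g⁻¹)
  refine ⟨ω, hω, by rw [hω, hred.eq], fun k hk ↦ mem_word_of_conj g hk ?_⟩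
  rw [← hω, inv_mul_cancel_right]

theorem three_le_length_of_isConj {w : WE7}
    (h : IsConj (csE7.simple 1 * csE7.simple 4 * csE7.simple 6) w) : 3 ≤ csE7.length w := by
  obtain ⟨ω, -, hlen, hmem⟩ := exists_word_of_isConj h
  exact hlen ▸ three_le_length hmem

theorem eq_of_isConj_of_length_le {w : WE7}
    (h : IsConj (csE7.simple 1 * csE7.simple 4 * csE7.simple 6) w) (hw : csE7.length w ≤ 3) :
    w = csE7.simple 1 * csE7.simple 4 * csE7.simple 6 := by
  obtain ⟨ω, rfl, hlen, hmem⟩ := exists_word_of_isConj h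
  exact wordProd_eq_of_mem hmem (hlen ▸ hw)

theorem length_simple_mul_simple_mul_simple :
    csE7.length (csE7.simple 1 * csE7.simple 4 * csE7.simple 6) = 3 := by
  refine le_antisymm ?_ (three_le_length_of_isConj (IsConj.refl _))
  simpa [csE7.wordProd_cons, mul_assoc] using csE7.length_wordProd_le [1, 4, 6]

end TypeE7

/-- In the Weyl group of type `E₇` (Bourbaki labels),
`w_{7,0}·w₀ = s₇s₆s₅s₄s₃s₂s₄s₅s₆s₇s₁s₃s₄s₅s₆s₂s₄s₅s₃s₄s₁s₃s₂s₄s₅s₆s₇`, and the set of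
minimal length elements of the conjugacy class of `w_{7,0}·w₀` is exactly
`{s₂·s₅·s₇}`; in particular the minimal length in this conjugacy class is `3`. -/
theorem typeE7_w70_mul_w0
    (w₀ : WE7) (hw₀ : ∀ v : WE7, csE7.length v ≤ csE7.length w₀)
    (w₇ : WE7) (hw₇ : w₇ ∈ paraE7 6)
    (hw₇max : ∀ v ∈ paraE7 6, csE7.length v ≤ csE7.length w₇) :
    w₇ * w₀ = csE7.wordProd
      [6, 5, 4, 3, 2, 1, 3, 4, 5, 6, 0, 2, 3, 4, 5, 1, 3, 4, 2, 3, 0, 2, 1, 3, 4, 5, 6] ∧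
    {w : WE7 | IsConj (w₇ * w₀) w ∧
        ∀ v : WE7, IsConj (w₇ * w₀) v → csE7.length w ≤ csE7.length v}
      = {csE7.simple 1 * csE7.simple 4 * csE7.simple 6} ∧
    csE7.length (csE7.simple 1 * csE7.simple 4 * csE7.simple 6) = 3 := by
  have hlong := TypeE7.longest_unique hw₀ TypeE7.rep_longestWordE6_mul_cosetWord
  have hx : w₇ * w₀ = csE7.wordProd TypeE7.cosetWord := by
    rw [hlong, ← mul_assoc, TypeE7.longest_parabolic_mul hw₇ hw₇max, one_mul]
  have hconj : IsConj (w₇ * w₀) (csE7.simple 1 * csE7.simple 4 * csE7.simple 6) := by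
    rw [hx, isConj_iff]
    exact ⟨csE7.wordProd TypeE7.conjWord,
      mul_inv_eq_of_eq_mul TypeE7.conjWord_mul_cosetWord⟩
  refine ⟨hx, Set.ext fun w ↦ ⟨fun ⟨hw, hmin⟩ ↦ ?_, ?_⟩,
    TypeE7.length_simple_mul_simple_mul_simple⟩
  · have := hmin _ hconj
    rw [TypeE7.length_simple_mul_simple_mul_simple] at this
    exact TypeE7.eq_of_isConj_of_length_le (hconj.symm.trans hw) this
  · rintro rfl
    refine ⟨hconj, fun v hv ↦ ?_⟩
    rw [TypeE7.length_simple_mul_simple_mul_simple]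
    exact TypeE7.three_le_length_of_isConj (hconj.symm.trans hv)
end
end

section
/- The identity element lies in the σ₀-twisted conjugacy class of w_{1,0}·w_0 in each of the following cases, i.e., in each case there exists x ∈ W with w_{1,0}·w_0 = x·σ₀(x)⁻¹: (a) W of type D_n (n ≥ 4) and σ₀ the diagram automorphism exchanging s_{n−1} and s_n and fixing the other simple reflections; (b) W of type D_4 and σ₀ the triality diagram automorphism sending s_1 ↦ s_3 ↦ s_4 ↦ s_1 and fixing s_2; (c) W of type E_6 and σ₀ the diagram automorphism exchanging s_1 ↔ s_6 and s_3 ↔ s_5 and fixing s_2 and s_4. -/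
noncomputable section

open CoxeterMatrix

namespace CoxeterSystem

open List

variable {B W : Type*} [Group W] {M : CoxeterMatrix B} (cs : CoxeterSystem M W)

theorem simple_mul_simple_comm {i j : B} (h : M i j = 2) :
    cs.simple i * cs.simple j = cs.simple j * cs.simple i := by
  have := cs.simple_mul_simple_pow i j
  rw [h, pow_two, mul_eq_one_iff_eq_inv] at this
  simpa using this

theorem simple_braid {i j : B} (h : M i j = 3) :
    cs.simple i * cs.simple j * cs.simple i = cs.simple j * cs.simple i * cs.simple j := by
  have := cs.simple_mul_simple_pow i j
  rw [h, pow_succ, pow_two, mul_assoc, mul_assoc, mul_eq_one_iff_eq_inv] at this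
  simp only [mul_inv_rev, inv_simple] at this
  simpa [mul_assoc] using congrArg (cs.simple i * cs.simple j * · * cs.simple i * cs.simple i) this

section Inversions

open Classical in
/-- The action of a simple reflection on `W × ℤ/2`: conjugation on the first factor, with a
change of sign exactly at the reflection itself. -/
def signedConj (i : B) : Function.End (W × ZMod 2) := fun p =>
  (cs.simple i * p.1 * cs.simple i, p.2 + if p.1 = cs.simple i then 1 else 0)

open Classical in
theorem prod_map_signedConj_apply (ω : List B) (t : W) (e : ZMod 2) :
    (ω.map cs.signedConj).prod (t, e) =
      (cs.wordProd ω * t * (cs.wordProd ω)⁻¹, e + (cs.rightInvSeq ω).count t) := by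
  induction ω with
  | nil => simp; rfl
  | cons i ω ih =>
    rw [List.map_cons, List.prod_cons]
    change cs.signedConj i ((ω.map cs.signedConj).prod (t, e)) = _
    rw [ih]
    have key : cs.wordProd ω * t * (cs.wordProd ω)⁻¹ = cs.simple i ↔
        (cs.wordProd ω)⁻¹ * cs.simple i * cs.wordProd ω = t := by
      constructor <;> intro h
      · rw [← h]; group
      · rw [← h]; group
    simp only [signedConj, rightInvSeq, List.count_cons, wordProd_cons, mul_inv_rev, inv_simple,
      beq_iff_eq, key]
    refine Prod.ext (by simp [mul_assoc]) ?_
    split_ifs <;> simp [add_assoc]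

open Classical in
theorem signedConj_mul_signedConj_pow_apply (i j : B) (k : ℕ) (t : W) (e : ZMod 2) :
    ((cs.signedConj i * cs.signedConj j) ^ k) (t, e) =
      ((cs.simple i * cs.simple j) ^ k * t * ((cs.simple i * cs.simple j) ^ k)⁻¹,
        e + ∑ l ∈ Finset.range (2 * k),
          if t = (cs.simple j * cs.simple i) ^ l * cs.simple j then 1 else 0) := by
  induction k generalizing t e with
  | zero => simp; rfl
  | succ k ih =>
    rw [pow_succ]
    change ((cs.signedConj i * cs.signedConj j) ^ k)
      (cs.signedConj i (cs.signedConj j (t, e))) = _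
    simp only [signedConj]
    rw [ih]
    refine Prod.ext (by simp [mul_assoc, pow_succ]) ?_
    have shift (l : ℕ) : cs.simple i * (cs.simple j * t * cs.simple j) * cs.simple i =
        (cs.simple j * cs.simple i) ^ l * cs.simple j ↔
        t = (cs.simple j * cs.simple i) ^ (l + 1 + 1) * cs.simple j := by
      rw [pow_succ, pow_succ', mul_assoc, mul_assoc]
      constructor <;> intro h
      · have := congrArg (fun g => cs.simple j * cs.simple i * g * cs.simple i * cs.simple j) h
        simpa [mul_assoc] using this
      · rw [h]; simp [mul_assoc]
    have first : cs.simple j * t * cs.simple j = cs.simple i ↔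
        t = (cs.simple j * cs.simple i) ^ (0 + 1) * cs.simple j := by
      constructor <;> intro h
      · rw [← h]; simp [mul_assoc]
      · rw [h]; simp [mul_assoc]
    simp only [shift, first]
    rw [show 2 * (k + 1) = 2 * k + 1 + 1 by ring, Finset.sum_range_succ', Finset.sum_range_succ']
    simp only [pow_zero, one_mul]
    ring

theorem isLiftable_signedConj : M.IsLiftable cs.signedConj := by
  classical
  intro i j
  funext ⟨t, e⟩
  rw [signedConj_mul_signedConj_pow_apply, two_mul, Finset.sum_range_add]
  simp only [pow_add, simple_mul_simple_pow, simple_mul_simple_pow', one_mul, inv_one, mul_one,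
    CharTwo.add_self_eq_zero, add_zero]
  rfl

/-- The parity of the number of occurrences of `t` in the inversion sequence of any word
for `w`. -/
def inversionParity (w t : W) : ZMod 2 :=
  (cs.lift ⟨cs.signedConj, cs.isLiftable_signedConj⟩ w (t, 0)).2

open Classical in
theorem lift_signedConj_wordProd_apply (ω : List B) (t : W) (e : ZMod 2) :
    cs.lift ⟨cs.signedConj, cs.isLiftable_signedConj⟩ (cs.wordProd ω) (t, e) =
      (cs.wordProd ω * t * (cs.wordProd ω)⁻¹, e + (cs.rightInvSeq ω).count t) := by
  rw [← prod_map_signedConj_apply, wordProd, map_list_prod, List.map_map]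
  have : ⇑(cs.lift ⟨cs.signedConj, cs.isLiftable_signedConj⟩) ∘ cs.simple = cs.signedConj :=
    funext fun i => cs.lift_apply_simple cs.isLiftable_signedConj i
  rw [this]

open Classical in
theorem inversionParity_wordProd (ω : List B) (t : W) :
    cs.inversionParity (cs.wordProd ω) t = (cs.rightInvSeq ω).count t := by
  simp [inversionParity, lift_signedConj_wordProd_apply]

theorem inversionParity_mul (w v t : W) :
    cs.inversionParity (w * v) t =
      cs.inversionParity v t + cs.inversionParity w (v * t * v⁻¹) := by
  classical
  obtain ⟨ω, rfl⟩ := cs.wordProd_surjective w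
  obtain ⟨ν, rfl⟩ := cs.wordProd_surjective v
  rw [inversionParity, map_mul]
  change (cs.lift ⟨cs.signedConj, cs.isLiftable_signedConj⟩ (cs.wordProd ω)
    (cs.lift ⟨cs.signedConj, cs.isLiftable_signedConj⟩ (cs.wordProd ν) (t, 0))).2 = _
  rw [lift_signedConj_wordProd_apply, lift_signedConj_wordProd_apply]
  simp [inversionParity_wordProd]

@[simp]
theorem inversionParity_one (t : W) : cs.inversionParity 1 t = 0 := by
  simpa using cs.inversionParity_wordProd [] t

theorem inversionParity_inv (w t : W) :
    cs.inversionParity w⁻¹ t = cs.inversionParity w (w⁻¹ * t * w) := by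
  have := cs.inversionParity_mul w w⁻¹ t
  rw [mul_inv_cancel, inversionParity_one, inv_inv] at this
  exact (CharTwo.add_eq_zero.1 this.symm)

open Classical in
theorem inversionParity_simple (i : B) (t : W) :
    cs.inversionParity (cs.simple i) t = if t = cs.simple i then 1 else 0 := by
  have := cs.inversionParity_wordProd [i] t
  simp only [wordProd_singleton, rightInvSeq_singleton, List.count_singleton, beq_iff_eq] at this
  rw [this]
  simp [eq_comm]

variable {cs} in
theorem IsReflection.inversionParity_self {t : W} (ht : cs.IsReflection t) :
    cs.inversionParity t t = 1 := by
  obtain ⟨w, i, rfl⟩ := ht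
  have h := cs.inversionParity_inv w (w * cs.simple i * w⁻¹)
  simp [mul_assoc] at h
  simp [mul_assoc, inversionParity_mul, inversionParity_simple, h]
  grind [CharTwo.add_self_eq_zero]

variable {cs} in
theorem IsReflection.inversionParity_eq_one_iff {t : W} (ht : cs.IsReflection t) (w : W) :
    cs.inversionParity w t = 1 ↔ cs.length (w * t) < cs.length w := by
  classical
  have lt_of_eq_one (v : W) (hv : cs.inversionParity v t = 1) :
      cs.length (v * t) < cs.length v := by
    obtain ⟨ω, hω, rfl⟩ := cs.exists_isReduced v
    rw [inversionParity_wordProd] at hv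
    refine (cs.isRightInversion_of_mem_rightInvSeq hω (?_ : t ∈ _)).2
    by_contra hmem
    simp [List.count_eq_zero_of_not_mem hmem] at hv
  refine ⟨lt_of_eq_one w, fun h => ?_⟩
  by_contra hne
  have hzero : cs.inversionParity w t = 0 := by
    generalize cs.inversionParity w t = a at hne
    revert a; decide
  have := lt_of_eq_one (w * t) (by
    rw [inversionParity_mul, ht.inversionParity_self, mul_inv_cancel_right, hzero, add_zero])
  rw [mul_assoc, ht.mul_self, mul_one] at this
  omega

variable {cs} in
theorem IsReflection.inversionParity_eq_zero_iff {t : W} (ht : cs.IsReflection t) (w : W) :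
    cs.inversionParity w t = 0 ↔ cs.length w < cs.length (w * t) := by
  have h1 := ht.inversionParity_eq_one_iff w
  have h2 := ht.length_mul_left_ne w
  have h3 : cs.inversionParity w t = 0 ↔ ¬ cs.inversionParity w t = 1 := by
    generalize cs.inversionParity w t = a
    revert a; decide
  rw [h3, h1]
  omega

theorem eq_one_of_inversionParity_simple_eq_zero {w : W}
    (h : ∀ i, cs.inversionParity w (cs.simple i) = 0) : w = 1 := by
  by_contra hw
  obtain ⟨i, hi⟩ := cs.exists_rightDescent_of_ne_one hw
  have := ((cs.isReflection_simple i).inversionParity_eq_zero_iff w).1 (h i)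
  exact lt_asymm hi this

end Inversions

section Longest

variable {cs}

/-- A longest element is the only element having every simple reflection as a descent. -/
theorem eq_longest_of_forall_isRightDescent {w₀ w : W} (h₀ : ∀ v, cs.length v ≤ cs.length w₀)
    (h : ∀ i, cs.IsRightDescent w i) : w = w₀ := by
  rw [← inv_mul_eq_one, ← inv_eq_one, mul_inv_rev, inv_inv]
  refine cs.eq_one_of_inversionParity_simple_eq_zero fun i => ?_
  have hw := ((cs.isReflection_simple i).inversionParity_eq_one_iff w).2 (h i)
  have hr := (cs.isReflection_simple i).conj (w₀⁻¹ * w)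
  have hw₀ : cs.inversionParity w₀ (w₀⁻¹ * w * cs.simple i * (w₀⁻¹ * w)⁻¹) = 1 :=
    (hr.inversionParity_eq_one_iff w₀).2
      (lt_of_le_of_ne (h₀ _) (hr.length_mul_left_ne w₀))
  have hmul := cs.inversionParity_mul w₀ (w₀⁻¹ * w) (cs.simple i)
  rw [mul_inv_cancel_left, hw, hw₀] at hmul
  simpa using hmul

variable {J : Set B}

theorem inversionParity_eq_zero_of_notMem_parabolic {w r : W}
    (hw : w ∈ Subgroup.closure (cs.simple '' J)) (hr : r ∉ Subgroup.closure (cs.simple '' J)) :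
    cs.inversionParity w r = 0 := by
  classical
  induction hw using Subgroup.closure_induction generalizing r with
  | mem x hx =>
    obtain ⟨j, hj, rfl⟩ := hx
    rw [inversionParity_simple, if_neg]
    rintro rfl
    exact hr (Subgroup.subset_closure ⟨j, hj, rfl⟩)
  | one => simp
  | mul x y hx hy ihx ihy =>
    rw [inversionParity_mul, ihy hr, ihx, add_zero]
    rwa [Subgroup.mul_mem_cancel_right _ (inv_mem hy), Subgroup.mul_mem_cancel_left _ hy]
  | inv x hx ih =>
    rw [inversionParity_inv, ih]
    rwa [Subgroup.mul_mem_cancel_right _ hx, Subgroup.mul_mem_cancel_left _ (inv_mem hx)]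

theorem inversionParity_parabolic_longest_eq_one {w₁ r : W}
    (hw₁ : w₁ ∈ Subgroup.closure (cs.simple '' J))
    (h₁ : ∀ v ∈ Subgroup.closure (cs.simple '' J), cs.length v ≤ cs.length w₁)
    (hr : cs.IsReflection r)
    (hrJ : r ∈ Subgroup.closure (cs.simple '' J)) : cs.inversionParity w₁ r = 1 :=
  (hr.inversionParity_eq_one_iff w₁).2
    (lt_of_le_of_ne (h₁ _ (mul_mem hw₁ hrJ)) (hr.length_mul_left_ne w₁))

theorem parabolic_longest_mul_self {w₁ : W}
    (hw₁ : w₁ ∈ Subgroup.closure (cs.simple '' J))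
    (h₁ : ∀ v ∈ Subgroup.closure (cs.simple '' J), cs.length v ≤ cs.length w₁) :
    w₁ * w₁ = 1 := by
  refine cs.eq_one_of_inversionParity_simple_eq_zero fun i => ?_
  have hs := cs.isReflection_simple i
  have hmem : w₁ * cs.simple i * w₁⁻¹ ∈ Subgroup.closure (cs.simple '' J) ↔
      cs.simple i ∈ Subgroup.closure (cs.simple '' J) := by
    rw [Subgroup.mul_mem_cancel_right _ (inv_mem hw₁), Subgroup.mul_mem_cancel_left _ hw₁]
  rw [inversionParity_mul]
  by_cases hi : cs.simple i ∈ Subgroup.closure (cs.simple '' J)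
  · rw [inversionParity_parabolic_longest_eq_one hw₁ h₁ hs hi,
      inversionParity_parabolic_longest_eq_one hw₁ h₁ (hs.conj w₁) (hmem.2 hi),
      CharTwo.add_self_eq_zero]
  · rw [inversionParity_eq_zero_of_notMem_parabolic hw₁ hi,
      inversionParity_eq_zero_of_notMem_parabolic hw₁ (mt hmem.1 hi), add_zero]

/-- Let `H` be a function on the cosets `W_J \ W` vanishing at the trivial coset and
growing by at most one along each simple reflection. If the length of `t` is at most
`H t` and `t` conjugates all simple reflections but one into `W_J`, then `t` is the
quotient of the longest elements of `W_J` and of `W`. -/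
theorem parabolic_longest_mul_longest_eq {w₀ w₁ : W}
    (hw₁ : w₁ ∈ Subgroup.closure (cs.simple '' J))
    (h₁ : ∀ v ∈ Subgroup.closure (cs.simple '' J), cs.length v ≤ cs.length w₁)
    (h₀ : ∀ v, cs.length v ≤ cs.length w₀)
    (t : W) (i₁ : B) (H : W → ℕ) (H_one : H 1 = 0)
    (H_mul_simple : ∀ w i, H (w * cs.simple i) ≤ H w + 1)
    (H_simple_mul : ∀ j ∈ J, ∀ w, H (cs.simple j * w) = H w)
    (ht : t ≠ 1) (length_le : cs.length t ≤ H t)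
    (conj_mem : ∀ j ≠ i₁, t * cs.simple j * t⁻¹ ∈ Subgroup.closure (cs.simple '' J)) :
    w₁ * w₀ = t := by
  have H_le (w : W) : H w ≤ cs.length w := by
    obtain ⟨ω, hω, rfl⟩ := cs.exists_isReduced w
    rw [hω.eq]
    clear hω
    induction ω using List.reverseRecOn with
    | nil => simp [H_one]
    | append_singleton ω i ih =>
      rw [wordProd_append, wordProd_singleton]
      have := H_mul_simple (cs.wordProd ω) i
      simp only [List.length_append, List.length_singleton]
      omega
  have H_mul (u : W) (hu : u ∈ Subgroup.closure (cs.simple '' J)) : ∀ w, H (u * w) = H w := by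
    induction hu using Subgroup.closure_induction with
    | mem x hx =>
      obtain ⟨j, hj, rfl⟩ := hx
      exact H_simple_mul j hj
    | one => simp
    | mul x y _ _ ihx ihy => simp [mul_assoc, ihx, ihy]
    | inv x _ ih => intro w; simpa using (ih (x⁻¹ * w)).symm
  have not_descent (j : B)
      (hj : t * cs.simple j * t⁻¹ ∈ Subgroup.closure (cs.simple '' J)) :
      ¬ cs.IsRightDescent t j := by
    have h := H_mul _ hj t
    rw [inv_mul_cancel_right] at h
    have := H_le (t * cs.simple j)
    unfold IsRightDescent
    omega
  have descent : cs.IsRightDescent t i₁ := by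
    obtain ⟨i, hi⟩ := cs.exists_rightDescent_of_ne_one ht
    by_cases h : i = i₁
    · exact h ▸ hi
    · exact absurd hi (not_descent i (conj_mem i h))
  have key : w₁ * t = w₀ := by
    refine eq_longest_of_forall_isRightDescent h₀ fun j => ?_
    have hs := cs.isReflection_simple j
    refine (hs.inversionParity_eq_one_iff _).1 ?_
    rw [inversionParity_mul]
    by_cases hj : t * cs.simple j * t⁻¹ ∈ Subgroup.closure (cs.simple '' J)
    · rw [inversionParity_parabolic_longest_eq_one hw₁ h₁ (hs.conj t) hj,
        (hs.inversionParity_eq_zero_iff t).2, zero_add]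
      exact lt_of_le_of_ne (not_lt.1 (not_descent j hj)) (hs.length_mul_left_ne t).symm
    · obtain rfl : j = i₁ := by_contra fun h => hj (conj_mem j h)
      rw [inversionParity_eq_zero_of_notMem_parabolic hw₁ hj, add_zero]
      exact (hs.inversionParity_eq_one_iff t).2 descent
  rw [← key, ← mul_assoc, parabolic_longest_mul_self hw₁ h₁, one_mul]

end Longest

end CoxeterSystem

theorem CoxeterMatrix.isLiftable_of_braid {B G : Type*} [Monoid G] {M : CoxeterMatrix B} {f : B → G}
    (hself : ∀ i, f i * f i = 1)
    (hbraid : ∀ i j, i ≠ j → M i j = 2 ∧ f i * f j = f j * f i ∨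
      M i j = 3 ∧ f i * f j * f i = f j * f i * f j) : M.IsLiftable f := by
  intro i j
  by_cases hij : i = j
  · subst hij
    simp [hself]
  · rcases hbraid i j hij with ⟨hM, h⟩ | ⟨hM, h⟩ <;> rw [hM]
    · rw [pow_two, ← mul_assoc, h, mul_assoc (f j), hself, mul_one, hself]
    · rw [pow_succ, pow_two, ← mul_assoc, ← mul_assoc, h, mul_assoc (f j * f i), hself, mul_one,
        mul_assoc (f j), hself, mul_one, hself]

namespace CoxeterSystem

variable {B W : Type*} [Group W] {M : CoxeterMatrix B} (cs : CoxeterSystem M W)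

section BraidMoves

variable [DecidableEq B]

/-- Apply the relation between two simple reflections at position `k` of a word, if there is
one of order at most `3`. -/
def relationMove (M : CoxeterMatrix B) : List B → ℕ → List B
  | i :: j :: l, 0 =>
    if i = j then l
    else if M i j = 2 then j :: i :: l
    else match l with
      | k :: l' => if M i j = 3 ∧ k = i then j :: i :: j :: l' else i :: j :: k :: l'
      | [] => [i, j]
  | i :: l, k + 1 => i :: relationMove M l k
  | l, _ => l

theorem wordProd_relationMove (ω : List B) (k : ℕ) :
    cs.wordProd (relationMove M ω k) = cs.wordProd ω := by
  fun_induction relationMove M ω k with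
  | case1 => simp [wordProd_cons]
  | case2 i j l _ h =>
    rw [wordProd_cons, wordProd_cons, wordProd_cons, wordProd_cons, ← mul_assoc, ← mul_assoc,
      cs.simple_mul_simple_comm h]
  | case3 i j _ _ k l' h =>
    obtain ⟨h, rfl⟩ := h
    simp only [wordProd_cons, ← mul_assoc]
    rw [cs.simple_braid h]
  | case4 => rfl
  | case5 => rfl
  | case6 i l k ih => rw [wordProd_cons, wordProd_cons, ih]
  | case7 => rfl

theorem wordProd_foldl_relationMove (ω : List B) (ks : List ℕ) :
    cs.wordProd (ks.foldl (relationMove M) ω) = cs.wordProd ω := by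
  induction ks generalizing ω with
  | nil => rfl
  | cons k ks ih => rw [List.foldl_cons, ih, wordProd_relationMove]

end BraidMoves

/-- The height function of `parabolic_longest_mul_longest_eq` is read off here from an
action of the simple reflections on a set `X` with a base point fixed by `J`. -/
theorem parabolic_longest_mul_longest_eq_wordProd {cs : CoxeterSystem M W} {J : Set B} {w₀ w₁ : W}
    (h₀ : ∀ v, cs.length v ≤ cs.length w₀)
    (hw₁ : w₁ ∈ Subgroup.closure (cs.simple '' J))
    (h₁ : ∀ v ∈ Subgroup.closure (cs.simple '' J), cs.length v ≤ cs.length w₁)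
    {X : Type*} {f : B → Function.End X} (hf : M.IsLiftable f) (p : X)
    (hp : ∀ j ∈ J, f j p = p) (h : X → ℕ) (h_zero : h p = 0)
    (h_step : ∀ i x, h (f i x) ≤ h x + 1)
    (ω : List B) (hω : ω ≠ []) (hω_le : ω.length ≤ h (ω.foldl (fun x i => f i x) p)) (i₁ : B)
    (conj_mem : ∀ j ≠ i₁, cs.wordProd ω * cs.simple j * (cs.wordProd ω)⁻¹ ∈
      Subgroup.closure (cs.simple '' J)) :
    w₁ * w₀ = cs.wordProd ω := by
  let φ : W →* Function.End X := cs.lift ⟨f, hf⟩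
  have φ_simple (i : B) : φ (cs.simple i) = f i := cs.lift_apply_simple hf i
  have φ_mul (u v : W) (x : X) : φ (u * v) x = φ u (φ v x) := by
    rw [map_mul]; rfl
  have φ_word (ν : List B) (x : X) :
      φ (cs.wordProd ν)⁻¹ x = ν.foldl (fun x i => f i x) x := by
    induction ν generalizing x with
    | nil => simp; rfl
    | cons i ν ih =>
      rw [wordProd_cons, mul_inv_rev, inv_simple, φ_mul, ih, φ_simple, List.foldl_cons]
  have H_one : h (φ 1⁻¹ p) = 0 := by rw [inv_one, map_one]; exact h_zero
  have H_word : ω.length ≤ h (φ (cs.wordProd ω)⁻¹ p) := by rwa [φ_word]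
  refine parabolic_longest_mul_longest_eq hw₁ h₁ h₀ (cs.wordProd ω) i₁ (fun w => h (φ w⁻¹ p))
    H_one ?_ ?_ ?_ ((cs.length_wordProd_le ω).trans H_word) conj_mem
  · intro w i
    simpa only [mul_inv_rev, inv_simple, φ_mul, φ_simple] using h_step i (φ w⁻¹ p)
  · intro j hj w
    simp only [mul_inv_rev, inv_simple, φ_mul, φ_simple, hp j hj]
  · intro h1
    rw [h1, H_one] at H_word
    exact hω (List.length_eq_zero_iff.1 (Nat.le_zero.1 H_word))

end CoxeterSystem

section TypeE6

/-- The orbit of the first fundamental weight of type `E₆`, numbered by increasing height,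
as a permutation representation of the simple reflections. -/
def weightActionE6 (i : Fin 6) : Function.End (Fin 27) :=
  (![![1, 0, 2, 3, 4, 5, 6, 7, 8, 9, 12, 11, 10, 15, 14, 13, 17, 16, 19, 18, 21, 20, 22,
      23, 24, 25, 26],
    ![0, 1, 2, 4, 3, 6, 5, 9, 8, 7, 10, 11, 12, 13, 14, 15, 16, 17, 20, 21, 18, 19, 23,
      22, 24, 25, 26],
    ![0, 2, 1, 3, 4, 5, 6, 7, 10, 9, 8, 13, 12, 11, 16, 15, 14, 17, 18, 22, 20, 23, 19,
      21, 24, 25, 26],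
    ![0, 1, 3, 2, 4, 5, 8, 7, 6, 11, 10, 9, 12, 13, 14, 15, 18, 19, 16, 17, 20, 21, 22,
      24, 23, 25, 26],
    ![0, 1, 2, 5, 6, 3, 4, 7, 8, 9, 10, 14, 12, 16, 11, 17, 13, 15, 18, 19, 20, 21, 22,
      23, 25, 24, 26],
    ![0, 1, 2, 3, 4, 7, 9, 5, 11, 6, 13, 8, 15, 10, 14, 12, 16, 17, 18, 19, 20, 21, 22,
      23, 24, 26, 25]] :
      Fin 6 → Fin 27 → Fin 27) i

/-- The heights of the weights in `weightActionE6`, measured downwards from the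
fundamental weight. -/
def weightHeightE6 : Fin 27 → ℕ :=
  ![0, 1, 2, 3, 4, 4, 5, 5, 6, 6, 7, 7, 8, 8, 8, 9, 9, 10, 10, 11, 11, 12, 12, 13, 14, 15, 16]

theorem isLiftable_weightActionE6 : (E₆).IsLiftable weightActionE6 := by
  refine CoxeterMatrix.isLiftable_of_braid (fun i => funext fun x => ?_) fun i j hij => ?_
  · change weightActionE6 i (weightActionE6 i x) = x
    revert i x
    decide +kernel
  · have h₂ : ∀ p : Fin 6 × Fin 6, E₆ p.1 p.2 = 2 → ∀ x : Fin 27,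
        (weightActionE6 p.1 (weightActionE6 p.2 x) : Fin 27) =
          weightActionE6 p.2 (weightActionE6 p.1 x) := by
      decide +kernel
    have h₃ : ∀ p : Fin 6 × Fin 6, E₆ p.1 p.2 = 3 → ∀ x : Fin 27,
        (weightActionE6 p.1 (weightActionE6 p.2 (weightActionE6 p.1 x)) : Fin 27) =
          weightActionE6 p.2 (weightActionE6 p.1 (weightActionE6 p.2 x)) := by
      decide +kernel
    have hM : ∀ p : Fin 6 × Fin 6, p.1 ≠ p.2 → E₆ p.1 p.2 = 2 ∨ E₆ p.1 p.2 = 3 := by decide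
    exact (hM (i, j) hij).imp (fun h => ⟨h, funext (h₂ (i, j) h)⟩)
      fun h => ⟨h, funext (h₃ (i, j) h)⟩

/-- The first half of the word for the quotient of the longest elements. -/
def halfWordE6 : List (Fin 6) := [0, 2, 3, 1, 4, 3, 2, 0]

/-- A reduced word for the quotient of the longest elements of `E₆` and of its maximal
parabolic subgroup of type `D₅`. -/
def quotientWordE6 : List (Fin 6) := halfWordE6 ++ [5, 4, 3, 2, 1, 3, 4, 5]

theorem conj_mem_paraE6 (j : Fin 6) (hj : j ≠ 5) :
    csE6.wordProd quotientWordE6 * csE6.simple j * (csE6.wordProd quotientWordE6)⁻¹ ∈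
      paraE6 0 := by
  have of_moves (j k : Fin 6) (ks : List ℕ) (hk : k ≠ 0)
      (h : ks.foldl (CoxeterSystem.relationMove E₆) (quotientWordE6 ++ [j]) =
        k :: quotientWordE6) :
      csE6.wordProd quotientWordE6 * csE6.simple j * (csE6.wordProd quotientWordE6)⁻¹ ∈
        paraE6 0 := by
    have := csE6.wordProd_foldl_relationMove (quotientWordE6 ++ [j]) ks
    rw [h, CoxeterSystem.wordProd_cons, CoxeterSystem.wordProd_append,
      CoxeterSystem.wordProd_singleton] at this
    rw [← this, mul_inv_cancel_right]
    exact Subgroup.subset_closure ⟨k, hk, rfl⟩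
  fin_cases j
  · exact of_moves 0 5
      [7, 6, 5, 8, 7, 9, 15, 14, 13, 12, 10, 8, 6, 4, 3, 2, 1, 0, 6, 8, 7, 10, 9, 8]
      (by decide) (by decide +kernel)
  · exact of_moves 1 2 [15, 14, 12, 10, 9, 8, 6, 5, 4, 3, 2, 0] (by decide) (by decide +kernel)
  · exact of_moves 2 4 [3, 11, 15, 14, 12, 10, 9, 8, 7, 6, 4, 2, 1, 0, 4, 12]
      (by decide) (by decide +kernel)
  · exact of_moves 3 3 [15, 13, 12, 11, 9, 8, 7, 5, 4, 3, 1, 0] (by decide) (by decide +kernel)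
  · exact of_moves 4 1 [14, 13, 12, 11, 10, 8, 7, 6, 4, 2, 1, 0] (by decide) (by decide +kernel)
  · exact absurd rfl hj

theorem longest_quotient_E6 {w₀ w₁ : WE6} (h₀ : ∀ v, csE6.length v ≤ csE6.length w₀)
    (hw₁ : w₁ ∈ paraE6 0) (h₁ : ∀ v ∈ paraE6 0, csE6.length v ≤ csE6.length w₁) :
    w₁ * w₀ = csE6.wordProd quotientWordE6 :=
  CoxeterSystem.parabolic_longest_mul_longest_eq_wordProd h₀ hw₁ h₁ isLiftable_weightActionE6 0
    (show ∀ j : Fin 6, j ≠ 0 → weightActionE6 j 0 = 0 by decide +kernel)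
    weightHeightE6 rfl
    (show ∀ i x, weightHeightE6 (weightActionE6 i x) ≤ weightHeightE6 x + 1 by decide +kernel)
    quotientWordE6 (by simp [quotientWordE6]) (by decide +kernel) 5 conj_mem_paraE6

end TypeE6

section TypeD

/-- The action of the simple reflections of type `Dₙ` on the signed coordinate vectors
`e₁, …, eₙ, -eₙ, …, -e₁`, which are numbered `0, …, 2 * n - 1`. -/
def signedActionD (n : ℕ) (i : Fin n) : Function.End ℕ := fun x =>
  if (i : ℕ) + 1 = n then
    if x + 2 = n then n else if x = n then n - 2 else
      if x + 1 = n then n + 1 else if x = n + 1 then n - 1 else x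
  else
    if x = i then i + 1 else if x = i + 1 then i else
      if x + 1 + i = 2 * n then x - 1 else if x + 2 + i = 2 * n then x + 1 else x

/-- The heights of the signed coordinate vectors, measured downwards from `e₁`. -/
def signedHeightD (n x : ℕ) : ℕ := if x < n then x else x - 1

theorem CoxeterMatrixD_eq_three {n : ℕ} {i j : Fin n}
    (h : ((i : ℕ) + 1 = j ∧ (j : ℕ) + 1 ≠ n) ∨ ((i : ℕ) + 3 = n ∧ (j : ℕ) + 1 = n)) :
    CoxeterMatrixD n i j = 3 := by
  have hij : i ≠ j := by rw [Ne, Fin.ext_iff]; omega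
  simp only [CoxeterMatrixD, Matrix.of_apply, if_neg hij]
  rw [if_pos (by omega)]

theorem CoxeterMatrixD_eq_two {n : ℕ} {i j : Fin n} (hij : (i : ℕ) < j)
    (h : (i : ℕ) + 1 ≠ j ∨ (j : ℕ) + 1 = n) (h' : (i : ℕ) + 3 ≠ n ∨ (j : ℕ) + 1 ≠ n) :
    CoxeterMatrixD n i j = 2 := by
  have hij : i ≠ j := by rw [Ne, Fin.ext_iff]; omega
  simp only [CoxeterMatrixD, Matrix.of_apply, if_neg hij]
  rw [if_neg (by omega)]

theorem isLiftable_signedActionD (m : ℕ) :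
    (CoxeterMatrixD (m + 3)).IsLiftable (signedActionD (m + 3)) := by
  generalize hn : m + 3 = n
  refine CoxeterMatrix.isLiftable_of_braid (fun i => funext fun x => ?_) ?_
  · change signedActionD n i (signedActionD n i x) = x
    grind (splits := 40) [signedActionD]
  have key (i j : Fin n) (hij : i < j) :
      CoxeterMatrixD n i j = 2 ∧
        signedActionD n i * signedActionD n j = signedActionD n j * signedActionD n i ∨
      CoxeterMatrixD n i j = 3 ∧
        signedActionD n i * signedActionD n j * signedActionD n i =
          signedActionD n j * signedActionD n i * signedActionD n j := by
    rw [Fin.lt_def] at hij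
    have hj := j.isLt
    by_cases h : ((i : ℕ) + 1 = j ∧ (j : ℕ) + 1 ≠ n) ∨ ((i : ℕ) + 3 = n ∧ (j : ℕ) + 1 = n)
    · refine Or.inr ⟨CoxeterMatrixD_eq_three h, funext fun x => ?_⟩
      change signedActionD n i (signedActionD n j (signedActionD n i x)) =
        signedActionD n j (signedActionD n i (signedActionD n j x))
      simp only [signedActionD]
      rcases h with h | h <;> grind (splits := 40)
    · refine Or.inl ⟨CoxeterMatrixD_eq_two hij (by omega) (by omega), funext fun x => ?_⟩
      change signedActionD n i (signedActionD n j x) = signedActionD n j (signedActionD n i x)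
      simp only [signedActionD]
      by_cases hj : (j : ℕ) + 1 = n <;> grind (splits := 40)
  intro i j hij
  rcases lt_or_gt_of_ne hij with h | h
  · exact key i j h
  · rw [(CoxeterMatrixD n).symmetric i j]
    exact (key j i h).imp (And.imp_right Eq.symm) (And.imp_right Eq.symm)

variable (m : ℕ)

/-- The simple reflection of type `D` with zero-based index `k < m + 3`. -/
def simpleD (k : ℕ) : WD (m + 3) := (csD (m + 3)).simple (Fin.ofNat (m + 3) k)

/-- The product of the first `k` simple reflections of type `D`. -/
def chainD (k : ℕ) : WD (m + 3) := (csD (m + 3)).wordProd ((List.range k).map (Fin.ofNat (m + 3)))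

/-- A reduced word for the quotient of the longest elements of `Dₙ` and of its maximal
parabolic subgroup of type `Dₙ₋₁`, where `n = m + 3`. -/
def quotientWordD : List (Fin (m + 3)) :=
  (List.range (m + 1) ++ [m + 1, m + 2] ++ (List.range (m + 1)).reverse).map (Fin.ofNat (m + 3))

variable {m}

theorem simpleD_inv (k : ℕ) : (simpleD m k)⁻¹ = simpleD m k := (csD (m + 3)).inv_simple _

theorem chainD_succ (k : ℕ) : chainD m (k + 1) = chainD m k * simpleD m k := by
  simp [chainD, simpleD, List.range_succ, CoxeterSystem.wordProd_append]

theorem commute_simpleD {i j : ℕ} (hij : i < j) (hj : j < m + 3) (h : i + 1 ≠ j ∨ j = m + 2)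
    (h' : i ≠ m ∨ j ≠ m + 2) : Commute (simpleD m i) (simpleD m j) := by
  have hi' : i % (m + 3) = i := Nat.mod_eq_of_lt (by omega)
  have hj' : j % (m + 3) = j := Nat.mod_eq_of_lt hj
  refine (csD (m + 3)).simple_mul_simple_comm (CoxeterMatrixD_eq_two ?_ ?_ ?_) <;>
    simp only [Fin.val_ofNat, hi', hj'] <;> omega

theorem semiconjBy_simpleD {i j : ℕ} (h : i + 1 = j ∧ j < m + 2 ∨ i = m ∧ j = m + 2) :
    SemiconjBy (simpleD m i * simpleD m j) (simpleD m i) (simpleD m j) := by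
  have hi' : i % (m + 3) = i := Nat.mod_eq_of_lt (by omega)
  have hj' : j % (m + 3) = j := Nat.mod_eq_of_lt (by omega)
  have h3 : CoxeterMatrixD (m + 3) (Fin.ofNat (m + 3) i) (Fin.ofNat (m + 3) j) = 3 := by
    apply CoxeterMatrixD_eq_three
    simp only [Fin.val_ofNat, hi', hj']
    omega
  rw [SemiconjBy, ← mul_assoc]
  exact (csD (m + 3)).simple_braid h3

theorem commute_chainD {k j : ℕ} (hkj : k < j) (hj : j < m + 3) (h : k ≤ m) :
    Commute (chainD m k) (simpleD m j) := by
  induction k with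
  | zero => exact Commute.one_left _
  | succ k ih =>
    rw [chainD_succ]
    exact (ih (by omega) (by omega)).mul_left
      (commute_simpleD (by omega) hj (by omega) (by omega))

theorem semiconjBy_chainD {k j : ℕ} (hjk : j + 1 < k) (hk : k ≤ m + 2) :
    SemiconjBy (chainD m k) (simpleD m j) (simpleD m (j + 1)) := by
  induction k with
  | zero => omega
  | succ k ih =>
    rcases Nat.lt_or_ge (j + 1) k with h | h
    · rw [chainD_succ]
      exact (ih h (by omega)).mul_left
        (commute_simpleD (by omega) (by omega) (by omega) (by omega)).symm
    · obtain rfl : k = j + 1 := by omega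
      rw [chainD_succ, chainD_succ, mul_assoc]
      exact SemiconjBy.mul_left (commute_chainD (by omega) (by omega) (by omega))
        (semiconjBy_simpleD (by omega))

theorem semiconjBy_chainD_mul_simpleD {j e : ℕ} (hj : j < m) (he : e = m + 1 ∨ e = m + 2) :
    SemiconjBy (chainD m (m + 1) * simpleD m e) (simpleD m j) (simpleD m (j + 1)) :=
  (semiconjBy_chainD (by omega) (by omega)).mul_left
    (commute_simpleD (by omega) (by omega) (by omega) (by omega)).symm

theorem semiconjBy_chainD_mul_simpleD_fork {e : ℕ} (he : e = m + 1 ∨ e = m + 2) :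
    SemiconjBy (chainD m (m + 1) * simpleD m e) (simpleD m m) (simpleD m e) := by
  rw [chainD_succ, mul_assoc]
  exact SemiconjBy.mul_left (commute_chainD (by omega) (by omega) le_rfl)
    (semiconjBy_simpleD (by omega))

theorem wordProd_quotientWordD : (csD (m + 3)).wordProd (quotientWordD m) =
    (chainD m (m + 1) * simpleD m (m + 1)) * (chainD m (m + 1) * simpleD m (m + 2))⁻¹ := by
  rw [mul_inv_rev, simpleD_inv]
  simp only [quotientWordD, chainD, simpleD, List.map_append, List.map_reverse,
    CoxeterSystem.wordProd_append, CoxeterSystem.wordProd_reverse, List.map_cons, List.map_nil,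
    CoxeterSystem.wordProd_cons, CoxeterSystem.wordProd_nil, mul_one, mul_assoc]

theorem wordProd_quotientWordD_comm : (csD (m + 3)).wordProd (quotientWordD m) =
    (chainD m (m + 1) * simpleD m (m + 2)) * (chainD m (m + 1) * simpleD m (m + 1))⁻¹ := by
  rw [wordProd_quotientWordD, mul_inv_rev, mul_inv_rev, simpleD_inv, simpleD_inv, mul_assoc,
    mul_assoc, ← mul_assoc (simpleD m (m + 1)), ← mul_assoc (simpleD m (m + 2)),
    (commute_simpleD (m := m) (i := m + 1) (j := m + 2) (by omega) (by omega) (by omega)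
      (by omega)).eq]

theorem conj_mem_paraD (j : Fin (m + 3)) (hj : j ≠ 0) :
    (csD (m + 3)).wordProd (quotientWordD m) * (csD (m + 3)).simple j *
      ((csD (m + 3)).wordProd (quotientWordD m))⁻¹ ∈ paraD (m + 3) 0 := by
  have of_semiconjBy (k : ℕ) (hk : 0 < k) (hk' : k < m + 3)
      (h : SemiconjBy ((csD (m + 3)).wordProd (quotientWordD m)) ((csD (m + 3)).simple j)
        (simpleD m k)) :
      (csD (m + 3)).wordProd (quotientWordD m) * (csD (m + 3)).simple j *
        ((csD (m + 3)).wordProd (quotientWordD m))⁻¹ ∈ paraD (m + 3) 0 := by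
    rw [h.eq, mul_inv_cancel_right]
    refine Subgroup.subset_closure ⟨_, ?_, rfl⟩
    rw [Set.mem_ofPred_eq, Ne, Fin.ext_iff, Fin.val_ofNat, Nat.mod_eq_of_lt hk']
    exact hk.ne'
  obtain ⟨j, hjlt⟩ := j
  have hj : j ≠ 0 := fun h => hj (Fin.ext h)
  have simple_eq : (csD (m + 3)).simple ⟨j, hjlt⟩ = simpleD m j := by
    rw [simpleD]
    congr
    exact (Nat.mod_eq_of_lt hjlt).symm
  rw [simple_eq] at of_semiconjBy ⊢
  obtain ⟨i, rfl⟩ := Nat.exists_eq_succ_of_ne_zero hj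
  rcases lt_trichotomy i m with hi | rfl | hi
  · refine of_semiconjBy (i + 1) (by omega) hjlt ?_
    rw [wordProd_quotientWordD]
    exact (semiconjBy_chainD_mul_simpleD hi (by omega)).mul_left
      (semiconjBy_chainD_mul_simpleD hi (by omega)).inv_symm_left
  · refine of_semiconjBy (i + 2) (by omega) (by omega) ?_
    rw [wordProd_quotientWordD_comm]
    exact (semiconjBy_chainD_mul_simpleD_fork (by omega)).mul_left
      (semiconjBy_chainD_mul_simpleD_fork (by omega)).inv_symm_left
  · obtain rfl : i = m + 1 := by omega
    refine of_semiconjBy (m + 1) (by omega) (by omega) ?_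
    rw [wordProd_quotientWordD]
    exact (semiconjBy_chainD_mul_simpleD_fork (by omega)).mul_left
      (semiconjBy_chainD_mul_simpleD_fork (by omega)).inv_symm_left

theorem foldl_signedActionD_range {k : ℕ} (hk : k < m + 3) :
    (List.range k).foldl (fun x i => signedActionD (m + 3) (Fin.ofNat (m + 3) i) x) 0 = k := by
  induction k with
  | zero => rfl
  | succ k ih =>
    rw [List.range_succ, List.foldl_append, ih (by omega), List.foldl_cons, List.foldl_nil]
    have hk' : k % (m + 3) = k := Nat.mod_eq_of_lt (by omega)
    simp only [signedActionD, Fin.val_ofNat, hk']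
    grind

theorem foldl_signedActionD_range_reverse {k : ℕ} (hk : k < m + 3) :
    (List.range k).reverse.foldl (fun x i => signedActionD (m + 3) (Fin.ofNat (m + 3) i) x)
      (2 * m + 5 - k) = 2 * m + 5 := by
  induction k with
  | zero => rfl
  | succ k ih =>
    rw [List.range_succ, List.reverse_append, List.foldl_append, List.reverse_singleton,
      List.foldl_cons, List.foldl_nil]
    have hk' : k % (m + 3) = k := Nat.mod_eq_of_lt (by omega)
    convert ih (by omega) using 2
    simp only [signedActionD, Fin.val_ofNat, hk']
    grind

theorem longest_quotient_D {w₀ w₁ : WD (m + 3)}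
    (h₀ : ∀ v, (csD (m + 3)).length v ≤ (csD (m + 3)).length w₀) (hw₁ : w₁ ∈ paraD (m + 3) 0)
    (h₁ : ∀ v ∈ paraD (m + 3) 0, (csD (m + 3)).length v ≤ (csD (m + 3)).length w₁) :
    w₁ * w₀ = (csD (m + 3)).wordProd (quotientWordD m) := by
  refine CoxeterSystem.parabolic_longest_mul_longest_eq_wordProd h₀ hw₁ h₁
    (isLiftable_signedActionD m) (0 : ℕ) ?_ (signedHeightD (m + 3)) rfl ?_
    (quotientWordD m) (by simp [quotientWordD]) ?_ 0 conj_mem_paraD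
  · intro j hj
    have hj : (j : ℕ) ≠ 0 := fun h => hj (Fin.ext h)
    simp only [signedActionD]
    grind
  · intro i x
    simp only [signedActionD, signedHeightD]
    grind (splits := 40)
  · have hlen : (quotientWordD m).length = 2 * m + 4 := by
      simp [quotientWordD]
      omega
    rw [hlen, quotientWordD, List.foldl_map, List.foldl_append, List.foldl_append,
      foldl_signedActionD_range (by omega)]
    have fork : [m + 1, m + 2].foldl (fun x i => signedActionD (m + 3) (Fin.ofNat (m + 3) i) x)
        (m + 1) = 2 * m + 5 - (m + 1) := by
      have h1 : (m + 1) % (m + 3) = m + 1 := Nat.mod_eq_of_lt (by omega)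
      have h2 : (m + 2) % (m + 3) = m + 2 := Nat.mod_eq_of_lt (by omega)
      simp only [List.foldl_cons, List.foldl_nil, signedActionD, Fin.val_ofNat, h1, h2]
      grind
    rw [fork, foldl_signedActionD_range_reverse (by omega), signedHeightD, if_neg (by omega)]
    omega

end TypeD

/-- The identity lies in the `σ₀`-twisted conjugacy class of
`w_{1,0}·w₀`, i.e. `w_{1,0}·w₀ = x·σ₀(x)⁻¹` for some `x ∈ W`, in each of the following
cases: (a) `W` of type `Dₙ` (`n ≥ 4`) with `σ₀` the diagram automorphism exchanging
`s_{n−1}` and `s_n` and fixing the other simple reflections; (b) `W` of type `D₄` with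
`σ₀` the triality diagram automorphism `s₁ ↦ s₃ ↦ s₄ ↦ s₁`, fixing `s₂`; (c) `W` of type
`E₆` with `σ₀` the diagram automorphism exchanging `s₁ ↔ s₆` and `s₃ ↔ s₅`, fixing `s₂`
and `s₄`.  (Bourbaki labels; zero-based indices in the formalization.) -/
theorem identity_mem_twisted_class_D_D4_E6 :
    -- (a) type `Dₙ`, `σ₀` exchanging the two fork ends
    (∀ n : ℕ, ∀ _ : 4 ≤ n, ∀ σ₀ : MulAut (WD n),
      σ₀ ((csD n).simple ⟨n - 2, by omega⟩) = (csD n).simple ⟨n - 1, by omega⟩ →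
      σ₀ ((csD n).simple ⟨n - 1, by omega⟩) = (csD n).simple ⟨n - 2, by omega⟩ →
      (∀ j : Fin n, (j : ℕ) + 2 ≠ n → (j : ℕ) + 1 ≠ n → σ₀ ((csD n).simple j) = (csD n).simple j) →
      ∀ w₀ : WD n, (∀ v : WD n, (csD n).length v ≤ (csD n).length w₀) →
      ∀ w₁ ∈ paraD n ⟨0, by omega⟩,
        (∀ v ∈ paraD n ⟨0, by omega⟩, (csD n).length v ≤ (csD n).length w₁) →
        ∃ x : WD n, w₁ * w₀ = x * (σ₀ x)⁻¹) ∧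
    -- (b) type `D₄`, triality
    (∀ σ₀ : MulAut (WD 4),
      σ₀ ((csD 4).simple 0) = (csD 4).simple 2 →
      σ₀ ((csD 4).simple 2) = (csD 4).simple 3 →
      σ₀ ((csD 4).simple 3) = (csD 4).simple 0 →
      σ₀ ((csD 4).simple 1) = (csD 4).simple 1 →
      ∀ w₀ : WD 4, (∀ v : WD 4, (csD 4).length v ≤ (csD 4).length w₀) →
      ∀ w₁ ∈ paraD 4 0,
        (∀ v ∈ paraD 4 0, (csD 4).length v ≤ (csD 4).length w₁) →
        ∃ x : WD 4, w₁ * w₀ = x * (σ₀ x)⁻¹) ∧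
    -- (c) type `E₆`
    (∀ σ₀ : MulAut WE6,
      σ₀ (csE6.simple 0) = csE6.simple 5 → σ₀ (csE6.simple 5) = csE6.simple 0 →
      σ₀ (csE6.simple 2) = csE6.simple 4 → σ₀ (csE6.simple 4) = csE6.simple 2 →
      σ₀ (csE6.simple 1) = csE6.simple 1 → σ₀ (csE6.simple 3) = csE6.simple 3 →
      ∀ w₀ : WE6, (∀ v : WE6, csE6.length v ≤ csE6.length w₀) →
      ∀ w₁ ∈ paraE6 0,
        (∀ v ∈ paraE6 0, csE6.length v ≤ csE6.length w₁) →
        ∃ x : WE6, w₁ * w₀ = x * (σ₀ x)⁻¹) := by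
  refine ⟨fun n hn σ₀ hσ _ hσ_fix w₀ h₀ w₁ hw₁ h₁ => ?_,
    fun σ₀ h0 h2 h3 h1 w₀ h₀ w₁ hw₁ h₁ => ?_,
    fun σ₀ h0 _ h2 h4 h1 h3 w₀ h₀ w₁ hw₁ h₁ => ?_⟩
  · obtain ⟨m, rfl⟩ : ∃ m, n = m + 3 := ⟨n - 3, by omega⟩
    have map_end : σ₀ (simpleD m (m + 1)) = simpleD m (m + 2) := by
      have h1 : Fin.ofNat (m + 3) (m + 1) = ⟨m + 3 - 2, by omega⟩ :=
        Fin.ext (Nat.mod_eq_of_lt (by omega))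
      have h2 : Fin.ofNat (m + 3) (m + 2) = ⟨m + 3 - 1, by omega⟩ :=
        Fin.ext (Nat.mod_eq_of_lt (by omega))
      rw [simpleD, simpleD, h1, h2, hσ]
    have map_chain (k : ℕ) (hk : k ≤ m + 1) : σ₀ (chainD m k) = chainD m k := by
      induction k with
      | zero => exact map_one σ₀
      | succ k ih =>
        have hk' : k % (m + 3) = k := Nat.mod_eq_of_lt (by omega)
        rw [chainD_succ, map_mul, ih (by omega), simpleD,
          hσ_fix _ (by rw [Fin.val_ofNat, hk']; omega) (by rw [Fin.val_ofNat, hk']; omega)]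
    refine ⟨chainD m (m + 1) * simpleD m (m + 1), ?_⟩
    rw [longest_quotient_D h₀ hw₁ h₁, wordProd_quotientWordD, map_mul, map_chain _ le_rfl, map_end]
  · refine ⟨(csD 4).wordProd [0, 3, 1, 2], ?_⟩
    have word : (csD 4).wordProd [0, 1, 2, 3, 1, 0] = (csD 4).wordProd [0, 3, 1, 2, 3, 1, 0, 2] :=
      (csD 4).wordProd_foldl_relationMove [0, 3, 1, 2, 3, 1, 0, 2] [3, 1, 3, 2, 5, 6]
    rw [longest_quotient_D (m := 1) h₀ hw₁ h₁]
    refine word.trans ?_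
    simp [CoxeterSystem.wordProd_cons, h0, h1, h2, h3, mul_assoc]
  · refine ⟨csE6.wordProd halfWordE6, ?_⟩
    rw [longest_quotient_E6 h₀ hw₁ h₁, quotientWordE6, CoxeterSystem.wordProd_append]
    congr 1
    simp [halfWordE6, CoxeterSystem.wordProd_cons, h0, h1, h2, h3, h4, mul_assoc]
end
end

section
/- Let W be the Weyl group of type A_n with simple reflections s_1, …, s_n labeled as in Bourbaki, and let σ₀ be the automorphism of W given by σ₀(x) = w_0·x·w_0 (the nontrivial diagram automorphism s_j ↦ s_{n+1−j}). Fix 1 ≤ i ≤ n. If n is even or i is even, then the identity element lies in the σ₀-twisted conjugacy class O_{σ₀}(w_{i,0}·w_0). If n and i are both odd, then the set of elements of minimal length in O_{σ₀}(w_{i,0}·w_0) is exactly {s_{(n+1)/2}}; in particular, the minimal length in this twisted class is 1. -/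
noncomputable section
open CoxeterMatrix

/-- The Weyl group of type `Aₙ`, given by its Coxeter presentation. -/
abbrev WA (n : ℕ) := (Aₙ n).Group

/-- The canonical Coxeter system of type `Aₙ`. -/
def csA (n : ℕ) : CoxeterSystem (Aₙ n) (WA n) := (Aₙ n).toCoxeterSystem

/-- `segA n a b` is the product `s_a s_{a+1} ⋯ s_b` of the simple reflections with
Bourbaki labels `a, a+1, …, b` (so `s_j`, `1 ≤ j ≤ n`, is `(csA n).simple ⟨j-1, _⟩`). -/
def segA (n a b : ℕ) : WA n :=
  (((List.finRange n).filter fun k : Fin n => a ≤ (k : ℕ) + 1 ∧ (k : ℕ) + 1 ≤ b).map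
    (csA n).simple).prod

/-- The standard parabolic subgroup of the type-`Aₙ` Weyl group generated by all simple
reflections except the one with (zero-based) index `i`. -/
def paraA (n : ℕ) (i : Fin n) : Subgroup (WA n) :=
  Subgroup.closure ((csA n).simple '' {j : Fin n | j ≠ i})


open Equiv Equiv.Perm

theorem swap_castSucc_succ_isLiftable (n : ℕ) :
    (Aₙ n).IsLiftable fun j : Fin n => swap j.castSucc j.succ := by
  intro a b
  have hM : (Aₙ n) a b = if a = b then 1 else
      (if (b : ℕ) + 1 = a ∨ (a : ℕ) + 1 = b then 3 else 2) := rfl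
  rw [hM]
  split_ifs with h1 h2
  · subst h1; simp
  · beta_reduce
    rcases h2 with h2 | h2
    · have e : a.castSucc = b.succ := by ext; simp [h2]
      rw [swap_comm b.castSucc, e]
      have := (isThreeCycle_swap_mul_swap_same (a := b.succ) (b := a.succ) (c := b.castSucc)
        (by simp [Fin.ext_iff]; omega) (by simp [Fin.ext_iff]) (by simp [Fin.ext_iff]; omega))
      exact this.orderOf ▸ pow_orderOf_eq_one _
    · have e : a.succ = b.castSucc := by ext; simp [h2]
      rw [swap_comm a.castSucc, e]
      have := (isThreeCycle_swap_mul_swap_same (a := b.castSucc) (b := a.castSucc) (c := b.succ)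
        (by simp [Fin.ext_iff]; omega) (by simp [Fin.ext_iff]) (by simp [Fin.ext_iff]; omega))
      exact this.orderOf ▸ pow_orderOf_eq_one _
  · have hd : Disjoint (swap a.castSucc a.succ) (swap b.castSucc b.succ) := by
      intro x
      by_cases hx : x = a.castSucc ∨ x = a.succ
      · right
        rcases hx with rfl | rfl <;>
        exact swap_apply_of_ne_of_ne (by simp [Fin.ext_iff] at *; omega)
          (by simp [Fin.ext_iff] at *; omega)
      · left
        exact swap_apply_of_ne_of_ne (fun h => hx (.inl h)) (fun h => hx (.inr h))
    rw [hd.commute.mul_pow, pow_two, pow_two]; simp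

/-- The action of the type-`Aₙ` Weyl group on `n + 1` letters, the simple reflections acting by
adjacent transpositions. -/
def permA (n : ℕ) : WA n →* Perm (Fin (n + 1)) :=
  (csA n).lift ⟨_, swap_castSucc_succ_isLiftable n⟩

theorem permA_simple {n : ℕ} (j : Fin n) :
    permA n ((csA n).simple j) = swap j.castSucc j.succ :=
  (csA n).lift_apply_simple _ j

theorem permA_surjective (n : ℕ) : Function.Surjective (permA n) := by
  rw [← MonoidHom.mrange_eq_top, eq_top_iff, ← mclosure_swap_castSucc_succ, Submonoid.closure_le]
  rintro _ ⟨j, rfl⟩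
  exact ⟨_, permA_simple j⟩

/-- The simple reflections of type `Aₙ` indexed by `ℕ`, extended by `1`. -/
def reflA (n j : ℕ) : WA n := if h : j < n then (csA n).simple ⟨j, h⟩ else 1

theorem reflA_of_lt {n j : ℕ} (h : j < n) : reflA n j = (csA n).simple ⟨j, h⟩ := dif_pos h

theorem reflA_mul_self (n j : ℕ) : reflA n j * reflA n j = 1 := by
  unfold reflA; split_ifs <;> simp

theorem reflA_comm (n : ℕ) {j k : ℕ} (h : j + 2 ≤ k) :
    reflA n j * reflA n k = reflA n k * reflA n j := by
  by_cases hk : k < n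
  · have hj : j < n := by omega
    rw [reflA_of_lt hk, reflA_of_lt hj]
    have := (csA n).simple_mul_simple_pow ⟨j, hj⟩ ⟨k, hk⟩
    have hM : (Aₙ n) ⟨j, hj⟩ ⟨k, hk⟩ = 2 := by
      change (if _ then _ else if _ then _ else _) = _
      rw [if_neg (by simp; omega), if_neg (by simp; omega)]
    rw [hM, pow_two, mul_eq_one_iff_eq_inv] at this
    simpa using this
  · simp [reflA, hk]

theorem reflA_braid {n j : ℕ} (h : j + 1 < n) :
    reflA n j * reflA n (j + 1) * reflA n j = reflA n (j + 1) * reflA n j * reflA n (j + 1) := by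
  have hj : j < n := by omega
  rw [reflA_of_lt h, reflA_of_lt hj]
  have := (csA n).simple_mul_simple_pow ⟨j, hj⟩ ⟨j + 1, h⟩
  have hM : (Aₙ n) ⟨j, hj⟩ ⟨j + 1, h⟩ = 3 := by
    change (if _ then _ else if _ then _ else _) = _
    rw [if_neg (by simp), if_pos (by simp)]
  rw [hM, pow_succ, pow_two, mul_eq_one_iff_eq_inv, mul_inv_rev, (csA n).inv_simple,
    (csA n).inv_simple] at this
  rw [← this]
  simp [mul_assoc]

/-- The product `s_m s_{m-1} ⋯` of `d` factors (zero-based indices). -/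
def descA (n m : ℕ) : ℕ → WA n
  | 0 => 1
  | d + 1 => descA n m d * reflA n (m - d)

theorem descA_mul_reflA_of_lt (n : ℕ) {m d j : ℕ} (h : j + d < m) :
    descA n m d * reflA n j = reflA n j * descA n m d := by
  induction d with
  | zero => simp [descA]
  | succ d ih =>
    rw [descA, mul_assoc, ← reflA_comm n (by omega), ← mul_assoc, ih (by omega), mul_assoc]

theorem descA_mul_reflA_of_gt {n m d j : ℕ} (hm : m < n) (hd : d ≤ m + 1) (hj : j + 1 ≤ m)
    (h : m + 1 ≤ j + d) :
    descA n m d * reflA n (j + 1) = reflA n j * descA n m d := by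
  induction d with
  | zero => omega
  | succ d ih =>
    by_cases h' : m + 1 ≤ j + d
    · rw [descA, mul_assoc, reflA_comm n (by omega), ← mul_assoc, ih (by omega) h', mul_assoc]
    · obtain ⟨e, rfl⟩ : ∃ e, d = e + 1 := ⟨d - 1, by omega⟩
      have e1 : m - (e + 1) = j := by omega
      have e2 : m - e = j + 1 := by omega
      have hc := descA_mul_reflA_of_lt n (m := m) (d := e) (j := j) (by omega)
      have hb := reflA_braid (n := n) (j := j) (by omega)
      simp only [descA, e1, e2]
      calc _ = descA n m e * (reflA n (j + 1) * reflA n j * reflA n (j + 1)) := by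
            simp only [mul_assoc]
        _ = (descA n m e * reflA n j) * reflA n (j + 1) * reflA n j := by
            rw [← hb]; simp only [mul_assoc]
        _ = _ := by rw [hc]; simp only [mul_assoc]

/-- The standard parabolic subgroup generated by the first `m` simple reflections. -/
def initialA (n m : ℕ) : Subgroup (WA n) := Subgroup.closure (reflA n '' Set.Iio m)

theorem reflA_mem_initialA (n : ℕ) {m j : ℕ} (h : j < m) : reflA n j ∈ initialA n m :=
  Subgroup.subset_closure ⟨j, h, rfl⟩

theorem exists_eq_mul_descA {n m : ℕ} (hm : m < n) {w : WA n} (hw : w ∈ initialA n (m + 1)) :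
    ∃ h ∈ initialA n m, ∃ d ≤ m + 1, w = h * descA n m d := by
  have step : ∀ x : WA n, ∀ y ∈ reflA n '' Set.Iio (m + 1),
      (∃ h ∈ initialA n m, ∃ d ≤ m + 1, x = h * descA n m d) →
      ∃ h ∈ initialA n m, ∃ d ≤ m + 1, x * y = h * descA n m d := by
    rintro _ _ ⟨j, hj, rfl⟩ ⟨h, hh, d, hd, rfl⟩
    simp only [Set.mem_Iio] at hj
    rcases lt_trichotomy (j + d) m with h1 | h1 | h1
    · refine ⟨h * reflA n j, mul_mem hh (reflA_mem_initialA n (by omega)), d, hd, ?_⟩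
      rw [mul_assoc, descA_mul_reflA_of_lt n h1, mul_assoc]
    · refine ⟨h, hh, d + 1, by omega, ?_⟩
      rw [descA, mul_assoc, show m - d = j by omega]
    · by_cases h2 : j + d = m + 1
      · obtain ⟨e, rfl⟩ : ∃ e, d = e + 1 := ⟨d - 1, by omega⟩
        refine ⟨h, hh, e, by omega, ?_⟩
        rw [descA, show m - e = j by omega, mul_assoc, mul_assoc, reflA_mul_self, mul_one]
      · obtain ⟨k, rfl⟩ : ∃ k, j = k + 1 := ⟨j - 1, by omega⟩
        refine ⟨h * reflA n k, mul_mem hh (reflA_mem_initialA n (by omega)), d, hd, ?_⟩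
        rw [mul_assoc, descA_mul_reflA_of_gt hm hd (by omega) (by omega), mul_assoc]
  induction hw using Subgroup.closure_induction_right with
  | one => exact ⟨1, one_mem _, 0, by omega, by simp [descA]⟩
  | mul_right x _ y hy ih => exact step x y hy ih
  | mul_inv_cancel x _ y hy ih =>
    have : y⁻¹ = y := by
      obtain ⟨j, -, rfl⟩ := hy
      exact inv_eq_of_mul_eq_one_left (reflA_mul_self n j)
    rw [this]
    exact step x y hy ih

theorem permA_apply_of_mem_initialA {n m : ℕ} {w : WA n} (hw : w ∈ initialA n m)
    (x : Fin (n + 1)) (hx : m < x) : permA n w x = x := by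
  have : initialA n m ≤ (MulAction.stabilizer (Perm (Fin (n + 1))) x).comap (permA n) := by
    rw [initialA, Subgroup.closure_le]
    rintro _ ⟨j, hj, rfl⟩
    simp only [Set.mem_Iio] at hj
    have hjn : j < n := by omega
    rw [reflA_of_lt hjn]
    simp only [SetLike.mem_coe, Subgroup.mem_comap, MulAction.mem_stabilizer_iff, permA_simple,
      Perm.smul_def]
    exact swap_apply_of_ne_of_ne (by simp [Fin.ext_iff]; omega) (by simp [Fin.ext_iff]; omega)
  exact this hw

theorem permA_descA_apply {n m d : ℕ} (hm : m < n) (hd : d ≤ m + 1) :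
    permA n (descA n m d) ⟨m + 1 - d, by omega⟩ = ⟨m + 1, by omega⟩ := by
  induction d with
  | zero => simp [descA]
  | succ d ih =>
    rw [descA, map_mul, Perm.mul_apply, reflA_of_lt (by omega), permA_simple]
    have e : (⟨m + 1 - (d + 1), by omega⟩ : Fin (n + 1)) =
        (⟨m - d, by omega⟩ : Fin n).castSucc := by ext; simp
    rw [e, swap_apply_left, ← ih (by omega)]
    congr 1
    ext
    simp
    omega

theorem eq_one_of_mem_initialA {n m : ℕ} (hm : m ≤ n) {w : WA n} (hw : w ∈ initialA n m)
    (h1 : permA n w = 1) : w = 1 := by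
  induction m generalizing w with
  | zero => simpa [initialA] using hw
  | succ m ih =>
    obtain ⟨h, hh, d, hd, rfl⟩ := exists_eq_mul_descA hm hw
    have key := congrArg (fun σ : Perm (Fin (n + 1)) => σ ⟨m + 1 - d, by omega⟩) h1
    simp only [map_mul, Perm.mul_apply, permA_descA_apply (show m < n by omega) hd] at key
    rw [permA_apply_of_mem_initialA hh _ (by simp)] at key
    simp only [Perm.one_apply, Fin.mk.injEq] at key
    obtain rfl : d = 0 := by omega
    rw [descA, mul_one] at h1 hw ⊢
    exact ih (by omega) hh h1

theorem permA_injective (n : ℕ) : Function.Injective (permA n) := by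
  rw [injective_iff_map_eq_one]
  intro w hw
  refine eq_one_of_mem_initialA le_rfl (m := n) ?_ hw
  have : initialA n n = ⊤ := by
    rw [eq_top_iff, ← (csA n).subgroup_closure_range_simple, Subgroup.closure_le]
    rintro _ ⟨j, rfl⟩
    rw [← reflA_of_lt j.2]
    exact reflA_mem_initialA n j.2
  simp [this]

/-- The exchange condition, read off from the action on letters. -/
theorem length_wordProd_mul_simple_lt {n : ℕ} (j : Fin n) (ω : List (Fin n))
    (h : permA n ((csA n).wordProd ω) j.succ < permA n ((csA n).wordProd ω) j.castSucc) :
    (csA n).length ((csA n).wordProd ω * (csA n).simple j) < ω.length := by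
  induction ω with
  | nil => simp [Fin.lt_def] at h
  | cons a ω ih =>
    rw [CoxeterSystem.wordProd_cons] at h ⊢
    set u := (csA n).wordProd ω with hu
    by_cases hlt : permA n u j.succ < permA n u j.castSucc
    · have h1 := ih hlt
      have h2 := (csA n).length_mul_le ((csA n).simple a) (u * (csA n).simple j)
      rw [(csA n).length_simple, ← mul_assoc] at h2
      rw [List.length_cons]
      omega
    · have hne : permA n u j.castSucc ≠ permA n u j.succ := by
        simp [Fin.ext_iff]
      rw [map_mul, Perm.mul_apply, Perm.mul_apply, permA_simple] at h
      have hpq : permA n u j.castSucc = a.castSucc ∧ permA n u j.succ = a.succ := by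
        generalize permA n u j.castSucc = p at *
        generalize permA n u j.succ = q at *
        simp only [swap_apply_def] at h
        simp only [Fin.ext_iff, Fin.val_castSucc, Fin.val_succ] at *
        split_ifs at h <;>
          simp only [Fin.lt_def, Fin.val_castSucc, Fin.val_succ] at * <;> omega
      have key : (csA n).simple a * u = u * (csA n).simple j := by
        apply permA_injective
        rw [map_mul, map_mul, permA_simple, permA_simple, ← hpq.1, ← hpq.2]
        exact (mul_swap_eq_swap_mul _ _ _).symm
      rw [key, CoxeterSystem.simple_mul_simple_cancel_right]
      exact Nat.lt_succ_of_le ((csA n).length_wordProd_le ω)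

theorem length_mul_simple_lt_of_permA {n : ℕ} (j : Fin n) {w : WA n}
    (h : permA n w j.succ < permA n w j.castSucc) :
    (csA n).length (w * (csA n).simple j) < (csA n).length w := by
  obtain ⟨ω, hω, rfl⟩ := (csA n).exists_isReduced w
  rw [hω.eq]
  exact length_wordProd_mul_simple_lt j ω h

theorem permA_lt_of_length_mul_simple_le {n : ℕ} (j : Fin n) {w : WA n}
    (h : (csA n).length (w * (csA n).simple j) ≤ (csA n).length w) :
    permA n w j.succ < permA n w j.castSucc := by
  by_contra hc
  have hne : permA n w j.castSucc ≠ permA n w j.succ := by simp [Fin.ext_iff]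
  have := length_mul_simple_lt_of_permA j (w := w * (csA n).simple j) (by
    rw [map_mul, Perm.mul_apply, Perm.mul_apply, permA_simple, swap_apply_left, swap_apply_right]
    exact lt_of_le_of_ne (not_lt.mp hc) hne)
  rw [CoxeterSystem.simple_mul_simple_cancel_right] at this
  omega

theorem isConj_iff_card_fixed_eq {α : Type*} [Fintype α] [DecidableEq α] {σ τ : Perm α}
    (hσ : σ ^ 2 = 1) (hτ : τ ^ 2 = 1) :
    IsConj σ τ ↔ (Finset.univ.filter fun x => σ x = x).card =
      (Finset.univ.filter fun x => τ x = x).card := by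
  have hcard : ∀ ρ : Perm α, (Finset.univ.filter fun x => ρ x = x).card + ρ.support.card =
      Fintype.card α := fun ρ => by
    rw [← Finset.card_univ]
    exact Finset.card_filter_add_card_filter_not (fun x => ρ x = x)
  have hsum : ∀ ρ : Perm α, ρ ^ 2 = 1 → ρ.support.card = ρ.cycleType.card * 2 := fun ρ hρ => by
    rw [← sum_cycleType, cycleType_of_pow_prime_eq_one hρ]
    simp
  have h1 := hcard σ
  have h2 := hcard τ
  have h3 := hsum σ hσ
  have h4 := hsum τ hτ
  rw [isConj_iff_cycleType_eq]
  constructor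
  · intro h
    rw [h] at h3
    omega
  · intro h
    rw [cycleType_of_pow_prime_eq_one hσ, cycleType_of_pow_prime_eq_one hτ]
    congr 1
    omega

/-- A strictly decreasing self-map of the interval `[a, b)` of naturals is the reversal. -/
theorem add_eq_of_strictAnti_on_block {a b : ℕ} {g : ℕ → ℕ}
    (hmem : ∀ x, a ≤ x → x < b → a ≤ g x ∧ g x < b)
    (hlt : ∀ x, a ≤ x → x + 1 < b → g (x + 1) < g x) {x : ℕ} (hax : a ≤ x) (hxb : x < b) :
    g x + x + 1 = a + b := by
  have hup : ∀ d, a + d < b → g (a + d) + d < b := by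
    intro d
    induction d with
    | zero => exact fun h => (hmem a le_rfl h).2
    | succ d ih =>
      intro h
      have h1 := ih (by omega)
      have h2 := hlt (a + d) (by omega) (by omega)
      rw [add_assoc] at h2
      omega
  have hdown : ∀ d y, a ≤ y → y + d + 1 = b → a + d ≤ g y := by
    intro d
    induction d with
    | zero => exact fun y h1 h2 => (hmem y h1 (by omega)).1
    | succ d ih =>
      intro y h1 h2
      have h3 := ih (y + 1) (by omega) (by omega)
      have h4 := hlt y h1 (by omega)
      omega
  have h1 := hup (x - a) (by omega)
  have h2 := hdown (b - 1 - x) x hax (by omega)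
  rw [Nat.add_sub_cancel' hax] at h1
  omega

theorem perm_apply_add_eq_of_strictAnti_on_block {n a b : ℕ} (hb : b ≤ n + 1) {σ : Perm (Fin (n + 1))}
    (hmem : ∀ x : Fin (n + 1), a ≤ x → x < b → a ≤ (σ x : ℕ) ∧ (σ x : ℕ) < b)
    (hlt : ∀ j : Fin n, a ≤ j → (j : ℕ) + 1 < b → σ j.succ < σ j.castSucc)
    (x : Fin (n + 1)) (hax : a ≤ x) (hxb : x < b) : (σ x : ℕ) + x + 1 = a + b := by
  let g : ℕ → ℕ := fun y => if h : y < n + 1 then (σ ⟨y, h⟩ : ℕ) else 0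
  have hg : ∀ y (h : y < n + 1), g y = σ ⟨y, h⟩ := fun y h => dif_pos h
  have key := add_eq_of_strictAnti_on_block (a := a) (b := b) (g := g)
    (fun y h1 h2 => by
      rw [hg y (by omega)]
      exact hmem _ h1 h2)
    (fun y h1 h2 => by
      rw [hg y (by omega), hg (y + 1) (by omega)]
      exact hlt ⟨y, by omega⟩ h1 h2) hax hxb
  rwa [hg x x.2] at key

theorem permA_longest {n : ℕ} {w₀ : WA n}
    (hw₀ : ∀ v : WA n, (csA n).length v ≤ (csA n).length w₀) (x : Fin (n + 1)) :
    (permA n w₀ x : ℕ) + x = n := by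
  have := perm_apply_add_eq_of_strictAnti_on_block (a := 0) (b := n + 1) (σ := permA n w₀) le_rfl
    (fun x _ _ => ⟨by omega, by omega⟩)
    (fun j _ _ => permA_lt_of_length_mul_simple_le j (hw₀ _)) x (by omega) x.2
  omega

theorem permA_apply_le_iff_of_mem_paraA {n : ℕ} {i : Fin n} {w : WA n} (hw : w ∈ paraA n i)
    (x : Fin (n + 1)) : permA n w x ≤ i.castSucc ↔ x ≤ i.castSucc := by
  induction hw using Subgroup.closure_induction generalizing x with
  | mem w hw =>
    obtain ⟨j, hj, rfl⟩ := hw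
    have hj' : (j : ℕ) ≠ i := fun h => hj (Fin.ext h)
    rw [permA_simple, swap_apply_def]
    split_ifs <;> simp only [Fin.ext_iff, Fin.le_def, Fin.val_castSucc, Fin.val_succ] at * <;> omega
  | one => simp
  | mul u v _ _ hu hv => rw [map_mul, Perm.mul_apply, hu, hv]
  | inv u _ hu =>
    rw [← hu, map_inv, ← Perm.mul_apply, mul_inv_cancel, Perm.one_apply]

theorem permA_longest_paraA {n : ℕ} {i : Fin n} {w : WA n} (hw : w ∈ paraA n i)
    (hmax : ∀ v ∈ paraA n i, (csA n).length v ≤ (csA n).length w) (x : Fin (n + 1)) :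
    (permA n w x : ℕ) + x = if (x : ℕ) ≤ i then (i : ℕ) else n + i + 1 := by
  have hdesc : ∀ j : Fin n, j ≠ i → permA n w j.succ < permA n w j.castSucc := fun j hj =>
    permA_lt_of_length_mul_simple_le j
      (hmax _ (mul_mem hw (Subgroup.subset_closure ⟨j, hj, rfl⟩)))
  have hblock : ∀ x : Fin (n + 1), (permA n w x : ℕ) ≤ i ↔ (x : ℕ) ≤ i :=
    permA_apply_le_iff_of_mem_paraA hw
  split_ifs with hx
  · have := perm_apply_add_eq_of_strictAnti_on_block (a := 0) (b := i + 1) (σ := permA n w) (by omega)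
      (fun x _ h => ⟨by omega, by have := hblock x; omega⟩)
      (fun j _ h => hdesc j (by rintro rfl; omega)) x (by omega) (by omega)
    omega
  · have := perm_apply_add_eq_of_strictAnti_on_block (a := i + 1) (b := n + 1) (σ := permA n w) le_rfl
      (fun x h _ => ⟨by have := hblock x; omega, by omega⟩)
      (fun j h _ => hdesc j (by rintro rfl; omega)) x (by omega) x.2
    omega

theorem permA_longest_sq {n : ℕ} {w₀ : WA n}
    (hw₀ : ∀ v : WA n, (csA n).length v ≤ (csA n).length w₀) : permA n w₀ ^ 2 = 1 := by
  ext x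
  have h1 := permA_longest hw₀ x
  have h2 := permA_longest hw₀ (permA n w₀ x)
  rw [pow_two, Perm.mul_apply, Perm.one_apply]
  omega

theorem permA_longest_paraA_sq {n : ℕ} {i : Fin n} {w : WA n} (hw : w ∈ paraA n i)
    (hmax : ∀ v ∈ paraA n i, (csA n).length v ≤ (csA n).length w) : permA n w ^ 2 = 1 := by
  ext x
  have h1 := permA_longest_paraA hw hmax x
  have h2 := permA_longest_paraA hw hmax (permA n w x)
  rw [pow_two, Perm.mul_apply, Perm.one_apply]
  split_ifs at h1 h2 <;> omega

theorem permA_longest_mul_simple {n : ℕ} {w₀ : WA n}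
    (hw₀ : ∀ v : WA n, (csA n).length v ≤ (csA n).length w₀) (j : Fin n) :
    permA n w₀ * permA n ((csA n).simple j) = permA n ((csA n).simple j.rev) * permA n w₀ := by
  have h1 : permA n w₀ j.castSucc = j.rev.succ := by
    have := permA_longest hw₀ j.castSucc
    ext
    simp [Fin.val_rev] at this ⊢
    omega
  have h2 : permA n w₀ j.succ = j.rev.castSucc := by
    have := permA_longest hw₀ j.succ
    ext
    simp [Fin.val_rev] at this ⊢
    omega
  rw [permA_simple, permA_simple, mul_swap_eq_swap_mul, h1, h2, swap_comm]

theorem mem_twisted_class_iff {n : ℕ} {w₀ : WA n}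
    (hw₀ : ∀ v : WA n, (csA n).length v ≤ (csA n).length w₀) (w v : WA n) :
    (∃ x : WA n, v = x⁻¹ * (w * w₀) * (w₀ * x * w₀)) ↔
      IsConj (permA n w) (permA n v * permA n w₀) := by
  have hsq : w₀ * w₀ = 1 := by
    apply permA_injective
    rw [map_mul, ← pow_two, permA_longest_sq hw₀, map_one]
  have key : ∀ x : WA n, v = x⁻¹ * (w * w₀) * (w₀ * x * w₀) ↔ x⁻¹ * w * x = v * w₀ := fun x => by
    have : x⁻¹ * (w * w₀) * (w₀ * x * w₀) = x⁻¹ * w * x * w₀ := by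
      calc _ = x⁻¹ * w * (w₀ * w₀) * x * w₀ := by group
        _ = _ := by rw [hsq, mul_one]
    rw [this]
    exact ⟨fun h => by rw [h, mul_assoc _ w₀, hsq, mul_one], fun h => by rw [h, mul_assoc, hsq, mul_one]⟩
  rw [isConj_iff, (permA_surjective n).exists]
  simp only [key, ← map_mul, ← map_inv, (permA_injective n).eq_iff]
  exact ⟨fun ⟨x, hx⟩ => ⟨x⁻¹, by rwa [inv_inv]⟩, fun ⟨x, hx⟩ => ⟨x⁻¹, by rwa [inv_inv]⟩⟩

theorem card_fixed_longest {n : ℕ} {w₀ : WA n}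
    (hw₀ : ∀ v : WA n, (csA n).length v ≤ (csA n).length w₀) :
    (Finset.univ.filter fun x => permA n w₀ x = x).card = if Even n then 1 else 0 := by
  split_ifs with hn
  · obtain ⟨k, hk⟩ := hn
    rw [Finset.card_eq_one]
    refine ⟨⟨k, by omega⟩, ?_⟩
    ext x
    have := permA_longest hw₀ x
    simp only [Finset.mem_filter, Finset.mem_univ, true_and, Finset.mem_singleton, Fin.ext_iff]
    omega
  · rw [Finset.card_eq_zero, Finset.filter_eq_empty_iff]
    rintro x - hx
    have := permA_longest hw₀ x
    rw [hx] at this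
    exact hn ⟨x, this.symm⟩

theorem card_fixed_longest_paraA {n : ℕ} {i : Fin n} {w : WA n} (hw : w ∈ paraA n i)
    (hmax : ∀ v ∈ paraA n i, (csA n).length v ≤ (csA n).length w) :
    (Finset.univ.filter fun x => permA n w x = x).card =
      if Even n then 1 else if Even (i : ℕ) then 2 else 0 := by
  have key := permA_longest_paraA hw hmax
  rcases Nat.even_or_odd' n with ⟨k, hk | hk⟩ <;> rcases Nat.even_or_odd' i with ⟨l, hl | hl⟩
  · rw [if_pos ⟨k, by omega⟩, Finset.card_eq_one]
    refine ⟨⟨l, by omega⟩, ?_⟩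
    ext x
    have := key x
    simp only [Finset.mem_filter, Finset.mem_univ, true_and, Finset.mem_singleton, Fin.ext_iff]
    split_ifs at this <;> omega
  · rw [if_pos ⟨k, by omega⟩, Finset.card_eq_one]
    refine ⟨⟨k + l + 1, by omega⟩, ?_⟩
    ext x
    have := key x
    simp only [Finset.mem_filter, Finset.mem_univ, true_and, Finset.mem_singleton, Fin.ext_iff]
    split_ifs at this <;> omega
  · rw [if_neg (by rintro ⟨c, hc⟩; omega), if_pos ⟨l, by omega⟩, Finset.card_eq_two]
    refine ⟨⟨l, by omega⟩, ⟨k + l + 1, by omega⟩, by simp; omega, ?_⟩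
    ext x
    have := key x
    simp only [Finset.mem_filter, Finset.mem_univ, true_and, Finset.mem_insert,
      Finset.mem_singleton, Fin.ext_iff]
    split_ifs at this <;> omega
  · rw [if_neg (by rintro ⟨c, hc⟩; omega), if_neg (by rintro ⟨c, hc⟩; omega), Finset.card_eq_zero,
      Finset.filter_eq_empty_iff]
    rintro x - hx
    have := key x
    rw [hx] at this
    split_ifs at this <;> omega

theorem card_fixed_simple_mul_longest {n : ℕ} {w₀ : WA n}
    (hw₀ : ∀ v : WA n, (csA n).length v ≤ (csA n).length w₀) {j : Fin n}
    (hj : 2 * (j : ℕ) + 1 = n) :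
    (Finset.univ.filter fun x =>
      (permA n ((csA n).simple j) * permA n w₀) x = x).card = 2 := by
  rw [Finset.card_eq_two]
  refine ⟨j.castSucc, j.succ, by simp [Fin.ext_iff], ?_⟩
  ext x
  have := permA_longest hw₀ x
  simp only [Finset.mem_filter, Finset.mem_univ, true_and, Finset.mem_insert,
    Finset.mem_singleton, Perm.mul_apply, permA_simple, swap_apply_def]
  split_ifs <;> simp only [Fin.ext_iff, Fin.val_castSucc, Fin.val_succ] at * <;> omega

theorem simple_mul_longest_sq_iff {n : ℕ} {w₀ : WA n}
    (hw₀ : ∀ v : WA n, (csA n).length v ≤ (csA n).length w₀) (j : Fin n) :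
    (permA n ((csA n).simple j) * permA n w₀) ^ 2 = 1 ↔ 2 * (j : ℕ) + 1 = n := by
  have h : (permA n ((csA n).simple j) * permA n w₀) ^ 2 =
      permA n ((csA n).simple j) * permA n ((csA n).simple j.rev) := by
    rw [pow_two]
    calc _ = permA n ((csA n).simple j) * (permA n w₀ * permA n ((csA n).simple j)) *
          permA n w₀ := by group
      _ = permA n ((csA n).simple j) * permA n ((csA n).simple j.rev) * permA n w₀ ^ 2 := by
          rw [permA_longest_mul_simple hw₀, pow_two]; group
      _ = _ := by rw [permA_longest_sq hw₀, mul_one]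
  rw [h, ← map_mul, ← map_one (permA n), (permA_injective n).eq_iff, mul_eq_one_iff_eq_inv,
    (csA n).inv_simple]
  constructor
  · intro h1
    have h2 := congrArg (fun u => permA n u j.castSucc) h1
    simp only [permA_simple, swap_apply_left, swap_apply_def] at h2
    split_ifs at h2 <;>
      simp only [Fin.ext_iff, Fin.val_castSucc, Fin.val_succ, Fin.val_rev] at * <;> omega
  · intro h1
    congr 1
    ext
    rw [Fin.val_rev]
    omega

/-- In type `Aₙ` with `σ₀(x) = w₀·x·w₀` the nontrivial diagram
automorphism, fix `1 ≤ i ≤ n`.  If `n` or `i` is even, the identity lies in the twisted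
conjugacy class `O_{σ₀}(w_{i,0}·w₀)`; if `n` and `i` are both odd, the set of minimal
length elements of `O_{σ₀}(w_{i,0}·w₀)` is exactly `{s_{(n+1)/2}}`, so the minimal
length in this twisted class is `1`. -/
theorem typeA_twisted_class_min_length (n i : ℕ) (hi1 : 1 ≤ i) (hin : i ≤ n)
    (w₀ : WA n) (hw₀ : ∀ v : WA n, (csA n).length v ≤ (csA n).length w₀)
    (wᵢ : WA n) (hwᵢ : wᵢ ∈ paraA n ⟨i - 1, by omega⟩)
    (hwᵢmax : ∀ v ∈ paraA n ⟨i - 1, by omega⟩, (csA n).length v ≤ (csA n).length wᵢ) :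
    ((Even n ∨ Even i) →
      (1 : WA n) ∈ {v : WA n | ∃ x : WA n, v = x⁻¹ * (wᵢ * w₀) * (w₀ * x * w₀)}) ∧
    (Odd n → Odd i →
      {v : WA n | (∃ x : WA n, v = x⁻¹ * (wᵢ * w₀) * (w₀ * x * w₀)) ∧
          ∀ v' : WA n, (∃ x : WA n, v' = x⁻¹ * (wᵢ * w₀) * (w₀ * x * w₀)) →
            (csA n).length v ≤ (csA n).length v'}
        = {(csA n).simple ⟨(n + 1) / 2 - 1, by omega⟩} ∧
      (csA n).length ((csA n).simple ⟨(n + 1) / 2 - 1, by omega⟩) = 1) := by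
  set k : Fin n := ⟨i - 1, by omega⟩ with hk
  have hksq := permA_longest_paraA_sq hwᵢ hwᵢmax
  have hkcard := card_fixed_longest_paraA hwᵢ hwᵢmax
  have hclass := mem_twisted_class_iff hw₀ wᵢ
  have hone : (∃ x : WA n, 1 = x⁻¹ * (wᵢ * w₀) * (w₀ * x * w₀)) ↔ (Even n ∨ Even i) := by
    rw [hclass, map_one, one_mul, isConj_iff_card_fixed_eq hksq (permA_longest_sq hw₀), hkcard,
      card_fixed_longest hw₀]
    have hki : Even (k : ℕ) ↔ ¬ Even i := by
      rw [show i = (k : ℕ) + 1 by simp only [hk]; omega, Nat.even_add_one, not_not]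
    split_ifs <;> simp_all
  refine ⟨hone.2, fun hn hi => ?_⟩
  set m : Fin n := ⟨(n + 1) / 2 - 1, by omega⟩ with hm
  have hmn : 2 * (m : ℕ) + 1 = n := by
    obtain ⟨c, hc⟩ := hn
    simp only [hm]
    omega
  refine ⟨?_, (csA n).length_simple m⟩
  have hone' : ¬ ∃ x : WA n, 1 = x⁻¹ * (wᵢ * w₀) * (w₀ * x * w₀) := by
    rw [hone]
    simp [hn, hi]
  have hmem : ∃ x : WA n, (csA n).simple m = x⁻¹ * (wᵢ * w₀) * (w₀ * x * w₀) := by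
    rw [hclass, isConj_iff_card_fixed_eq hksq ((simple_mul_longest_sq_iff hw₀ m).2 hmn), hkcard,
      card_fixed_simple_mul_longest hw₀ hmn, if_neg (Nat.not_even_iff_odd.2 hn), if_pos]
    obtain ⟨c, hc⟩ := hi
    exact ⟨c, by simp only [hk]; omega⟩
  have hpos : ∀ v : WA n, (∃ x : WA n, v = x⁻¹ * (wᵢ * w₀) * (w₀ * x * w₀)) →
      1 ≤ (csA n).length v := by
    intro v hv
    by_contra hlt
    obtain rfl : v = 1 := (csA n).length_eq_zero_iff.1 (by omega)
    exact hone' hv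
  ext v
  simp only [Set.mem_ofPred_eq, Set.mem_singleton_iff]
  constructor
  · rintro ⟨hv, hmin⟩
    have hle := hmin _ hmem
    rw [(csA n).length_simple] at hle
    obtain ⟨j, rfl⟩ := (csA n).length_eq_one_iff.1 (le_antisymm hle (hpos v hv))
    obtain ⟨c, hc⟩ := isConj_iff.1 ((hclass _).1 hv)
    have hj := (simple_mul_longest_sq_iff hw₀ j).1 (by
      rw [← hc, conj_pow, hksq, mul_one, mul_inv_cancel])
    congr 1
    ext
    omega
  · rintro rfl
    refine ⟨hmem, fun v' hv' => ?_⟩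
    rw [(csA n).length_simple]
    exact hpos v' hv'
end
end
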